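/- arXiv:1909.03667 — 3 statements merged into one kernel-verified Lean document; each statement's English description precedes it below -/
import Mathlib

section
/- Let 0 < M ≤ 8π and β ≥ 1 − M/(8π). Then the attractive free energy F⁻_β is bounded from below on the set of admissible functions f on ℝ² with ∫_{ℝ²} f dx = M: there is a constant C ∈ ℝ such that F⁻_β[f] ≥ C for all such f. -/
open MeasureTheory Real Filter

noncomputable section

/-- The Euclidean plane ℝ². -/
abbrev E2 := EuclideanSpace ℝ (Fin 2)

/-- The probability density μ(x) = 1/(π (1+|x|²)²) on ℝ². -/
def mu2 (x : E2) : ℝ := 1 / (π * (1 + ‖x‖ ^ 2) ^ 2)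

/-- The external potential V(x) = −log μ(x) = 2 log(1+|x|²) + log π. -/
def Vpot (x : E2) : ℝ := 2 * Real.log (1 + ‖x‖ ^ 2) + Real.log π

/-- A function f on ℝ² is admissible if it is measurable, nonnegative a.e., integrable,
and ∫ f |log f|, ∫ V f and ∬ f(x) f(y) |log|x−y|| are all finite. -/
def Admissible (f : E2 → ℝ) : Prop :=
  Measurable f ∧ (∀ᵐ x : E2, 0 ≤ f x) ∧ Integrable f ∧
  Integrable (fun x => f x * |Real.log (f x)|) ∧
  Integrable (fun x => Vpot x * f x) ∧
  Integrable (fun p : E2 × E2 => f p.1 * f p.2 * |Real.log ‖p.1 - p.2‖|)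

/-- The repulsive free energy F⁺_β. -/
def Fplus (β : ℝ) (f : E2 → ℝ) : ℝ :=
  (∫ x, f x * Real.log (f x)) + β * (∫ x, Vpot x * f x)
    - (1 / (4 * π)) * ∫ p : E2 × E2, f p.1 * f p.2 * Real.log ‖p.1 - p.2‖

/-- The attractive free energy F⁻_β. -/
def Fminus (β : ℝ) (f : E2 → ℝ) : ℝ :=
  (∫ x, f x * Real.log (f x)) + β * (∫ x, Vpot x * f x)
    + (1 / (4 * π)) * ∫ p : E2 × E2, f p.1 * f p.2 * Real.log ‖p.1 - p.2‖

/-- A probability density on the plane has a scale `R` at which no ball of radius `R` carries more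
than three quarters of the mass, while some ball of radius `2 * R` does carry that much. -/
lemma exists_concentration_scale {g : E2 → ℝ} (hg0 : ∀ x, 0 ≤ g x) (hg : Integrable g)
    (hg1 : ∫ x, g x = 1) :
    ∃ R : ℝ, 0 < R ∧ (∀ x, ∫ y in Metric.ball x R, g y ≤ 3 / 4) ∧
      ∃ z, 3 / 4 ≤ ∫ y in Metric.ball z (2 * R), g y := by
  have hsmall : ∃ k : ℤ, ∀ x, ∫ y in Metric.ball x ((2 : ℝ) ^ k), g y ≤ 3 / 4 := by
    by_contra! hcon
    choose c hc using fun n : ℕ => hcon (-(n : ℤ))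
    have hvol : Tendsto ((volume : Measure E2) ∘
        fun n : ℕ => Metric.ball (c n) ((2 : ℝ) ^ (-(n : ℤ)))) atTop (nhds 0) := by
      have heq : ((volume : Measure E2) ∘ fun n : ℕ => Metric.ball (c n) ((2 : ℝ) ^ (-(n : ℤ))))
          = fun n : ℕ => ENNReal.ofReal ((((1 / 2 : ℝ)) ^ n) ^ 2)
            * volume (Metric.ball (0 : E2) 1) := by
        funext n
        rw [Function.comp_apply, Measure.addHaar_ball _ _ (by positivity)]
        simp
      rw [heq]
      have h1 : Tendsto (fun n : ℕ => (((1 / 2 : ℝ)) ^ n) ^ 2) atTop (nhds 0) := by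
        simpa using
          (tendsto_pow_atTop_nhds_zero_of_lt_one (r := (1 / 2 : ℝ)) (by norm_num)
            (by norm_num)).pow 2
      have h2 := ENNReal.tendsto_ofReal h1
      have h3 := ENNReal.Tendsto.mul_const h2
        (Or.inr (measure_ball_lt_top (μ := volume) (x := (0 : E2)) (r := 1)).ne)
      simpa using h3
    have hlim := hg.tendsto_setIntegral_nhds_zero hvol
    obtain ⟨n, hn⟩ := (hlim.eventually (gt_mem_nhds (show (0 : ℝ) < 3 / 4 by norm_num))).exists
    exact absurd hn (not_lt.mpr (hc n).le)
  have hlarge : ∃ n : ℕ, 3 / 4 < ∫ y in Metric.ball (0 : E2) ((2 : ℝ) ^ n), g y := by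
    have hun : (⋃ n : ℕ, Metric.ball (0 : E2) ((2 : ℝ) ^ n)) = Set.univ := by
      refine Set.eq_univ_of_forall fun x => Set.mem_iUnion.mpr ?_
      obtain ⟨n, hn⟩ := pow_unbounded_of_one_lt ‖x‖ (one_lt_two (α := ℝ))
      exact ⟨n, by simpa using hn⟩
    have hlim := tendsto_setIntegral_of_monotone (μ := (volume : Measure E2)) (f := g)
      (s := fun n : ℕ => Metric.ball (0 : E2) ((2 : ℝ) ^ n)) (fun n => measurableSet_ball)
      (fun m n hmn => Metric.ball_subset_ball (pow_le_pow_right₀ (by norm_num) hmn))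
      (by rw [hun]; exact hg.integrableOn)
    rw [hun, setIntegral_univ, hg1] at hlim
    exact (hlim.eventually (lt_mem_nhds (show (3 / 4 : ℝ) < 1 by norm_num))).exists
  obtain ⟨n, hn⟩ := hlarge
  obtain ⟨k, hk, hmax⟩ := Int.exists_greatest_of_bdd
    (P := fun k : ℤ => ∀ x, ∫ y in Metric.ball x ((2 : ℝ) ^ k), g y ≤ 3 / 4)
    ⟨n, fun k hk => by
      by_contra! hlt
      refine absurd (hk 0) (not_le.mpr (hn.trans_le ?_))
      refine setIntegral_mono_set hg.integrableOn (Eventually.of_forall hg0) ?_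
      refine (Metric.ball_subset_ball ?_).eventuallyLE
      rw [← zpow_natCast]
      exact zpow_le_zpow_right₀ (by norm_num) hlt.le⟩ hsmall
  refine ⟨(2 : ℝ) ^ k, by positivity, hk, ?_⟩
  have hnot : ¬ ∀ x, ∫ y in Metric.ball x ((2 : ℝ) ^ (k + 1)), g y ≤ 3 / 4 := fun h => by
    have := hmax _ h
    omega
  push Not at hnot
  obtain ⟨z, hz⟩ := hnot
  refine ⟨z, ?_⟩
  rw [zpow_add_one₀ (by norm_num), mul_comm] at hz
  exact hz.le

/-- A form of Jensen's inequality for a density `w` of total mass at most `3 / 4`. -/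
lemma two_mul_integral_le_log {α : Type*} [MeasurableSpace α] {ν : Measure α} {w K : α → ℝ}
    (hw0 : ∀ y, 0 ≤ w y) (hw : Integrable w ν) (hw1 : ∫ y, w y ∂ν ≤ 3 / 4)
    (hK : Integrable (fun y => w y * K y) ν)
    (hE : Integrable (fun y => w y * exp (3 / 2 * K y)) ν) :
    2 * ∫ y, w y * K y ∂ν ≤ log (1 + 4 / 3 * ∫ y, w y * exp (3 / 2 * K y) ∂ν) := by
  set W := ∫ y, w y * K y ∂ν
  set m := ∫ y, w y ∂ν
  have hE0 : 0 ≤ ∫ y, w y * exp (3 / 2 * K y) ∂ν :=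
    integral_nonneg fun y => mul_nonneg (hw0 y) (exp_pos _).le
  have htan : exp (2 * W) * ((1 - 2 * W) * m + 3 / 2 * W)
      ≤ ∫ y, w y * exp (3 / 2 * K y) ∂ν := by
    have heq : exp (2 * W) * ((1 - 2 * W) * m + 3 / 2 * W)
        = ∫ y, exp (2 * W) * ((1 - 2 * W) * w y + 3 / 2 * (w y * K y)) ∂ν := by
      rw [integral_const_mul, integral_add (hw.const_mul _) (hK.const_mul _),
        integral_const_mul, integral_const_mul]
    rw [heq]
    refine integral_mono (((hw.const_mul _).add (hK.const_mul _)).const_mul _) hE fun y => ?_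
    have h1 := add_one_le_exp (3 / 2 * K y - 2 * W)
    have h2 : exp (3 / 2 * K y) = exp (2 * W) * exp (3 / 2 * K y - 2 * W) := by
      rw [← exp_add]; ring_nf
    simp only [h2]
    calc exp (2 * W) * ((1 - 2 * W) * w y + 3 / 2 * (w y * K y))
        = w y * (exp (2 * W) * (3 / 2 * K y - 2 * W + 1)) := by ring
      _ ≤ _ := by gcongr; exact hw0 y
  rw [le_log_iff_exp_le (by positivity)]
  have hm0 : 0 ≤ m := integral_nonneg hw0
  have h3 : exp (2 * W) * (1 - 2 * W) ≤ 1 := by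
    have := one_sub_le_exp_neg (2 * W)
    calc exp (2 * W) * (1 - 2 * W) ≤ exp (2 * W) * exp (-(2 * W)) := by gcongr
      _ = 1 := by rw [← exp_add]; simp
  nlinarith [mul_le_mul_of_nonneg_left h3 (show 0 ≤ 1 - 4 / 3 * m by linarith)]

/-- The unit-scale majorant of the exponential of the truncated logarithmic kernel. -/
def powKernel (v : E2) : ℝ := if ‖v‖ < 1 then exp (-(3 / 2) * log ‖v‖) else 0

/-- The logarithmic attraction below distance `R`. -/
def nearLog (R : ℝ) (v : E2) : ℝ := if ‖v‖ < R then log R - log ‖v‖ else 0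

/-- The logarithmic repulsion beyond distance `R`. -/
def farLog (R : ℝ) (v : E2) : ℝ := if ‖v‖ < R then 0 else log ‖v‖ - log R

lemma powKernel_nonneg (v : E2) : 0 ≤ powKernel v := by
  unfold powKernel; split_ifs <;> positivity

lemma integrable_powKernel : Integrable powKernel := by
  have heq : powKernel = (Metric.ball (0 : E2) 1).indicator
      (fun v => exp (-(3 / 2) * log ‖v‖)) := by
    funext v
    simp [powKernel, Set.indicator]
  rw [heq, integrable_indicator_iff measurableSet_ball,
    integrableOn_fun_norm_addHaar volume (f := fun r => exp (-(3 / 2) * log r))]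
  have hint : IntegrableOn (fun y : ℝ => y ^ (-(1 / 2) : ℝ)) (Set.Ioo 0 1) :=
    (intervalIntegral.integrableOn_Ioo_rpow_iff (by norm_num)).mpr (by norm_num)
  refine hint.congr_fun (fun y hy => ?_) measurableSet_Ioo
  have hy0 : 0 < y := hy.1
  simp only [finrank_euclideanSpace, Fintype.card_fin, smul_eq_mul]
  rw [rpow_def_of_pos hy0]
  rw [show y ^ (2 - 1) = exp (log y) by simp [exp_log hy0]]
  rw [← exp_add]
  ring_nf

lemma farLog_sub_nearLog (R : ℝ) (v : E2) : farLog R v - nearLog R v = log ‖v‖ - log R := by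
  unfold farLog nearLog; split_ifs <;> ring

lemma farLog_nonneg {R : ℝ} (hR : 0 < R) (v : E2) : 0 ≤ farLog R v := by
  unfold farLog; split_ifs with h
  · exact le_rfl
  · exact sub_nonneg.mpr (log_le_log hR (not_lt.mp h))

lemma abs_nearLog_le (R : ℝ) (v : E2) : |nearLog R v| ≤ |log ‖v‖| + |log R| := by
  unfold nearLog; split_ifs
  · linarith [abs_sub (log R) (log ‖v‖)]
  · simp; positivity

lemma measurable_nearLog (R : ℝ) : Measurable (nearLog R) := by
  unfold nearLog
  exact Measurable.ite (measurableSet_lt (by fun_prop) (by fun_prop)) (by fun_prop) (by fun_prop)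

/-- Far interactions with points of `ball z (2 * R)` control the logarithmic distance to `z`. -/
lemma log_one_add_le_farLog {R : ℝ} (hR : 0 < R) {x y z : E2} (hy : y ∈ Metric.ball z (2 * R)) :
    log (1 + R⁻¹ * ‖x - z‖) - log 4 ≤ farLog R (x - y) := by
  have hyz : ‖y - z‖ < 2 * R := by simpa [dist_eq_norm] using hy
  have htri : ‖x - z‖ ≤ ‖x - y‖ + ‖y - z‖ := norm_sub_le_norm_sub_add_norm_sub x y z
  have hpos : 0 < 1 + R⁻¹ * ‖x - z‖ := by positivity
  have hRR : R⁻¹ * R = 1 := inv_mul_cancel₀ hR.ne'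
  have hRi : 0 < R⁻¹ := by positivity
  unfold farLog; split_ifs with h
  · refine sub_nonpos.mpr (log_le_log hpos ?_)
    have : R⁻¹ * ‖x - z‖ ≤ R⁻¹ * (3 * R) := by gcongr; linarith
    linarith
  · push Not at h
    have hxy : 0 < ‖x - y‖ := hR.trans_le h
    rw [← log_div hpos.ne' (by norm_num), ← log_div hxy.ne' hR.ne']
    refine log_le_log (by positivity) ?_
    rw [div_eq_inv_mul ‖x - y‖ R]
    have h1 : R⁻¹ * ‖x - z‖ ≤ R⁻¹ * (‖x - y‖ + 2 * R) := by gcongr; linarith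
    have h2 : R⁻¹ * R ≤ R⁻¹ * ‖x - y‖ := by gcongr
    linarith

/-- Pointwise comparison of the entropy density of `g` with a competitor built from the
truncated logarithmic potential of `g`. -/
lemma entropy_density_lower_bound {R a u s q : ℝ} (hR : 0 < R) (ha : 0 ≤ a) (hs : 0 ≤ s)
    (hu : 0 < u) (hq : 2 * q ≤ log (1 + 4 / 3 * s)) :
    u * (-2 * log R - 3 * log (1 + a) + 2 * q) + u
      - ((R ^ 2)⁻¹ * (1 + a) ^ (-3 : ℝ) + 4 / 3 * ((R ^ 2)⁻¹ * s)) ≤ u * log u := by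
  set h := (R ^ 2)⁻¹ * (1 + a) ^ (-3 : ℝ) * (1 + 4 / 3 * s) with hh
  have ha1 : 0 < 1 + a := by positivity
  have hp : 0 < (1 + a) ^ (-3 : ℝ) := rpow_pos_of_pos ha1 _
  have hp1 : (1 + a) ^ (-3 : ℝ) ≤ 1 :=
    rpow_le_one_of_one_le_of_nonpos (by linarith) (by norm_num)
  have hh0 : 0 < h := by positivity
  have hlog : -2 * log R - 3 * log (1 + a) + 2 * q ≤ log h := by
    rw [hh, log_mul (by positivity) (by positivity), log_mul (by positivity) (by positivity),
      log_rpow ha1, log_inv, log_pow]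
    push_cast
    linarith
  have hle : h ≤ (R ^ 2)⁻¹ * (1 + a) ^ (-3 : ℝ) + 4 / 3 * ((R ^ 2)⁻¹ * s) := by
    have : (R ^ 2)⁻¹ * s * (1 + a) ^ (-3 : ℝ) ≤ (R ^ 2)⁻¹ * s * 1 := by gcongr
    rw [hh]; linarith
  have hgibbs : u * log h + u - h ≤ u * log u := by
    have h1 := log_le_sub_one_of_pos (div_pos hh0 hu)
    rw [log_div hh0.ne' hu.ne'] at h1
    have h2 := mul_le_mul_of_nonneg_left h1 hu.le
    have h3 : u * (h / u - 1) = h - u := by field_simp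
    linarith
  have := mul_le_mul_of_nonneg_left hlog hu.le
  linarith

/-- The truncated logarithmic potential is dominated by the logarithm of a convolution. -/
lemma two_mul_nearLog_potential_le {g : E2 → ℝ} {R : ℝ} {x : E2} (hR : 0 < R)
    (hg0 : ∀ y, 0 ≤ g y) (hg : Integrable g) (hmass : ∫ y in Metric.ball x R, g y ≤ 3 / 4)
    (hnear : Integrable fun y => g y * nearLog R (x - y))
    (hpow : Integrable fun y => g y * powKernel (R⁻¹ • (x - y))) :
    2 * ∫ y, g y * nearLog R (x - y)
      ≤ log (1 + 4 / 3 * ∫ y, g y * powKernel (R⁻¹ • (x - y))) := by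
  set w : E2 → ℝ := (Metric.ball x R).indicator g with hw
  set K : E2 → ℝ := fun y => log R - log ‖x - y‖ with hK
  have hmem (y : E2) : y ∈ Metric.ball x R ↔ ‖x - y‖ < R := by
    rw [Metric.mem_ball, dist_comm, dist_eq_norm]
  have h1 : (fun y => w y * K y) = fun y => g y * nearLog R (x - y) := by
    funext y
    by_cases hy : ‖x - y‖ < R
    · simp [hw, hK, nearLog, hmem, hy]
    · simp [hw, nearLog, hmem, hy]
  have h2 : (fun y => w y * exp (3 / 2 * K y)) =ᵐ[volume]
      fun y => g y * powKernel (R⁻¹ • (x - y)) := by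
    filter_upwards [Measure.ae_ne volume x] with y hne
    have hpos : 0 < ‖x - y‖ := norm_pos_iff.mpr (sub_ne_zero.mpr hne.symm)
    have hnorm : ‖R⁻¹ • (x - y)‖ = R⁻¹ * ‖x - y‖ := by
      rw [norm_smul, norm_inv, norm_of_nonneg hR.le]
    have hiff : R⁻¹ * ‖x - y‖ < 1 ↔ ‖x - y‖ < R := by
      rw [inv_mul_lt_iff₀ hR, mul_one]
    by_cases hy : ‖x - y‖ < R
    · simp only [hw, hK, powKernel, Set.indicator, hmem, hy, hnorm, hiff, if_true]
      rw [log_mul (by positivity) hpos.ne', log_inv]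
      ring_nf
    · simp only [hw, powKernel, Set.indicator, hmem, hy, hnorm, hiff, if_false]
      ring
  have key := two_mul_integral_le_log (ν := volume) (w := w) (K := K)
    (fun y => Set.indicator_nonneg (fun y _ => hg0 y) y)
    (hg.indicator measurableSet_ball)
    (by rwa [hw, integral_indicator measurableSet_ball])
    (by rw [h1]; exact hnear) ((integrable_congr h2).mpr hpow)
  rwa [h1, integral_congr_ae h2] at key

/-- Entropy controls the short-range logarithmic interaction, at the price of a logarithmic
moment. -/
lemma entropy_lower_bound {g : E2 → ℝ} {R : ℝ} (hR : 0 < R) (z : E2)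
    (hg0 : ∀ x, 0 ≤ g x) (hg : Integrable g) (hg1 : ∫ x, g x = 1)
    (hmass : ∀ x, ∫ y in Metric.ball x R, g y ≤ 3 / 4)
    (hent : Integrable fun x => g x * log (g x))
    (hmom : Integrable fun x => g x * log (1 + R⁻¹ * ‖x - z‖))
    (hnear : Integrable fun p : E2 × E2 => g p.1 * (g p.2 * nearLog R (p.1 - p.2))) :
    -2 * log R - 3 * (∫ x, g x * log (1 + R⁻¹ * ‖x - z‖))
      + 2 * (∫ p : E2 × E2, g p.1 * (g p.2 * nearLog R (p.1 - p.2))) + 1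
      - ((∫ x : E2, (1 + ‖x‖) ^ (-3 : ℝ)) + 4 / 3 * ∫ v, powKernel v)
      ≤ ∫ x, g x * log (g x) := by
  have hR2 : (R ^ 2)⁻¹ * R ^ 2 = 1 := inv_mul_cancel₀ (by positivity)
  have hdim : Module.finrank ℝ E2 = 2 := by simp
  -- the weight
  have hweight : Integrable fun x : E2 => (1 + ‖x‖) ^ (-3 : ℝ) :=
    integrable_one_add_norm (by rw [hdim]; norm_num)
  have hnorm (x : E2) : ‖R⁻¹ • (x - z)‖ = R⁻¹ * ‖x - z‖ := by
    rw [norm_smul, norm_inv, norm_of_nonneg hR.le]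
  have hweight' : Integrable fun x : E2 => (1 + R⁻¹ * ‖x - z‖) ^ (-3 : ℝ) := by
    have := ((integrable_comp_smul_iff volume _ (inv_ne_zero hR.ne')).mpr hweight).comp_sub_right z
    simpa only [hnorm] using this
  have hweight_int : ∫ x : E2, (1 + R⁻¹ * ‖x - z‖) ^ (-3 : ℝ)
      = R ^ 2 * ∫ x : E2, (1 + ‖x‖) ^ (-3 : ℝ) := by
    have h1 := Measure.integral_comp_inv_smul_of_nonneg (volume : Measure E2)
      (fun x : E2 => (1 + ‖x‖) ^ (-3 : ℝ)) hR.le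
    rw [hdim, smul_eq_mul] at h1
    rw [← h1, ← integral_sub_right_eq_self (fun x : E2 => (1 + ‖R⁻¹ • x‖) ^ (-3 : ℝ)) z]
    simp only [hnorm]
  -- the convolution
  have hker : Integrable fun v : E2 => powKernel (R⁻¹ • v) :=
    (integrable_comp_smul_iff volume _ (inv_ne_zero hR.ne')).mpr integrable_powKernel
  have hconv : Integrable (fun p : E2 × E2 => g p.2 * powKernel (R⁻¹ • (p.1 - p.2)))
      (volume.prod volume) := by
    simpa using hg.convolution_integrand (ContinuousLinearMap.mul ℝ ℝ) hker
  have hG : Integrable fun x => ∫ y, g y * powKernel (R⁻¹ • (x - y)) := hconv.integral_prod_left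
  have hG_int : ∫ x, ∫ y, g y * powKernel (R⁻¹ • (x - y)) = R ^ 2 * ∫ v, powKernel v := by
    have h1 := integral_convolution (μ := volume) (ν := volume) (ContinuousLinearMap.mul ℝ ℝ)
      hg hker
    rw [Measure.integral_comp_inv_smul_of_nonneg (volume : Measure E2) powKernel hR.le, hg1,
      hdim] at h1
    simpa [convolution_def] using h1
  have hN : Integrable fun x => g x * ∫ y, g y * nearLog R (x - y) := by
    simpa only [integral_const_mul] using hnear.integral_prod_left
  have hN_int : ∫ p : E2 × E2, g p.1 * (g p.2 * nearLog R (p.1 - p.2))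
      = ∫ x, g x * ∫ y, g y * nearLog R (x - y) := by
    rw [Measure.volume_eq_prod, integral_prod _ hnear]
    simp only [integral_const_mul]
  set G : E2 → ℝ := fun x => ∫ y, g y * powKernel (R⁻¹ • (x - y)) with hGdef
  set N : E2 → ℝ := fun x => ∫ y, g y * nearLog R (x - y) with hNdef
  have hpt : ∀ᵐ x : E2, -2 * log R * g x - 3 * (g x * log (1 + R⁻¹ * ‖x - z‖))
      + 2 * (g x * N x) + g x
      - ((R ^ 2)⁻¹ * (1 + R⁻¹ * ‖x - z‖) ^ (-3 : ℝ) + 4 / 3 * ((R ^ 2)⁻¹ * G x))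
      ≤ g x * log (g x) := by
    filter_upwards [hnear.prod_right_ae, hconv.prod_right_ae] with x hx1 hx2
    have hG0 : 0 ≤ G x := integral_nonneg fun y => mul_nonneg (hg0 y) (powKernel_nonneg _)
    rcases (hg0 x).eq_or_lt with h0 | hpos
    · rw [← h0]
      have : 0 ≤ (1 + R⁻¹ * ‖x - z‖) ^ (-3 : ℝ) := rpow_nonneg (by positivity) _
      have : 0 ≤ (R ^ 2)⁻¹ * (1 + R⁻¹ * ‖x - z‖) ^ (-3 : ℝ) + 4 / 3 * ((R ^ 2)⁻¹ * G x) := by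
        positivity
      simp only [mul_zero, zero_mul]
      linarith
    · have hx1' : Integrable fun y => g y * nearLog R (x - y) :=
        (integrable_const_mul_iff hpos.ne'.isUnit _).mp hx1
      have := entropy_density_lower_bound (a := R⁻¹ * ‖x - z‖) hR (by positivity) hG0 hpos
        (two_mul_nearLog_potential_le hR hg0 hg (hmass x) hx1' hx2)
      linarith
  have hI1 := hg.const_mul (-2 * log R)
  have hI2 := hmom.const_mul 3
  have hI3 := hN.const_mul 2
  have hI4 := hweight'.const_mul (R ^ 2)⁻¹
  have hI5 := (hG.const_mul (R ^ 2)⁻¹).const_mul (4 / 3)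
  have hle := integral_mono_ae ((((hI1.sub hI2).add hI3).add hg).sub (hI4.add hI5)) hent hpt
  refine le_trans (le_of_eq ?_) hle
  rw [integral_sub' (((hI1.sub hI2).add hI3).add hg) (hI4.add hI5),
    integral_add' ((hI1.sub hI2).add hI3) hg, integral_add' (hI1.sub hI2) hI3,
    integral_sub' hI1 hI2, integral_add' hI4 hI5]
  simp only [integral_const_mul]
  rw [hweight_int, hG_int, hg1, hN_int]
  linear_combination ((∫ x : E2, (1 + ‖x‖) ^ (-3 : ℝ)) + 4 / 3 * ∫ v, powKernel v) * hR2

/-- The long-range logarithmic interaction controls the logarithmic moment. -/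
lemma farLog_interaction_lower_bound {g : E2 → ℝ} {R : ℝ} (hR : 0 < R) {z : E2}
    (hg0 : ∀ x, 0 ≤ g x) (hg : Integrable g) (hg1 : ∫ x, g x = 1)
    (hmass : 3 / 4 ≤ ∫ y in Metric.ball z (2 * R), g y)
    (hmom : Integrable fun x => g x * log (1 + R⁻¹ * ‖x - z‖))
    (hfar : Integrable fun p : E2 × E2 => g p.1 * (g p.2 * farLog R (p.1 - p.2))) :
    3 / 2 * ((∫ x, g x * log (1 + R⁻¹ * ‖x - z‖)) - log 4)
      ≤ ∫ p : E2 × E2, g p.1 * (g p.2 * farLog R (p.1 - p.2)) := by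
  set B := Metric.ball z (2 * R)
  set ψ : E2 → ℝ := fun x => log (1 + R⁻¹ * ‖x - z‖) - log 4 with hψ
  set b : E2 → ℝ := B.indicator g with hb
  set c : E2 → ℝ := Bᶜ.indicator fun x => max (g x * ψ x) 0 with hc
  have hgψ : Integrable fun x => g x * ψ x := by
    simp only [hψ, mul_sub]
    exact hmom.sub (hg.mul_const (log 4))
  have hbi : Integrable b := hg.indicator measurableSet_ball
  have hci : Integrable c := hgψ.pos_part.indicator measurableSet_ball.compl
  have hb_int : ∫ x, b x = ∫ y in B, g y := integral_indicator measurableSet_ball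
  have hψB {x : E2} (hx : x ∈ B) : ψ x ≤ 0 := by
    have hx' : ‖x - z‖ < 2 * R := by simpa [B, dist_eq_norm] using hx
    have h1 : R⁻¹ * ‖x - z‖ ≤ R⁻¹ * (2 * R) := by gcongr
    have hRR : R⁻¹ * R = 1 := inv_mul_cancel₀ hR.ne'
    exact sub_nonpos.mpr (log_le_log (by positivity) (by linarith))
  have hc_int : (∫ x, g x * log (1 + R⁻¹ * ‖x - z‖)) - log 4 ≤ ∫ x, c x := by
    have heq : (∫ x, g x * log (1 + R⁻¹ * ‖x - z‖)) - log 4 = ∫ x, g x * ψ x := by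
      simp only [hψ, mul_sub]
      rw [integral_sub hmom (hg.mul_const _), integral_mul_const, hg1, one_mul]
    rw [heq]
    refine integral_mono hgψ hci fun x => ?_
    by_cases hx : x ∈ B
    · simpa [hc, hx] using mul_nonpos_of_nonneg_of_nonpos (hg0 x) (hψB hx)
    · simp [hc, hx]
  have hc0 : 0 ≤ ∫ x, c x :=
    integral_nonneg fun x => Set.indicator_nonneg (fun _ _ => le_max_right _ _) x
  have hcross {x y : E2} (hy : y ∈ B) :
      max (g x * ψ x) 0 * g y ≤ g x * (g y * farLog R (x - y)) := by
    have hmax : max (g x * ψ x) 0 ≤ g x * farLog R (x - y) :=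
      max_le (mul_le_mul_of_nonneg_left (log_one_add_le_farLog hR hy) (hg0 x))
        (mul_nonneg (hg0 x) (farLog_nonneg hR _))
    have := mul_le_mul_of_nonneg_right hmax (hg0 y)
    linarith
  have hsymm (x y : E2) : farLog R (x - y) = farLog R (y - x) := by
    simp only [farLog, norm_sub_rev]
  have hpt (p : E2 × E2) :
      b p.1 * c p.2 + c p.1 * b p.2 ≤ g p.1 * (g p.2 * farLog R (p.1 - p.2)) := by
    obtain ⟨x, y⟩ := p
    have h0 : 0 ≤ g x * (g y * farLog R (x - y)) :=
      mul_nonneg (hg0 x) (mul_nonneg (hg0 y) (farLog_nonneg hR _))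
    by_cases hx : x ∈ B <;> by_cases hy : y ∈ B
    · simpa [hb, hc, hx, hy] using h0
    · have := hcross (x := y) hx
      rw [hsymm y x] at this
      simp only [hb, hc, Set.indicator, Set.mem_compl_iff, hx, hy, not_true, not_false_iff,
        if_true, if_false]
      linarith
    · have := hcross (x := x) hy
      simp only [hb, hc, Set.indicator, Set.mem_compl_iff, hx, hy, not_true, not_false_iff,
        if_true, if_false]
      linarith
    · simpa [hb, hc, hx, hy] using h0
  have hle := integral_mono ((hbi.mul_prod hci).add (hci.mul_prod hbi)) hfar hpt
  rw [integral_add' (hbi.mul_prod hci) (hci.mul_prod hbi), integral_prod_mul,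
    integral_prod_mul, hb_int] at hle
  refine le_trans ?_ hle
  nlinarith

/-- A logarithmic Hardy–Littlewood–Sobolev inequality on the plane, without the sharp additive
constant. -/
theorem exists_logHLS_lower_bound :
    ∃ C : ℝ, ∀ g : E2 → ℝ, Measurable g → (∀ x, 0 ≤ g x) → Integrable g → ∫ x, g x = 1 →
      Integrable (fun x => g x * log (g x)) →
      Integrable (fun x => g x * log (1 + ‖x‖ ^ 2)) →
      Integrable (fun p : E2 × E2 => g p.1 * g p.2 * log ‖p.1 - p.2‖) →
      C ≤ (∫ x, g x * log (g x)) + 2 * ∫ p : E2 × E2, g p.1 * g p.2 * log ‖p.1 - p.2‖ := by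
  refine ⟨1 - ((∫ x : E2, (1 + ‖x‖) ^ (-3 : ℝ)) + 4 / 3 * ∫ v, powKernel v) - 3 * log 4,
    fun g hgm hg0 hg hg1 hent hmom hlog => ?_⟩
  obtain ⟨R, hR, hball, z, hz⟩ := exists_concentration_scale hg0 hg hg1
  have hmom' : Integrable fun x => g x * log (1 + R⁻¹ * ‖x - z‖) := by
    refine (hmom.add (hg.mul_const (log 2 + log (1 + ‖z‖) + log (1 + R⁻¹)))).mono'
      (by fun_prop) (Eventually.of_forall fun x => ?_)
    have hRi : 0 < R⁻¹ := by positivity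
    have h1 : 1 ≤ 1 + R⁻¹ * ‖x - z‖ := le_add_of_nonneg_right (by positivity)
    rw [norm_of_nonneg (mul_nonneg (hg0 x) (log_nonneg h1))]
    simp only [Pi.add_apply]
    rw [← mul_add]
    refine mul_le_mul_of_nonneg_left ?_ (hg0 x)
    rw [← log_mul (by positivity) (by positivity), ← log_mul (by positivity) (by positivity),
      ← log_mul (by positivity) (by positivity)]
    refine log_le_log (by positivity) ?_
    have h2 : ‖x - z‖ ≤ ‖x‖ + ‖z‖ := norm_sub_le x z
    have h3 : 1 + ‖x‖ ≤ (1 + ‖x‖ ^ 2) * 2 := by nlinarith [sq_nonneg (‖x‖ - 1 / 2)]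
    calc 1 + R⁻¹ * ‖x - z‖ ≤ 1 + R⁻¹ * (‖x‖ + ‖z‖) := by gcongr
      _ ≤ (1 + ‖x‖) * (1 + ‖z‖) * (1 + R⁻¹) := by
        have : 0 ≤ ‖x‖ * ‖z‖ := by positivity
        have : 0 ≤ ‖x‖ * ‖z‖ * R⁻¹ := by positivity
        nlinarith [norm_nonneg x, norm_nonneg z]
      _ ≤ (1 + ‖x‖ ^ 2) * 2 * (1 + ‖z‖) * (1 + R⁻¹) := by gcongr
      _ = _ := by ring
  have hgg : Integrable fun p : E2 × E2 => g p.1 * g p.2 := hg.mul_prod hg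
  have hgg_int : ∫ p : E2 × E2, g p.1 * g p.2 = 1 := by
    rw [Measure.volume_eq_prod, integral_prod_mul, hg1, one_mul]
  have hnear : Integrable fun p : E2 × E2 => g p.1 * (g p.2 * nearLog R (p.1 - p.2)) := by
    have hm := measurable_nearLog R
    refine (hlog.norm.add (hgg.mul_const |log R|)).mono' (by fun_prop)
      (Eventually.of_forall fun p => ?_)
    have h1 : 0 ≤ g p.1 * g p.2 := mul_nonneg (hg0 _) (hg0 _)
    have h2 := mul_le_mul_of_nonneg_left (abs_nearLog_le R (p.1 - p.2)) h1
    simp only [Pi.add_apply]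
    rw [← mul_assoc, norm_mul, norm_mul _ (log _), norm_of_nonneg h1, norm_eq_abs, norm_eq_abs]
    linarith
  have hsplit (p : E2 × E2) : g p.1 * (g p.2 * farLog R (p.1 - p.2))
      = g p.1 * g p.2 * log ‖p.1 - p.2‖ - log R * (g p.1 * g p.2)
        + g p.1 * (g p.2 * nearLog R (p.1 - p.2)) := by
    linear_combination g p.1 * g p.2 * farLog_sub_nearLog R (p.1 - p.2)
  have hfar_int : ∫ p : E2 × E2, g p.1 * (g p.2 * farLog R (p.1 - p.2))
      = (∫ p : E2 × E2, g p.1 * g p.2 * log ‖p.1 - p.2‖) - log R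
        + ∫ p : E2 × E2, g p.1 * (g p.2 * nearLog R (p.1 - p.2)) := by
    simp only [hsplit]
    rw [integral_add (by exact hlog.sub (hgg.const_mul _)) hnear,
      integral_sub hlog (hgg.const_mul _), integral_const_mul, hgg_int, mul_one]
  have hfar : Integrable fun p : E2 × E2 => g p.1 * (g p.2 * farLog R (p.1 - p.2)) := by
    simp only [hsplit]
    exact (hlog.sub (hgg.const_mul _)).add hnear
  have h1 := entropy_lower_bound hR z hg0 hg hg1 hball hent hmom' hnear
  have h2 := farLog_interaction_lower_bound hR hg0 hg hg1 hz hmom' hfar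
  linarith

/-- The Gibbs inequality for the confining potential. -/
lemma entropy_add_potential_lower_bound {g : E2 → ℝ} (hg0 : ∀ x, 0 ≤ g x) (hg : Integrable g)
    (hg1 : ∫ x, g x = 1) (hent : Integrable fun x => g x * log (g x))
    (hV : Integrable fun x => Vpot x * g x) :
    1 - ∫ x, mu2 x ≤ (∫ x, g x * log (g x)) + ∫ x, Vpot x * g x := by
  have hmu : Integrable mu2 := by
    have h := (integrable_rpow_neg_one_add_norm_sq (E := E2) (μ := volume) (r := 4)
      (by simp; norm_num)).const_mul π⁻¹
    refine h.congr (Eventually.of_forall fun x => ?_)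
    simp only [mu2]
    rw [show (-4 / 2 : ℝ) = -(2 : ℕ) by norm_num, rpow_neg (by positivity), rpow_natCast]
    field_simp
  have hpt (x : E2) : g x - mu2 x ≤ g x * log (g x) + Vpot x * g x := by
    have hmu0 : 0 < mu2 x := by unfold mu2; positivity
    have hVlog : Vpot x = -log (mu2 x) := by
      unfold Vpot mu2
      rw [one_div, log_inv, log_mul (by positivity) (by positivity), log_pow]
      push_cast; ring
    rcases (hg0 x).eq_or_lt with h0 | hpos
    · rw [← h0]; simpa using hmu0.le
    · have h1 := log_le_sub_one_of_pos (div_pos hmu0 hpos)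
      rw [log_div hmu0.ne' hpos.ne'] at h1
      have h2 := mul_le_mul_of_nonneg_left h1 hpos.le
      have h3 : g x * (mu2 x / g x - 1) = mu2 x - g x := by field_simp
      rw [hVlog]
      linarith
  have := integral_mono (hg.sub hmu) (hent.add hV) hpt
  rwa [integral_sub' hg hmu, integral_add' hent hV, hg1] at this

lemma Vpot_nonneg (x : E2) : 0 ≤ Vpot x := by
  have h1 : 0 ≤ log (1 + ‖x‖ ^ 2) := log_nonneg (le_add_of_nonneg_right (by positivity))
  have h2 : 0 ≤ log π := log_nonneg (by linarith [pi_gt_three])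
  unfold Vpot
  positivity

/-- The attractive free energy F⁻_β is bounded from below when M ≤ 8π and β ≥ 1 − M/(8π). -/
theorem Fminus_bounded_below (M β : ℝ) (hM : 0 < M) (hM8 : M ≤ 8 * π)
    (hβ : β ≥ 1 - M / (8 * π)) :
    ∃ C : ℝ, ∀ f : E2 → ℝ, Admissible f → (∫ x, f x) = M → C ≤ Fminus β f := by
  obtain ⟨C, hC⟩ := exists_logHLS_lower_bound
  set t := M / (8 * π) with ht
  have ht0 : 0 ≤ t := by positivity
  have ht1 : t ≤ 1 := (div_le_one (by positivity)).mpr hM8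
  refine ⟨M * (log M + t * C + (1 - t) * (1 - ∫ x, mu2 x)), fun f hf hfM => ?_⟩
  obtain ⟨hfm, hf0, hfi, hfent, hfV, hflog⟩ := hf
  set g : E2 → ℝ := fun x => M⁻¹ * |f x| with hg
  have hfg : ∀ᵐ x, f x = M * g x := by
    filter_upwards [hf0] with x hx
    simp only [hg, abs_of_nonneg hx]
    field_simp
  have hgm : Measurable g := by fun_prop
  have hg0 (x : E2) : 0 ≤ g x := by positivity
  have hgi : Integrable g := hfi.abs.const_mul _
  have hg1 : ∫ x, g x = 1 := by
    have h1 := integral_congr_ae hfg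
    rw [integral_const_mul, hfM] at h1
    exact mul_left_cancel₀ hM.ne' (by linarith)
  have hlogM : ∀ᵐ x, f x * log (f x) = M * (g x * log (g x)) + M * log M * g x := by
    filter_upwards [hfg] with x hx
    rw [hx]
    rcases (hg0 x).eq_or_lt with h0 | hpos
    · simp [← h0]
    · rw [log_mul hM.ne' hpos.ne']; ring
  have hfent' : Integrable fun x => f x * log (f x) := by
    refine hfent.mono' (by fun_prop) ?_
    filter_upwards [hf0] with x hx
    rw [norm_mul, norm_of_nonneg hx, norm_eq_abs]
  have hent : Integrable fun x => g x * log (g x) := by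
    refine ((hfent'.sub (hgi.const_mul (M * log M))).const_mul M⁻¹).congr ?_
    filter_upwards [hlogM] with x hx
    simp only [Pi.sub_apply, hx]
    field_simp
    ring
  have hVM : ∀ᵐ x, Vpot x * f x = M * (Vpot x * g x) := by
    filter_upwards [hfg] with x hx
    rw [hx]; ring
  have hV : Integrable fun x => Vpot x * g x := by
    refine (hfV.const_mul M⁻¹).congr ?_
    filter_upwards [hVM] with x hx
    rw [hx]
    field_simp
  have hmom : Integrable fun x => g x * log (1 + ‖x‖ ^ 2) := by
    refine ((hV.sub (hgi.const_mul (log π))).const_mul (1 / 2)).congr (Eventually.of_forall ?_)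
    intro x
    simp only [Pi.sub_apply, Vpot]
    ring
  have hprod : ∀ᵐ p : E2 × E2, f p.1 = M * g p.1 ∧ f p.2 = M * g p.2 :=
    (Measure.quasiMeasurePreserving_fst.ae hfg).and (Measure.quasiMeasurePreserving_snd.ae hfg)
  have hlogprod : ∀ᵐ p : E2 × E2, f p.1 * f p.2 * log ‖p.1 - p.2‖
      = M ^ 2 * (g p.1 * g p.2 * log ‖p.1 - p.2‖) := by
    filter_upwards [hprod] with p hp
    rw [hp.1, hp.2]; ring
  have hlog : Integrable fun p : E2 × E2 => g p.1 * g p.2 * log ‖p.1 - p.2‖ := by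
    refine (hflog.const_mul (M ^ 2)⁻¹).mono' (by fun_prop) ?_
    filter_upwards [hprod] with p hp
    have h1 : 0 ≤ g p.1 * g p.2 := mul_nonneg (hg0 _) (hg0 _)
    rw [hp.1, hp.2, norm_mul, norm_of_nonneg h1, norm_eq_abs]
    refine le_of_eq ?_
    field_simp
  have hHLS := hC g hgm hg0 hgi hg1 hent hmom hlog
  have hGibbs := entropy_add_potential_lower_bound hg0 hgi hg1 hent hV
  have hV0 : 0 ≤ ∫ x, Vpot x * g x := integral_nonneg fun x => mul_nonneg (Vpot_nonneg x) (hg0 x)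
  unfold Fminus
  rw [integral_congr_ae hlogM, integral_congr_ae hVM, integral_congr_ae hlogprod,
    integral_add (hent.const_mul _) (hgi.const_mul _)]
  simp only [integral_const_mul]
  rw [hg1]
  set S := ∫ x, g x * log (g x)
  set I := ∫ x, Vpot x * g x
  set D := ∫ p : E2 × E2, g p.1 * g p.2 * log ‖p.1 - p.2‖
  have hcoef : 1 / (4 * π) * (M ^ 2 * D) = M * (t * (2 * D)) := by
    rw [ht]; field_simp; ring
  have hdecomp : M * S + M * log M * 1 + β * (M * I) + 1 / (4 * π) * (M ^ 2 * D)
      = M * (log M + t * (S + 2 * D) + (1 - t) * (S + I) + (β - (1 - t)) * I) := by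
    rw [hcoef]; ring
  rw [hdecomp]
  refine mul_le_mul_of_nonneg_left ?_ hM.le
  have h1 := mul_le_mul_of_nonneg_left hHLS ht0
  have h2 := mul_le_mul_of_nonneg_left hGibbs (sub_nonneg.mpr ht1)
  have h3 : 0 ≤ (β - (1 - t)) * I := mul_nonneg (sub_nonneg.mpr hβ) hV0
  linarith
end
end

section
/- Let α ∈ [0,1), M > 0 and f_⋆ = M μ. For every admissible function f on ℝ² with ∫_{ℝ²} f dx = M, one has ∫_{ℝ²} f log(f/f_⋆) dx ≥ −(2/M)(1−α) ∬_{ℝ²×ℝ²} (f(x)−f_⋆(x)) (f(y)−f_⋆(y)) log|x−y| dx dy. -/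
open MeasureTheory Real Filter

noncomputable section

/-- A quarter of the squared chordal distance between the stereographic images of two points. -/
def chordSq {E : Type*} [NormedAddCommGroup E] (x y : E) : ℝ :=
  ‖x - y‖ ^ 2 / ((1 + ‖x‖ ^ 2) * (1 + ‖y‖ ^ 2))

/-- The spherical density on a normed plane. -/
def sphDensity {E : Type*} [NormedAddCommGroup E] (x : E) : ℝ := 1 / (π * (1 + ‖x‖ ^ 2) ^ 2)

lemma abs_det_complex_fderiv (d : ℂ) :
    |((ContinuousLinearMap.toSpanSingleton ℂ d).restrictScalars ℝ).det| = ‖d‖ ^ 2 := by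
  have : ((ContinuousLinearMap.toSpanSingleton ℂ d).restrictScalars ℝ).det = ‖d‖ ^ 2 := by
    simp [ContinuousLinearMap.det, LinearMap.det_restrictScalars,
      Algebra.norm_complex_apply, Complex.normSq_eq_norm_sq]
  rw [this, abs_of_nonneg (by positivity)]

/-- The rotation of the Riemann sphere that maps `0` to `a`. -/
def sphRot (a z : ℂ) : ℂ := (z + a) / (1 - star a * z)

lemma one_add_normSq_ne (a : ℂ) : (1 + star a * a) ≠ 0 := by
  have h : star a * a = ((‖a‖ ^ 2 : ℝ) : ℂ) := by
    rw [mul_comm]; simpa using Complex.mul_conj' a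
  rw [h]
  norm_cast
  positivity

lemma norm_one_add_star_mul (a : ℂ) : ‖1 + star a * a‖ = 1 + ‖a‖ ^ 2 := by
  have h : star a * a = ((‖a‖ ^ 2 : ℝ) : ℂ) := by
    rw [mul_comm]; simpa using Complex.mul_conj' a
  rw [h]
  norm_cast
  exact Real.norm_of_nonneg (by positivity)

lemma hasDerivAt_sphRot (a z : ℂ) (hz : 1 - star a * z ≠ 0) :
    HasDerivAt (sphRot a) ((1 + star a * a) / (1 - star a * z) ^ 2) z := by
  have h1 : HasDerivAt (fun z : ℂ => z + a) 1 z := (hasDerivAt_id z).add_const a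
  have h2 : HasDerivAt (fun z : ℂ => 1 - star a * z) (-(star a)) z := by
    simpa using ((hasDerivAt_id z).const_mul (star a)).const_sub 1
  refine HasDerivAt.congr_deriv (h1.fun_div h2 hz) ?_
  congr 1
  ring

lemma one_add_norm_sphRot (a z : ℂ) (hz : 1 - star a * z ≠ 0) :
    1 + ‖sphRot a z‖ ^ 2 = (1 + ‖a‖ ^ 2) * (1 + ‖z‖ ^ 2) / ‖1 - star a * z‖ ^ 2 := by
  have h0 : ‖1 - star a * z‖ ^ 2 ≠ 0 := by simpa using hz
  unfold sphRot
  rw [norm_div, div_pow, eq_div_iff h0, add_mul, div_mul_cancel₀ _ h0]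
  simp only [← Complex.normSq_eq_norm_sq, Complex.normSq_apply]
  simp
  ring

lemma chordSq_sphRot (a z : ℂ) (hz : 1 - star a * z ≠ 0) :
    chordSq a (sphRot a z) = ‖z‖ ^ 2 / (1 + ‖z‖ ^ 2) := by
  have h0 : ‖1 - star a * z‖ ^ 2 ≠ 0 := by simpa using hz
  have h1 : a - sphRot a z = -(z * (1 + star a * a) / (1 - star a * z)) := by
    unfold sphRot
    rw [sub_eq_iff_eq_add, neg_add_eq_sub, div_sub_div_same, eq_div_iff hz]
    ring
  unfold chordSq
  rw [one_add_norm_sphRot a z hz, h1, norm_neg, norm_div, norm_mul, norm_one_add_star_mul]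
  have : 1 + ‖a‖ ^ 2 ≠ 0 := by positivity
  have : 1 + ‖z‖ ^ 2 ≠ 0 := by positivity
  field_simp

lemma sphDensity_sphRot (a z : ℂ) (hz : 1 - star a * z ≠ 0) :
    ‖(1 + star a * a) / (1 - star a * z) ^ 2‖ ^ 2 * sphDensity (sphRot a z) = sphDensity z := by
  have h0 : ‖1 - star a * z‖ ≠ 0 := by simpa using hz
  unfold sphDensity
  rw [one_add_norm_sphRot a z hz, norm_div, norm_one_add_star_mul, norm_pow]
  have : 1 + ‖a‖ ^ 2 ≠ 0 := by positivity
  have : 1 + ‖z‖ ^ 2 ≠ 0 := by positivity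
  field_simp

lemma sphRot_image_ae (a : ℂ) :
    (sphRot a '' {z | 1 - star a * z ≠ 0}) =ᵐ[volume] Set.univ := by
  rw [ae_eq_univ]
  refine Set.Subsingleton.measure_zero (fun y hy y' hy' => ?_) _
  have key : ∀ y, y ∈ (sphRot a '' {z | 1 - star a * z ≠ 0})ᶜ → 1 + star a * y = 0 := by
    intro y hy
    by_contra hne
    apply hy
    have h : 1 - star a * ((y - a) / (1 + star a * y)) = (1 + star a * a) / (1 + star a * y) := by
      field_simp; ring
    have h' := one_add_normSq_ne a
    refine ⟨(y - a) / (1 + star a * y), ?_, ?_⟩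
    · simp only [Set.mem_ofPred_eq, h]
      exact div_ne_zero h' hne
    · unfold sphRot
      rw [h, div_add' _ _ _ hne, div_div_div_cancel_right₀ hne, div_eq_iff h']
      ring
  have e1 := key y hy
  have e2 := key y' hy'
  have ha : star a ≠ 0 := by
    intro h; rw [h] at e1; simp at e1
  have : star a * y = star a * y' := by linear_combination e1 - e2
  exact mul_left_cancel₀ ha this

lemma injOn_sphRot (a : ℂ) : Set.InjOn (sphRot a) {z | 1 - star a * z ≠ 0} := by
  intro z hz w hw h
  simp only [Set.mem_ofPred_eq] at hz hw
  unfold sphRot at h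
  rw [div_eq_div_iff hz hw] at h
  have h' : (1 + star a * a) * (z - w) = 0 := by linear_combination h
  rcases mul_eq_zero.mp h' with h' | h'
  · exact absurd h' (one_add_normSq_ne a)
  · exact sub_eq_zero.mp h'

lemma measurableSet_sphRot_dom (a : ℂ) : MeasurableSet {z : ℂ | 1 - star a * z ≠ 0} := by
  apply IsOpen.measurableSet
  exact isOpen_ne_fun (by fun_prop) (by fun_prop)

lemma sphRot_dom_ae (a : ℂ) : {z : ℂ | 1 - star a * z ≠ 0} =ᵐ[volume] Set.univ := by
  rw [ae_eq_univ]
  refine Set.Subsingleton.measure_zero (fun y hy y' hy' => ?_) _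
  simp only [Set.mem_compl_iff, Set.mem_ofPred_eq, not_not] at hy hy'
  have ha : star a ≠ 0 := by
    intro h; rw [h] at hy; simp at hy
  have : star a * y = star a * y' := by linear_combination hy' - hy
  exact mul_left_cancel₀ ha this

lemma lintegral_chordSq_eq_zero (a : ℂ) (K : ℝ → ENNReal) :
    ∫⁻ y : ℂ, ENNReal.ofReal (sphDensity y) * K (chordSq a y) =
      ∫⁻ z : ℂ, ENNReal.ofReal (sphDensity z) * K (‖z‖ ^ 2 / (1 + ‖z‖ ^ 2)) := by
  rw [← setLIntegral_univ, ← setLIntegral_congr (sphRot_image_ae a),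
    lintegral_image_eq_lintegral_abs_det_fderiv_mul volume (measurableSet_sphRot_dom a)
      (fun z hz => ((hasDerivAt_sphRot a z hz).hasFDerivAt.restrictScalars ℝ).hasFDerivWithinAt)
      (injOn_sphRot a)]
  rw [← setLIntegral_univ (fun z : ℂ => ENNReal.ofReal (sphDensity z) * _),
    ← setLIntegral_congr (sphRot_dom_ae a)]
  refine setLIntegral_congr_fun (measurableSet_sphRot_dom a) (fun z hz => ?_)
  rw [chordSq_sphRot a z hz, ← mul_assoc, abs_det_complex_fderiv,
    ← ENNReal.ofReal_mul (by positivity), sphDensity_sphRot a z hz]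

lemma lintegral_radial_chordSq (K : ℝ → ENNReal) (hK : Measurable K) :
    ∫⁻ z : ℂ, ENNReal.ofReal (sphDensity z) * K (‖z‖ ^ 2 / (1 + ‖z‖ ^ 2)) =
      ∫⁻ u in Set.Ioo (0 : ℝ) 1, K u := by
  have himg : (fun r : ℝ => r ^ 2 / (1 + r ^ 2)) '' Set.Ioi 0 = Set.Ioo 0 1 := by
    ext u
    constructor
    · rintro ⟨r, hr, rfl⟩
      have : 0 < r := hr
      exact ⟨by positivity, by rw [div_lt_one (by positivity)]; linarith⟩
    · rintro ⟨h0, h1⟩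
      have h1' : 0 < 1 - u := by linarith
      refine ⟨√(u / (1 - u)), Real.sqrt_pos.mpr (by positivity), ?_⟩
      simp only
      rw [Real.sq_sqrt (by positivity)]
      field_simp
      ring
  have hderiv : ∀ r ∈ Set.Ioi (0 : ℝ), HasDerivWithinAt (fun r : ℝ => r ^ 2 / (1 + r ^ 2))
      (2 * r / (1 + r ^ 2) ^ 2) (Set.Ioi 0) r := by
    intro r _
    have h1 : HasDerivAt (fun r : ℝ => r ^ 2) (2 * r) r := by simpa using hasDerivAt_pow 2 r
    have := h1.fun_div (h1.const_add 1) (by positivity)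
    refine HasDerivAt.hasDerivWithinAt ?_
    convert this using 1
    congr 1
    ring
  have hinj : Set.InjOn (fun r : ℝ => r ^ 2 / (1 + r ^ 2)) (Set.Ioi 0) := by
    intro r hr s hs h
    have hr : 0 < r := hr
    have hs : 0 < s := hs
    simp only at h
    rw [div_eq_div_iff (by positivity) (by positivity)] at h
    have : r ^ 2 = s ^ 2 := by linarith
    exact (sq_eq_sq₀ hr.le hs.le).mp this
  rw [← himg, lintegral_image_eq_lintegral_abs_deriv_mul measurableSet_Ioi hderiv hinj,
    ← Complex.lintegral_comp_polarCoord_symm]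
  have htarget : polarCoord.target = Set.Ioi (0 : ℝ) ×ˢ Set.Ioo (-π) π := rfl
  rw [htarget, Measure.volume_eq_prod, ← Measure.prod_restrict]
  have hm : Measurable fun p : ℝ × ℝ => ENNReal.ofReal p.1 •
      (ENNReal.ofReal (1 / (π * (1 + p.1 ^ 2) ^ 2)) * K (p.1 ^ 2 / (1 + p.1 ^ 2))) := by
    simp only [smul_eq_mul]
    fun_prop
  have hcongr : ∀ p : ℝ × ℝ, ENNReal.ofReal p.1 •
      (ENNReal.ofReal (sphDensity (Complex.polarCoord.symm p)) *
        K (‖Complex.polarCoord.symm p‖ ^ 2 / (1 + ‖Complex.polarCoord.symm p‖ ^ 2))) =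
      ENNReal.ofReal p.1 •
      (ENNReal.ofReal (1 / (π * (1 + p.1 ^ 2) ^ 2)) * K (p.1 ^ 2 / (1 + p.1 ^ 2))) := by
    intro p
    simp [sphDensity]
  simp_rw [hcongr]
  rw [lintegral_prod _ hm.aemeasurable]
  refine setLIntegral_congr_fun measurableSet_Ioi (fun r hr => ?_)
  have hr : 0 < r := hr
  simp only [lintegral_const, smul_eq_mul]
  rw [Measure.restrict_apply_univ, Real.volume_Ioo, abs_of_nonneg (by positivity),
    ← mul_assoc, mul_right_comm, ← ENNReal.ofReal_mul hr.le,
    ← ENNReal.ofReal_mul (by positivity)]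
  congr 2
  field_simp
  ring

lemma lintegral_chordSq (x : E2) (K : ℝ → ENNReal) (hK : Measurable K) :
    ∫⁻ y : E2, ENNReal.ofReal (mu2 y) * K (chordSq x y) = ∫⁻ u in Set.Ioo (0 : ℝ) 1, K u := by
  rw [← lintegral_radial_chordSq K hK,
    ← lintegral_chordSq_eq_zero (Complex.orthonormalBasisOneI.repr.symm x) K,
    ← (Complex.orthonormalBasisOneI.repr.symm.measurePreserving).lintegral_comp_emb
      Complex.orthonormalBasisOneI.repr.symm.toMeasurableEquiv.measurableEmbedding]
  refine lintegral_congr fun y => ?_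
  simp only [sphDensity, chordSq, mu2, ← map_sub, LinearIsometryEquiv.norm_map]

lemma mu2_pos (x : E2) : 0 < mu2 x := by unfold mu2; positivity

lemma measurable_mu2 : Measurable mu2 := by unfold mu2; fun_prop

lemma chordSq_nonneg (x y : E2) : 0 ≤ chordSq x y := by unfold chordSq; positivity

lemma chordSq_comm (x y : E2) : chordSq x y = chordSq y x := by
  unfold chordSq
  rw [norm_sub_rev, mul_comm (1 + ‖x‖ ^ 2)]

lemma chordSq_le_one (x y : E2) : chordSq x y ≤ 1 := by
  unfold chordSq
  rw [div_le_one (by positivity)]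
  have h := norm_sub_le x y
  have h2 : ‖x - y‖ ^ 2 ≤ (‖x‖ + ‖y‖) ^ 2 := by gcongr
  nlinarith [sq_nonneg (1 - ‖x‖ * ‖y‖)]

lemma measurable_chordSq : Measurable fun p : E2 × E2 => chordSq p.1 p.2 := by
  unfold chordSq
  fun_prop

lemma measurable_chordSq_right (x : E2) : Measurable (chordSq x) := by
  unfold chordSq
  fun_prop

/-- The spherical probability measure on the plane. -/
def sphMeasure : Measure E2 := volume.withDensity fun x => ENNReal.ofReal (mu2 x)

lemma map_chordSq_sphMeasure (x : E2) :
    sphMeasure.map (chordSq x) = volume.restrict (Set.Ioo (0 : ℝ) 1) := by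
  ext s hs
  rw [Measure.map_apply (measurable_chordSq_right x) hs, sphMeasure,
    withDensity_apply _ (measurable_chordSq_right x hs),
    ← lintegral_indicator (measurable_chordSq_right x hs), ← lintegral_indicator_one hs,
    ← lintegral_chordSq x _ (measurable_one.indicator hs)]
  refine lintegral_congr fun y => ?_
  by_cases hy : chordSq x y ∈ s <;> simp [Set.indicator, hy]

lemma ae_chordSq_mem (x : E2) : ∀ᵐ y : E2, chordSq x y ∈ Set.Ioo (0 : ℝ) 1 := by
  have h1 : ∀ᵐ u ∂(sphMeasure.map (chordSq x)), u ∈ Set.Ioo (0 : ℝ) 1 := by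
    rw [map_chordSq_sphMeasure]
    exact ae_restrict_mem measurableSet_Ioo
  have h2 := ae_of_ae_map (measurable_chordSq_right x).aemeasurable h1
  have h3 : (volume : Measure E2) ≪ sphMeasure :=
    withDensity_absolutelyContinuous' measurable_mu2.ennreal_ofReal.aemeasurable
      (Eventually.of_forall fun y => by simpa using mu2_pos y)
  exact h3.ae_le h2

lemma ae_prod_chordSq_mem : ∀ᵐ p : E2 × E2, chordSq p.1 p.2 ∈ Set.Ioo (0 : ℝ) 1 := by
  have := (Measure.ae_prod_mem_iff_ae_ae_mem (μ := (volume : Measure E2))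
    (ν := (volume : Measure E2)) (measurable_chordSq measurableSet_Ioo)).mpr
    (Eventually.of_forall ae_chordSq_mem)
  exact this

lemma integrable_mu2_mul_chordSq (x : E2) {K : ℝ → ℝ} (hK : Measurable K)
    (hinteg : IntegrableOn K (Set.Ioo 0 1)) : Integrable fun y => mu2 y * K (chordSq x y) := by
  rw [IntegrableOn, ← map_chordSq_sphMeasure x,
    integrable_map_measure hK.aestronglyMeasurable (measurable_chordSq_right x).aemeasurable,
    sphMeasure, integrable_withDensity_iff measurable_mu2.ennreal_ofReal
      (by simp)] at hinteg
  refine hinteg.congr (Eventually.of_forall fun y => ?_)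
  simp [ENNReal.toReal_ofReal (mu2_pos y).le, mul_comm]

lemma integral_mu2_mul_chordSq (x : E2) {K : ℝ → ℝ} (hK : Measurable K) :
    ∫ y, mu2 y * K (chordSq x y) = ∫ u in Set.Ioo (0 : ℝ) 1, K u := by
  rw [← map_chordSq_sphMeasure x,
    integral_map (measurable_chordSq_right x).aemeasurable hK.aestronglyMeasurable,
    sphMeasure, integral_withDensity_eq_integral_toReal_smul
      measurable_mu2.ennreal_ofReal (by simp)]
  refine integral_congr_ae (Eventually.of_forall fun y => ?_)
  simp [ENNReal.toReal_ofReal (mu2_pos y).le]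

lemma integrable_mu2 : Integrable mu2 := by
  simpa using integrable_mu2_mul_chordSq 0 (K := fun _ => 1) measurable_const
    (integrableOn_const (by simp))

lemma integral_mu2 : ∫ x, mu2 x = 1 := by
  simpa using integral_mu2_mul_chordSq 0 (K := fun _ => 1) measurable_const

lemma integrable_mul_mu2_mul_chordSq {f : E2 → ℝ} (hf : Integrable f) {K : ℝ → ℝ}
    (hK : Measurable K) (hinteg : IntegrableOn K (Set.Ioo 0 1)) :
    Integrable fun p : E2 × E2 => f p.1 * mu2 p.2 * K (chordSq p.1 p.2) := by
  have hm : AEStronglyMeasurable (fun p : E2 × E2 => f p.1 * mu2 p.2 * K (chordSq p.1 p.2))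
      (volume.prod volume) :=
    (hf.1.comp_fst.mul (measurable_mu2.comp measurable_snd).aestronglyMeasurable).mul
      (hK.comp measurable_chordSq).aestronglyMeasurable
  refine (integrable_prod_iff hm).mpr ⟨Eventually.of_forall fun x => ?_, ?_⟩
  · simpa only [mul_assoc] using (integrable_mu2_mul_chordSq x hK hinteg).const_mul (f x)
  · have : ∀ x, ∫ y, ‖f x * mu2 y * K (chordSq x y)‖ =
        ‖f x‖ * ∫ u in Set.Ioo (0 : ℝ) 1, ‖K u‖ := by
      intro x
      rw [← integral_mu2_mul_chordSq x hK.norm, ← integral_const_mul]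
      simp only [norm_mul, Real.norm_of_nonneg (mu2_pos _).le, mul_assoc]
    simp only [this]
    exact hf.norm.mul_const _

lemma integral_mul_mu2_mul_chordSq {f : E2 → ℝ} (hf : Integrable f) {K : ℝ → ℝ}
    (hK : Measurable K) (hinteg : IntegrableOn K (Set.Ioo 0 1)) :
    ∫ p : E2 × E2, f p.1 * mu2 p.2 * K (chordSq p.1 p.2) =
      (∫ x, f x) * ∫ u in Set.Ioo (0 : ℝ) 1, K u := by
  have h := integral_prod _ (integrable_mul_mu2_mul_chordSq hf hK hinteg)
  rw [Measure.volume_eq_prod, h, ← integral_mul_const]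
  refine integral_congr_ae (Eventually.of_forall fun x => ?_)
  simp only [mul_assoc, integral_const_mul, integral_mu2_mul_chordSq x hK]

lemma integrable_mu2_mul_mul_chordSq {f : E2 → ℝ} (hf : Integrable f) {K : ℝ → ℝ}
    (hK : Measurable K) (hinteg : IntegrableOn K (Set.Ioo 0 1)) :
    Integrable fun p : E2 × E2 => mu2 p.1 * f p.2 * K (chordSq p.1 p.2) := by
  refine (integrable_mul_mu2_mul_chordSq hf hK hinteg).swap.congr
    (Eventually.of_forall fun p => ?_)
  simp [chordSq_comm p.2 p.1, mul_comm]

lemma integral_mu2_mul_mul_chordSq {f : E2 → ℝ} (hf : Integrable f) {K : ℝ → ℝ}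
    (hK : Measurable K) (hinteg : IntegrableOn K (Set.Ioo 0 1)) :
    ∫ p : E2 × E2, mu2 p.1 * f p.2 * K (chordSq p.1 p.2) =
      (∫ x, f x) * ∫ u in Set.Ioo (0 : ℝ) 1, K u := by
  rw [← integral_mul_mu2_mul_chordSq hf hK hinteg, Measure.volume_eq_prod, ← integral_prod_swap]
  refine integral_congr_ae (Eventually.of_forall fun p => ?_)
  simp [chordSq_comm p.2 p.1, mul_comm]

lemma integrableOn_log_Ioo : IntegrableOn Real.log (Set.Ioo 0 1) := by
  have := intervalIntegral.intervalIntegrable_log' (a := 0) (b := 1)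
  rwa [intervalIntegrable_iff_integrableOn_Ioo_of_le zero_le_one] at this

lemma integral_log_Ioo : ∫ u in Set.Ioo (0 : ℝ) 1, Real.log u = -1 := by
  rw [← integral_Ioc_eq_integral_Ioo, ← intervalIntegral.integral_of_le zero_le_one, integral_log]
  simp

lemma integrableOn_mul_log_Ioo :
    IntegrableOn (fun u : ℝ => u * Real.log u) (Set.Ioo 0 1) :=
  (Real.continuous_mul_log.integrableOn_Icc (a := 0) (b := 1)).mono_set Set.Ioo_subset_Icc_self

lemma integral_mul_log_Ioo : ∫ u in Set.Ioo (0 : ℝ) 1, u * Real.log u = -1 / 4 := by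
  rw [← integral_Ioc_eq_integral_Ioo, ← intervalIntegral.integral_of_le zero_le_one]
  have h := intervalIntegral.integral_eq_sub_of_hasDerivAt_of_le (zero_le_one' ℝ)
    (f := fun u : ℝ => u / 2 * (u * Real.log u) - u ^ 2 / 4) (f' := fun u => u * Real.log u)
    (Continuous.continuousOn ((by fun_prop : Continuous fun u : ℝ => u / 2).mul
      Real.continuous_mul_log |>.sub (by fun_prop)))
    (fun u hu => by
      have h1 := ((hasDerivAt_id u).div_const 2).fun_mul (Real.hasDerivAt_mul_log hu.1.ne')
      have h2 := ((hasDerivAt_pow 2 u).div_const 4)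
      refine (h1.fun_sub h2).congr_deriv ?_
      simp
      ring)
    (Real.continuous_mul_log.intervalIntegrable _ _)
  rw [h]
  simp
  norm_num

lemma integrableOn_rpow_Ioo :
    IntegrableOn (fun u : ℝ => u ^ (-(1 / 2) : ℝ)) (Set.Ioo 0 1) := by
  have := intervalIntegral.intervalIntegrable_rpow' (a := 0) (b := 1) (r := -(1 / 2))
    (by norm_num)
  rwa [intervalIntegrable_iff_integrableOn_Ioo_of_le zero_le_one] at this

lemma integral_rpow_Ioo : ∫ u in Set.Ioo (0 : ℝ) 1, u ^ (-(1 / 2) : ℝ) = 2 := by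
  rw [← integral_Ioc_eq_integral_Ioo, ← intervalIntegral.integral_of_le zero_le_one,
    integral_rpow (Or.inl (by norm_num))]
  norm_num

/-- The coordinates of the inverse stereographic projection. -/
def sphCoord (i : Fin 3) (x : E2) : ℝ :=
  ![2 * x 0, 2 * x 1, 1 - ‖x‖ ^ 2] i / (1 + ‖x‖ ^ 2)

lemma E2_norm_sq (x : E2) : ‖x‖ ^ 2 = x 0 ^ 2 + x 1 ^ 2 := by
  simp [EuclideanSpace.real_norm_sq_eq]

lemma measurable_sphCoord (i : Fin 3) : Measurable (sphCoord i) := by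
  unfold sphCoord
  fin_cases i <;> simp <;> fun_prop

lemma sum_sphCoord_mul (x y : E2) :
    ∑ i, sphCoord i x * sphCoord i y = 1 - 2 * chordSq x y := by
  have hx : 1 + ‖x‖ ^ 2 ≠ 0 := by positivity
  have hy : 1 + ‖y‖ ^ 2 ≠ 0 := by positivity
  simp only [Fin.sum_univ_three, sphCoord, chordSq, Matrix.cons_val]
  field_simp
  simp only [E2_norm_sq]
  simp
  ring

lemma sum_sphCoord_sq (x : E2) : ∑ i, sphCoord i x ^ 2 = 1 := by
  simp only [sq, sum_sphCoord_mul]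
  simp [chordSq]

lemma abs_sphCoord_le (i : Fin 3) (x : E2) : |sphCoord i x| ≤ 1 := by
  rw [← sq_le_one_iff_abs_le_one, ← sum_sphCoord_sq x]
  exact Finset.single_le_sum (f := fun i => sphCoord i x ^ 2) (fun j _ => sq_nonneg _)
    (Finset.mem_univ i)

lemma integrable_mul_bdd {α : Type*} [MeasurableSpace α] {m : Measure α} {h a : α → ℝ}
    (hh : Integrable h m) (ha : Measurable a) {C : ℝ} (hC : ∀ x, |a x| ≤ C) :
    Integrable (fun x => h x * a x) m :=
  hh.mul_bdd (c := C) ha.aestronglyMeasurable (Eventually.of_forall hC)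

/-- `∬ h(x) h(y) K(x,y)`, for a kernel `K` on the plane. -/
def bilin (h : E2 → ℝ) (K : E2 → E2 → ℝ) : ℝ := ∫ p : E2 × E2, h p.1 * h p.2 * K p.1 p.2

lemma integrable_mul_mul {h k : E2 → ℝ} (hh : Integrable h) (hk : Integrable k) :
    Integrable fun p : E2 × E2 => h p.1 * k p.2 := hh.mul_prod hk

lemma integrable_bilin_bdd {h : E2 → ℝ} (hh : Integrable h) {K : E2 → E2 → ℝ}
    (hK : Measurable fun p : E2 × E2 => K p.1 p.2) {C : ℝ} (hC : ∀ x y, |K x y| ≤ C) :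
    Integrable fun p : E2 × E2 => h p.1 * h p.2 * K p.1 p.2 :=
  integrable_mul_bdd (integrable_mul_mul hh hh) hK fun p => hC p.1 p.2

lemma bilin_mul_self (h a : E2 → ℝ) :
    bilin h (fun x y => a x * a y) = (∫ x, h x * a x) ^ 2 := by
  unfold bilin
  rw [sq, ← integral_prod_mul, Measure.volume_eq_prod]
  refine integral_congr_ae (Eventually.of_forall fun p => ?_)
  simp only
  ring

lemma abs_one_sub_two_mul_chordSq_le (x y : E2) : |1 - 2 * chordSq x y| ≤ 1 := by
  have h0 := chordSq_nonneg x y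
  have h1 := chordSq_le_one x y
  rw [abs_le]
  constructor <;> linarith

lemma measurable_one_sub_two_mul_chordSq :
    Measurable fun p : E2 × E2 => 1 - 2 * chordSq p.1 p.2 := by
  have := measurable_chordSq
  fun_prop

lemma bilin_pow_nonneg {h : E2 → ℝ} (hh : Integrable h) (n : ℕ) :
    0 ≤ bilin h fun x y => (1 - 2 * chordSq x y) ^ n := by
  have hm : ∀ q : Fin n → Fin 3, Measurable fun x => ∏ i, sphCoord (q i) x := fun q =>
    Finset.measurable_prod _ fun i _ => measurable_sphCoord (q i)
  have hb : ∀ (q : Fin n → Fin 3) x, |∏ i, sphCoord (q i) x| ≤ 1 := by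
    intro q x
    rw [Finset.abs_prod]
    exact Finset.prod_le_one (fun _ _ => abs_nonneg _) fun i _ => abs_sphCoord_le _ _
  have key : bilin h (fun x y => (1 - 2 * chordSq x y) ^ n) =
      ∑ q : Fin n → Fin 3, bilin h fun x y =>
        (∏ i, sphCoord (q i) x) * ∏ i, sphCoord (q i) y := by
    unfold bilin
    rw [← integral_finsetSum]
    · simp only [← Finset.mul_sum, ← sum_sphCoord_mul, Fintype.sum_pow, Finset.prod_mul_distrib]
    · intro q _
      refine integrable_bilin_bdd hh (C := 1)
        (K := fun x y => (∏ i, sphCoord (q i) x) * ∏ i, sphCoord (q i) y) ?_ fun x y => ?_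
      · exact ((hm q).comp measurable_fst).mul ((hm q).comp measurable_snd)
      · rw [abs_mul]
        exact mul_le_one₀ (hb q x) (abs_nonneg _) (hb q y)
  rw [key]
  refine Finset.sum_nonneg fun q _ => ?_
  rw [bilin_mul_self]
  positivity

lemma integrable_mul_sphCoord {k : E2 → ℝ} (hk : Integrable k) (i : Fin 3) :
    Integrable fun x => k x * sphCoord i x :=
  integrable_mul_bdd hk (measurable_sphCoord i) (abs_sphCoord_le i)

lemma integral_mul_mul_one_sub_two_mul_chordSq {h k : E2 → ℝ} (hh : Integrable h)
    (hk : Integrable k) : ∫ p : E2 × E2, h p.1 * k p.2 * (1 - 2 * chordSq p.1 p.2) =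
      ∑ i, (∫ x, h x * sphCoord i x) * ∫ x, k x * sphCoord i x := by
  simp only [← integral_prod_mul]
  rw [← integral_finsetSum _ fun i _ =>
    (integrable_mul_sphCoord hh i).mul_prod (integrable_mul_sphCoord hk i),
    Measure.volume_eq_prod]
  refine integral_congr_ae (Eventually.of_forall fun p => ?_)
  simp only [← sum_sphCoord_mul, Finset.mul_sum]
  exact Finset.sum_congr rfl fun i _ => by ring

lemma hasSum_one_sub_mul_log {t : ℝ} (ht : |t| < 1) :
    HasSum (fun n : ℕ => t ^ (n + 2) * (1 / ((n + 1) * (n + 2)))) ((1 - t) * log (1 - t) + t) := by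
  have h1 := Real.hasSum_pow_div_log_of_abs_lt_one ht
  have h2 := (hasSum_nat_add_iff' 1).mpr h1
  have h3 := (h1.mul_left t).sub h2
  have e1 : (fun n : ℕ => t ^ (n + 2) * (1 / (((n : ℝ) + 1) * (n + 2)))) = fun n : ℕ =>
      t * (t ^ (n + 1) / ((n : ℝ) + 1)) - t ^ (n + 1 + 1) / (((n + 1 : ℕ) : ℝ) + 1) := by
    funext n
    push_cast
    have : (n : ℝ) + 1 ≠ 0 := by positivity
    have : (n : ℝ) + 2 ≠ 0 := by positivity
    rw [add_assoc (n : ℝ) 1 1, one_add_one_eq_two]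
    field_simp
    ring
  have e2 : (1 - t) * log (1 - t) + t = t * -log (1 - t) -
      (-log (1 - t) - ∑ i ∈ Finset.range 1, t ^ (i + 1) / ((i : ℝ) + 1)) := by
    simp
    ring
  rw [e1, e2]
  exact h3

lemma summable_inv_mul : Summable fun n : ℕ => (1 / (((n : ℝ) + 1) * (n + 2))) := by
  have h : Summable fun n : ℕ => 1 / (((n + 1 : ℕ) : ℝ) ^ 2) :=
    (summable_nat_add_iff 1).mpr (Real.summable_one_div_nat_pow.mpr one_lt_two)
  refine Summable.of_nonneg_of_le (fun n => by positivity) (fun n => ?_) h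
  push_cast
  rw [sq]
  gcongr
  linarith

lemma abs_mul_log_le {u : ℝ} (h0 : 0 ≤ u) (h1 : u ≤ 1) : |u * log u| ≤ 1 := by
  rcases h0.eq_or_lt with rfl | h0
  · simp
  · rw [mul_comm]; exact (Real.abs_log_mul_self_lt u h0 h1).le

lemma measurable_chordSq_mul_log :
    Measurable fun p : E2 × E2 => chordSq p.1 p.2 * log (chordSq p.1 p.2) :=
  measurable_chordSq.mul (Real.measurable_log.comp measurable_chordSq)

lemma abs_chordSq_mul_log_le (x y : E2) : |chordSq x y * log (chordSq x y)| ≤ 1 :=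
  abs_mul_log_le (chordSq_nonneg x y) (chordSq_le_one x y)

lemma bilin_chordSq_mul_log_nonneg {h : E2 → ℝ} (hh : Integrable h) (h0 : ∫ x, h x = 0)
    (hc : ∀ i, ∫ x, h x * sphCoord i x = 0) :
    0 ≤ bilin h fun x y => chordSq x y * log (chordSq x y) := by
  have hpow : ∀ n : ℕ, Integrable fun p : E2 × E2 =>
      h p.1 * h p.2 * (1 - 2 * chordSq p.1 p.2) ^ n := by
    intro n
    refine integrable_bilin_bdd hh (K := fun x y => (1 - 2 * chordSq x y) ^ n) (C := 1) ?_
      fun x y => ?_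
    · exact measurable_one_sub_two_mul_chordSq.pow_const n
    · rw [abs_pow]
      exact pow_le_one₀ (abs_nonneg _) (abs_one_sub_two_mul_chordSq_le x y)
  let F : ℕ → E2 × E2 → ℝ := fun n p =>
    h p.1 * h p.2 * (1 - 2 * chordSq p.1 p.2) ^ (n + 2) * (1 / ((n + 1) * (n + 2)))
  have hF : ∀ n, Integrable (F n) := fun n => (hpow (n + 2)).mul_const _
  have hsum : Summable fun n => ∫ p, ‖F n p‖ := by
    refine Summable.of_nonneg_of_le (fun n => integral_nonneg fun p => norm_nonneg _)
      (fun n => ?_) (summable_inv_mul.mul_left (∫ p : E2 × E2, ‖h p.1 * h p.2‖))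
    rw [← integral_mul_const]
    refine integral_mono (hF n).norm ((integrable_mul_mul hh hh).norm.mul_const _) fun p => ?_
    simp only [F]
    rw [norm_mul, norm_mul (h p.1 * h p.2),
      Real.norm_of_nonneg (by positivity : (0 : ℝ) ≤ 1 / ((n + 1) * (n + 2)))]
    have : ‖(1 - 2 * chordSq p.1 p.2) ^ (n + 2)‖ ≤ 1 := by
      rw [norm_pow]
      exact pow_le_one₀ (norm_nonneg _) (abs_one_sub_two_mul_chordSq_le _ _)
    gcongr
    exact mul_le_of_le_one_right (norm_nonneg _) this
  have hS := hasSum_integral_of_summable_integral_norm hF hsum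
  have hnn : 0 ≤ ∫ p, ∑' n, F n p := by
    refine hS.nonneg fun n => ?_
    simp only [F]
    rw [integral_mul_const]
    exact mul_nonneg (bilin_pow_nonneg hh (n + 2)) (by positivity)
  have hae : (fun p : E2 × E2 => ∑' n, F n p) =ᵐ[volume] fun p =>
      2 * (h p.1 * h p.2 * (chordSq p.1 p.2 * log (chordSq p.1 p.2))) +
      (log 2 * (h p.1 * h p.2) + (1 - log 2) * (h p.1 * h p.2 * (1 - 2 * chordSq p.1 p.2))) := by
    filter_upwards [ae_prod_chordSq_mem] with p hp
    have ht : |1 - 2 * chordSq p.1 p.2| < 1 := by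
      rw [abs_lt]; constructor <;> linarith [hp.1, hp.2]
    have := (hasSum_one_sub_mul_log ht).mul_left (h p.1 * h p.2)
    simp only [← mul_assoc] at this
    have e := this.tsum_eq
    simp only [F]
    simp only [← mul_assoc]
    rw [e]
    have e2 : 1 - (1 - 2 * chordSq p.1 p.2) = 2 * chordSq p.1 p.2 := by ring
    rw [e2, Real.log_mul two_ne_zero hp.1.ne']
    ring
  have hi1 : Integrable fun p : E2 × E2 =>
      h p.1 * h p.2 * (chordSq p.1 p.2 * log (chordSq p.1 p.2)) :=
    integrable_bilin_bdd hh measurable_chordSq_mul_log abs_chordSq_mul_log_le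
  have hi2 := integrable_mul_mul hh hh
  have hi3 : Integrable fun p : E2 × E2 => h p.1 * h p.2 * (1 - 2 * chordSq p.1 p.2) := by
    simpa using hpow 1
  rw [integral_congr_ae hae, integral_add (hi1.const_mul _)
    (by exact (hi2.const_mul _).add (hi3.const_mul _)), integral_add (hi2.const_mul _) (hi3.const_mul _),
    integral_const_mul, integral_const_mul, integral_const_mul] at hnn
  have e3 : ∫ p : E2 × E2, h p.1 * h p.2 = 0 := by
    rw [Measure.volume_eq_prod, integral_prod_mul, h0, zero_mul]
  have e4 := integral_mul_mul_one_sub_two_mul_chordSq hh hh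
  simp only [hc, mul_zero, Finset.sum_const_zero] at e4
  unfold bilin
  rw [e3, e4] at hnn
  linarith

lemma integral_mul_one_sub_two_mul_chordSq {k : E2 → ℝ} (hk : Integrable k) (x : E2) :
    ∫ y, k y * (1 - 2 * chordSq x y) = ∑ i, sphCoord i x * ∫ y, k y * sphCoord i y := by
  simp only [← integral_const_mul]
  rw [← integral_finsetSum _ fun i _ => (integrable_mul_sphCoord hk i).const_mul _]
  refine integral_congr_ae (Eventually.of_forall fun y => ?_)
  simp only [← sum_sphCoord_mul, Finset.mul_sum]
  exact Finset.sum_congr rfl fun i _ => by ring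

lemma integral_one_sub_two_mul_Ioo : ∫ u in Set.Ioo (0 : ℝ) 1, (1 - 2 * u) = 0 := by
  rw [← integral_Ioc_eq_integral_Ioo, ← intervalIntegral.integral_of_le zero_le_one,
    intervalIntegral.integral_sub (by simp) (Continuous.intervalIntegrable (by fun_prop) _ _),
    intervalIntegral.integral_const_mul, integral_id]
  simp

lemma integral_mu2_mul_sphCoord (i : Fin 3) : ∫ x, mu2 x * sphCoord i x = 0 := by
  have key : ∀ x : E2, ∑ i, sphCoord i x * ∫ y, mu2 y * sphCoord i y = 0 := by
    intro x
    rw [← integral_mul_one_sub_two_mul_chordSq integrable_mu2,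
      integral_mu2_mul_chordSq x (K := fun u => 1 - 2 * u) (by fun_prop),
      integral_one_sub_two_mul_Ioo]
  have k0 := key !₂[1, 0]
  have k1 := key !₂[0, 1]
  have k2 := key 0
  simp [Fin.sum_univ_three, sphCoord, E2_norm_sq] at k0 k1 k2
  fin_cases i
  · simpa [sphCoord, E2_norm_sq] using k0
  · simpa [sphCoord, E2_norm_sq] using k1
  · simpa [sphCoord, E2_norm_sq] using k2

lemma bilin_sub_mu2 {f : E2 → ℝ} (hf : Integrable f) (hmass : ∫ x, f x = 1) {K : ℝ → ℝ}
    (hK : Measurable K) (hinteg : IntegrableOn K (Set.Ioo 0 1))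
    (hfK : Integrable fun p : E2 × E2 => f p.1 * f p.2 * K (chordSq p.1 p.2)) :
    bilin (fun x => f x - mu2 x) (fun x y => K (chordSq x y)) =
      bilin f (fun x y => K (chordSq x y)) - ∫ u in Set.Ioo (0 : ℝ) 1, K u := by
  have i2 := integrable_mul_mu2_mul_chordSq hf hK hinteg
  have i3 := integrable_mu2_mul_mul_chordSq hf hK hinteg
  have i4 := integrable_mul_mu2_mul_chordSq integrable_mu2 hK hinteg
  have e2 := integral_mul_mu2_mul_chordSq hf hK hinteg
  have e3 := integral_mu2_mul_mul_chordSq hf hK hinteg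
  have e4 := integral_mul_mu2_mul_chordSq integrable_mu2 hK hinteg
  rw [hmass, one_mul] at e2 e3
  rw [integral_mu2, one_mul] at e4
  have e : bilin (fun x => f x - mu2 x) (fun x y => K (chordSq x y)) =
      ∫ p : E2 × E2, (f p.1 * f p.2 * K (chordSq p.1 p.2) - f p.1 * mu2 p.2 * K (chordSq p.1 p.2)
        - mu2 p.1 * f p.2 * K (chordSq p.1 p.2) + mu2 p.1 * mu2 p.2 * K (chordSq p.1 p.2)) := by
    refine integral_congr_ae (Eventually.of_forall fun p => ?_)
    simp only
    ring
  rw [e, integral_add (by exact (hfK.sub i2).sub i3) i4,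
    integral_sub (by exact hfK.sub i2) i3, integral_sub hfK i2, e2, e3, e4]
  unfold bilin
  ring

lemma neg_quarter_le_bilin {f : E2 → ℝ} (hf : Integrable f) (hmass : ∫ x, f x = 1)
    (hc : ∀ i, ∫ x, f x * sphCoord i x = 0) :
    -1 / 4 ≤ bilin f fun x y => chordSq x y * log (chordSq x y) := by
  have h := bilin_chordSq_mul_log_nonneg (hf.sub integrable_mu2)
    (by simp only [Pi.sub_apply]; rw [integral_sub hf integrable_mu2, hmass, integral_mu2, sub_self])
    (fun i => by
      simp only [Pi.sub_apply, sub_mul]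
      rw [integral_sub (integrable_mul_sphCoord hf i) (integrable_mul_sphCoord integrable_mu2 i),
        hc, integral_mu2_mul_sphCoord, sub_self])
  have key := bilin_sub_mu2 hf hmass (K := fun u : ℝ => u * log u) (by fun_prop)
    integrableOn_mul_log_Ioo
    (integrable_bilin_bdd hf measurable_chordSq_mul_log abs_chordSq_mul_log_le)
  rw [integral_mul_log_Ioo] at key
  have h' : 0 ≤ bilin (fun x => f x - mu2 x) fun x y => chordSq x y * log (chordSq x y) := h
  rw [key] at h'
  linarith

/-- Probability densities with finite entropy, logarithmic moment and logarithmic energy. -/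
structure IsDens (f : E2 → ℝ) : Prop where
  meas : Measurable f
  nonneg : ∀ x, 0 ≤ f x
  int : Integrable f
  mass : ∫ x, f x = 1
  ent : Integrable fun x => f x * log (f x)
  mom : Integrable fun x => f x * log (1 + ‖x‖ ^ 2)
  pot : Integrable fun p : E2 × E2 => f p.1 * f p.2 * log ‖p.1 - p.2‖

/-- A density is centered if its image on the sphere has barycenter zero. -/
def IsCentered (f : E2 → ℝ) : Prop := ∀ i, ∫ x, f x * sphCoord i x = 0

/-- The logarithmic free energy. -/
def logEnergy (f : E2 → ℝ) : ℝ :=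
  (∫ x, f x * log (f x)) + 2 * bilin f fun x y => log ‖x - y‖

lemma log_chordSq {x y : E2} (h : 0 < chordSq x y) :
    log (chordSq x y) = 2 * log ‖x - y‖ - log (1 + ‖x‖ ^ 2) - log (1 + ‖y‖ ^ 2) := by
  have hx : 1 + ‖x‖ ^ 2 ≠ 0 := by positivity
  have hy : 1 + ‖y‖ ^ 2 ≠ 0 := by positivity
  have hn : ‖x - y‖ ≠ 0 := by
    intro h0
    simp [chordSq, h0] at h
  unfold chordSq
  rw [log_div (by positivity) (by positivity), log_mul hx hy, log_pow]
  push_cast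
  ring

lemma log_mu2 (x : E2) : log (mu2 x) = -(2 * log (1 + ‖x‖ ^ 2) + log π) := by
  have hx : 1 + ‖x‖ ^ 2 ≠ 0 := by positivity
  unfold mu2
  rw [one_div, log_inv, log_mul pi_ne_zero (by positivity), log_pow]
  push_cast
  ring

/-- Young's inequality for the entropy. -/
lemma mul_le_mul_log_sub_add_exp {a : ℝ} (ha : 0 ≤ a) (b : ℝ) :
    a * b ≤ a * log a - a + exp b := by
  rcases ha.eq_or_lt with rfl | ha
  · simpa using (exp_pos b).le
  · have h := add_one_le_exp (b - log a)
    rw [exp_sub, exp_log ha, le_div_iff₀ ha] at h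
    linarith

/-- The relative entropy of a density with respect to the spherical density. -/
def relEntropy (f : E2 → ℝ) : ℝ :=
  (∫ x, f x * log (f x)) + 2 * (∫ x, f x * log (1 + ‖x‖ ^ 2)) + log π

namespace IsDens

variable {f : E2 → ℝ}

lemma integrable_relEntropy (hf : IsDens f) :
    Integrable fun x => f x * (log (f x) - log (mu2 x)) := by
  refine ((hf.ent.add (hf.mom.const_mul 2)).add (hf.int.mul_const (log π))).congr
    (Eventually.of_forall fun x => ?_)
  simp only [Pi.add_apply, log_mu2]
  ring

lemma integral_relEntropy (hf : IsDens f) :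
    ∫ x, f x * (log (f x) - log (mu2 x)) = relEntropy f := by
  have e : ∀ x, f x * (log (f x) - log (mu2 x)) =
      f x * log (f x) + 2 * (f x * log (1 + ‖x‖ ^ 2)) + f x * log π := by
    intro x
    rw [log_mu2]
    ring
  simp only [e]
  rw [integral_add (by exact hf.ent.add (hf.mom.const_mul 2)) (hf.int.mul_const _),
    integral_add hf.ent (hf.mom.const_mul 2), integral_const_mul, integral_mul_const, hf.mass,
    one_mul, relEntropy]

lemma relEntropy_nonneg (hf : IsDens f) : 0 ≤ relEntropy f := by
  have h : ∫ x, (f x - mu2 x) ≤ ∫ x, f x * (log (f x) - log (mu2 x)) := by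
    refine integral_mono (hf.int.sub integrable_mu2) hf.integrable_relEntropy fun x => ?_
    have := mul_le_mul_log_sub_add_exp (hf.nonneg x) (log (mu2 x))
    rw [exp_log (mu2_pos x)] at this
    simp only
    linarith
  rwa [integral_sub hf.int integrable_mu2, hf.mass, integral_mu2, sub_self,
    hf.integral_relEntropy] at h

lemma ae_log_chordSq (f : E2 → ℝ) : ∀ᵐ p : E2 × E2, f p.1 * f p.2 * log (chordSq p.1 p.2) =
    2 * (f p.1 * f p.2 * log ‖p.1 - p.2‖) - f p.1 * log (1 + ‖p.1‖ ^ 2) * f p.2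
      - f p.1 * (f p.2 * log (1 + ‖p.2‖ ^ 2)) := by
  filter_upwards [ae_prod_chordSq_mem] with p hp
  rw [log_chordSq hp.1]
  ring

lemma integrable_log_chordSq (hf : IsDens f) :
    Integrable fun p : E2 × E2 => f p.1 * f p.2 * log (chordSq p.1 p.2) := by
  refine (((hf.pot.const_mul 2).sub (integrable_mul_mul hf.mom hf.int)).sub
    (integrable_mul_mul hf.int hf.mom)).congr ?_
  filter_upwards [ae_log_chordSq f] with p hp
  rw [hp]
  rfl

lemma bilin_log_chordSq (hf : IsDens f) : bilin f (fun x y => log (chordSq x y)) =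
    2 * bilin f (fun x y => log ‖x - y‖) - 2 * ∫ x, f x * log (1 + ‖x‖ ^ 2) := by
  have i1 := integrable_mul_mul hf.mom hf.int
  have i2 := integrable_mul_mul hf.int hf.mom
  have e1 := integral_prod_mul (μ := volume) (ν := volume) (fun x => f x * log (1 + ‖x‖ ^ 2)) f
  have e2 := integral_prod_mul (μ := volume) (ν := volume) f (fun x => f x * log (1 + ‖x‖ ^ 2))
  rw [hf.mass, ← Measure.volume_eq_prod] at e1 e2
  unfold bilin
  rw [integral_congr_ae (ae_log_chordSq f),
    integral_sub (by exact (hf.pot.const_mul 2).sub i1) i2,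
    integral_sub (hf.pot.const_mul 2) i1, integral_const_mul, e1, e2]
  ring

lemma logEnergy_eq (hf : IsDens f) :
    logEnergy f = relEntropy f + bilin f (fun x y => log (chordSq x y)) - log π := by
  rw [hf.bilin_log_chordSq, relEntropy, logEnergy]
  ring

lemma bilin_log_chordSq_le (hf : IsDens f) :
    bilin f (fun x y => log (chordSq x y)) ≤ logEnergy f + log π := by
  linarith [hf.logEnergy_eq, hf.relEntropy_nonneg]

lemma integrable_chordSq_mul_log (hf : IsDens f) : Integrable fun p : E2 × E2 =>
    f p.1 * f p.2 * (chordSq p.1 p.2 * log (chordSq p.1 p.2)) :=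
  integrable_bilin_bdd hf.int measurable_chordSq_mul_log abs_chordSq_mul_log_le

/-- A non-sharp lower bound on the free energy of centered densities. -/
lemma logEnergy_ge_of_centered (hf : IsDens f) (hc : IsCentered f) :
    -5 - log π ≤ logEnergy f := by
  set G : E2 → ℝ := fun x => f x * (log (f x) - log (mu2 x)) with hG
  have hGi : Integrable G := hf.integrable_relEntropy
  have hK : Measurable fun u : ℝ => u ^ (-(1 / 2) : ℝ) := by fun_prop
  have i1 := hf.integrable_log_chordSq
  have i2 := hf.integrable_chordSq_mul_log
  have i3 := integrable_mul_mul hf.int hGi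
  have i4 : Integrable fun p : E2 × E2 => f p.1 * G p.2 * (1 - 2 * chordSq p.1 p.2) :=
    integrable_mul_bdd i3 measurable_one_sub_two_mul_chordSq fun p =>
      abs_one_sub_two_mul_chordSq_le p.1 p.2
  have i5 := integrable_mul_mu2_mul_chordSq hf.int hK integrableOn_rpow_Ioo
  have e3 : ∫ p : E2 × E2, f p.1 * G p.2 = relEntropy f := by
    rw [Measure.volume_eq_prod, integral_prod_mul, hf.mass, one_mul, hf.integral_relEntropy]
  have e4 := integral_mul_mul_one_sub_two_mul_chordSq hf.int hGi
  have e5 := integral_mul_mu2_mul_chordSq hf.int hK integrableOn_rpow_Ioo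
  rw [hf.mass, integral_rpow_Ioo] at e5
  simp only [hc _, zero_mul, Finset.sum_const_zero] at e4
  have hle : ∫ p : E2 × E2, ((-1 / 2) * (f p.1 * f p.2 * log (chordSq p.1 p.2)) +
      (1 / 2) * (f p.1 * f p.2 * (chordSq p.1 p.2 * log (chordSq p.1 p.2)))) ≤
      ∫ p : E2 × E2, ((1 / 2) * (f p.1 * G p.2) +
        (1 / 2) * (f p.1 * G p.2 * (1 - 2 * chordSq p.1 p.2)) +
        f p.1 * mu2 p.2 * chordSq p.1 p.2 ^ (-(1 / 2) : ℝ)) := by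
    refine integral_mono_ae ((i1.const_mul _).add (i2.const_mul _))
      (((i3.const_mul _).add (i4.const_mul _)).add i5) ?_
    filter_upwards [ae_prod_chordSq_mem] with p hp
    have hm := mu2_pos p.2
    have hfx := hf.nonneg p.1
    have hfy := hf.nonneg p.2
    have hy : f p.2 * (-(1 / 2) * log (chordSq p.1 p.2)) ≤
        G p.2 + mu2 p.2 * chordSq p.1 p.2 ^ (-(1 / 2) : ℝ) := by
      have h := mul_le_mul_log_sub_add_exp hfy (log (mu2 p.2) + log (chordSq p.1 p.2) * (-(1 / 2)))
      rw [exp_add, exp_log hm, ← rpow_def_of_pos hp.1] at h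
      simp only [hG]
      nlinarith
    have hv : 0 < chordSq p.1 p.2 ^ (-(1 / 2) : ℝ) := rpow_pos_of_pos hp.1 _
    have h1 : 0 ≤ f p.1 * (1 - chordSq p.1 p.2) :=
      mul_nonneg hfx (by linarith [hp.2])
    have h2 := mul_le_mul_of_nonneg_left hy h1
    have h3 : 0 ≤ f p.1 * chordSq p.1 p.2 * (mu2 p.2 * chordSq p.1 p.2 ^ (-(1 / 2) : ℝ)) := by
      have := hp.1
      positivity
    linarith
  rw [integral_add (i1.const_mul _) (i2.const_mul _),
    integral_add (by exact (i3.const_mul _).add (i4.const_mul _)) i5,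
    integral_add (i3.const_mul _) (i4.const_mul _)] at hle
  simp only [integral_const_mul] at hle
  rw [e3, e4, e5] at hle
  have h6 := neg_quarter_le_bilin hf.int hf.mass hc
  rw [hf.logEnergy_eq]
  unfold bilin at h6 ⊢
  linarith

end IsDens

lemma one_add_mul_log_add_le {a : ℝ} (ha : |a| ≤ 1 / 2) :
    (1 + a) * log (1 + a) + (1 - a) * log (1 - a) ≤ a ^ 2 + 5 * a ^ 4 := by
  have key : ∀ x : ℝ, |x| ≤ 1 / 2 → log (1 - x) ≤ -x - x ^ 2 / 2 - x ^ 3 / 3 + 2 * x ^ 4 := by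
    intro x hx
    have h := Real.abs_log_sub_add_sum_range_le (lt_of_le_of_lt hx (by norm_num)) 3
    simp [Finset.sum_range_succ] at h
    have h2 : |x| ^ 4 / (1 - |x|) ≤ 2 * x ^ 4 := by
      rw [div_le_iff₀ (by linarith), Even.pow_abs (by decide)]
      nlinarith [mul_nonneg (by positivity : (0 : ℝ) ≤ x ^ 4) (by linarith : 0 ≤ 1 - 2 * |x|)]
    have h3 := (abs_le.mp (h.trans h2)).2
    norm_num at h3
    linarith
  have h1 := key a ha
  have h2 := key (-a) (by rwa [abs_neg])
  rw [sub_neg_eq_add] at h2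
  obtain ⟨hl, hr⟩ := abs_le.mp ha
  have h3 := mul_le_mul_of_nonneg_left h1 (by linarith : 0 ≤ 1 - a)
  have h4 := mul_le_mul_of_nonneg_left h2 (by linarith : 0 ≤ 1 + a)
  nlinarith [(by positivity : (0 : ℝ) ≤ a ^ 4)]

lemma abs_one_add_mul_log_le {a : ℝ} (ha : |a| ≤ 1 / 2) : |(1 + a) * log (1 + a)| ≤ 1 := by
  obtain ⟨hl, hr⟩ := abs_le.mp ha
  have hp : 0 < 1 + a := by linarith
  have h1 := Real.log_le_sub_one_of_pos hp
  have h2 := Real.one_sub_inv_le_log_of_pos hp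
  have h3 := mul_le_mul_of_nonneg_left h1 hp.le
  have h4 := mul_le_mul_of_nonneg_left h2 hp.le
  rw [mul_sub, mul_inv_cancel₀ hp.ne'] at h4
  rw [abs_le]
  constructor <;> nlinarith

lemma abs_mul_sphCoord_le {s : ℝ} (hs : |s| ≤ 1 / 2) (i : Fin 3) (x : E2) :
    |s * sphCoord i x| ≤ 1 / 2 := by
  rw [abs_mul]
  have := abs_sphCoord_le i x
  nlinarith [abs_nonneg s, abs_nonneg (sphCoord i x)]

/-- The perturbation of a density by a spherical coordinate. -/
def perturb (f : E2 → ℝ) (s : ℝ) (i : Fin 3) (x : E2) : ℝ := f x * (1 + s * sphCoord i x)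

lemma measurable_one_add_mul_sphCoord (s : ℝ) (i : Fin 3) :
    Measurable fun x => 1 + s * sphCoord i x :=
  ((measurable_sphCoord i).const_mul s).const_add 1

lemma abs_one_add_mul_sphCoord_le {s : ℝ} (hs : |s| ≤ 1 / 2) (i : Fin 3) (x : E2) :
    |1 + s * sphCoord i x| ≤ 2 := by
  obtain ⟨h1, h2⟩ := abs_le.mp (abs_mul_sphCoord_le hs i x)
  rw [abs_le]
  constructor <;> linarith

lemma perturb_mul_log (f : E2 → ℝ) {s : ℝ} (hs : |s| ≤ 1 / 2) (i : Fin 3) (x : E2) :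
    perturb f s i x * log (perturb f s i x) = f x * log (f x) * (1 + s * sphCoord i x) +
      f x * ((1 + s * sphCoord i x) * log (1 + s * sphCoord i x)) := by
  unfold perturb
  obtain ⟨h1, h2⟩ := abs_le.mp (abs_mul_sphCoord_le hs i x)
  by_cases h : f x = 0
  · simp [h]
  · rw [log_mul h (by linarith)]
    ring

namespace IsDens

variable {f : E2 → ℝ}

lemma integrable_perturb_log (hf : IsDens f) {s : ℝ} (hs : |s| ≤ 1 / 2) (i : Fin 3) :
    Integrable fun x => f x * ((1 + s * sphCoord i x) * log (1 + s * sphCoord i x)) :=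
  integrable_mul_bdd hf.int
    ((measurable_one_add_mul_sphCoord s i).mul (measurable_one_add_mul_sphCoord s i).log)
    fun x => abs_one_add_mul_log_le (abs_mul_sphCoord_le hs i x)

lemma integrable_ent_mul (hf : IsDens f) {s : ℝ} (hs : |s| ≤ 1 / 2) (i : Fin 3) :
    Integrable fun x => f x * log (f x) * (1 + s * sphCoord i x) :=
  integrable_mul_bdd hf.ent (measurable_one_add_mul_sphCoord s i)
    (abs_one_add_mul_sphCoord_le hs i)

lemma isDens_perturb (hf : IsDens f) (hc : IsCentered f) {s : ℝ} (hs : |s| ≤ 1 / 2)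
    (i : Fin 3) : IsDens (perturb f s i) where
  meas := hf.meas.mul (measurable_one_add_mul_sphCoord s i)
  nonneg x := mul_nonneg (hf.nonneg x)
    (by linarith [(abs_le.mp (abs_mul_sphCoord_le hs i x)).1])
  int := integrable_mul_bdd hf.int (measurable_one_add_mul_sphCoord s i)
    (abs_one_add_mul_sphCoord_le hs i)
  mass := by
    have e : ∀ x, perturb f s i x = f x + s * (f x * sphCoord i x) := by
      intro x; unfold perturb; ring
    simp only [e]
    rw [integral_add hf.int ((integrable_mul_sphCoord hf.int i).const_mul s), integral_const_mul,
      hc i, hf.mass]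
    simp
  ent := by
    simp only [perturb_mul_log f hs i]
    exact (hf.integrable_ent_mul hs i).add (hf.integrable_perturb_log hs i)
  mom := by
    refine (integrable_mul_bdd hf.mom (measurable_one_add_mul_sphCoord s i)
      (abs_one_add_mul_sphCoord_le hs i)).congr (Eventually.of_forall fun x => ?_)
    simp only [perturb]
    ring
  pot := by
    refine (integrable_mul_bdd hf.pot (C := 2 * 2)
      (((measurable_one_add_mul_sphCoord s i).comp measurable_fst).mul
        ((measurable_one_add_mul_sphCoord s i).comp measurable_snd)) fun p => ?_).congr
      (Eventually.of_forall fun p => ?_)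
    · simp only [Pi.mul_apply, Function.comp_apply, abs_mul]
      exact mul_le_mul (abs_one_add_mul_sphCoord_le hs i _) (abs_one_add_mul_sphCoord_le hs i _)
        (abs_nonneg _) zero_le_two
    · simp only [perturb, Pi.mul_apply, Function.comp_apply]
      ring

lemma integrable_log_mul_sphCoord (hf : IsDens f) (i : Fin 3) : Integrable fun p : E2 × E2 =>
    f p.1 * f p.2 * log ‖p.1 - p.2‖ * (sphCoord i p.1 * sphCoord i p.2) := by
  refine integrable_mul_bdd hf.pot (C := 1)
    (((measurable_sphCoord i).comp measurable_fst).mul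
      ((measurable_sphCoord i).comp measurable_snd)) fun p => ?_
  rw [abs_mul]
  exact mul_le_one₀ (abs_sphCoord_le i _) (abs_nonneg _) (abs_sphCoord_le i _)

lemma logEnergy_perturb_add (hf : IsDens f) (hc : IsCentered f) {s : ℝ} (hs : |s| ≤ 1 / 2)
    (i : Fin 3) : logEnergy (perturb f s i) + logEnergy (perturb f (-s) i) ≤
      2 * logEnergy f + (s ^ 2 * (∫ x, f x * sphCoord i x ^ 2) + 5 * s ^ 4) +
      4 * s ^ 2 * ∫ p : E2 × E2,
        f p.1 * f p.2 * log ‖p.1 - p.2‖ * (sphCoord i p.1 * sphCoord i p.2) := by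
  have hs' : |-s| ≤ 1 / 2 := by rwa [abs_neg]
  have hd := hf.isDens_perturb hc hs i
  have hd' := hf.isDens_perturb hc hs' i
  have hsq : Integrable fun x => f x * sphCoord i x ^ 2 :=
    integrable_mul_bdd hf.int ((measurable_sphCoord i).pow_const 2) (C := 1) fun x => by
      rw [abs_pow]
      exact pow_le_one₀ (abs_nonneg _) (abs_sphCoord_le i x)
  have hent : (∫ x, perturb f s i x * log (perturb f s i x)) +
      (∫ x, perturb f (-s) i x * log (perturb f (-s) i x)) ≤
      2 * (∫ x, f x * log (f x)) + (s ^ 2 * (∫ x, f x * sphCoord i x ^ 2) + 5 * s ^ 4) := by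
    have e : 2 * (∫ x, f x * log (f x)) + (s ^ 2 * (∫ x, f x * sphCoord i x ^ 2) + 5 * s ^ 4) =
        ∫ x, (2 * (f x * log (f x)) +
          (s ^ 2 * (f x * sphCoord i x ^ 2) + 5 * s ^ 4 * f x)) := by
      rw [integral_add (hf.ent.const_mul _)
          (by exact (hsq.const_mul _).add (hf.int.const_mul _)),
        integral_add (hsq.const_mul _) (hf.int.const_mul _), integral_const_mul,
        integral_const_mul, integral_const_mul, hf.mass, mul_one]
    rw [e, ← integral_add hd.ent hd'.ent]
    refine integral_mono (hd.ent.add hd'.ent)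
      ((hf.ent.const_mul _).add ((hsq.const_mul _).add (hf.int.const_mul _))) fun x => ?_
    simp only [perturb_mul_log f hs i, perturb_mul_log f hs' i]
    have h1 := one_add_mul_log_add_le (abs_mul_sphCoord_le hs i x)
    have h2 : (s * sphCoord i x) ^ 4 ≤ s ^ 4 := by
      have : sphCoord i x ^ 4 ≤ 1 := by
        rw [← Even.pow_abs (by decide : Even 4)]
        exact pow_le_one₀ (abs_nonneg _) (abs_sphCoord_le i x)
      rw [mul_pow]
      exact mul_le_of_le_one_right (by positivity) this
    have h3 := mul_le_mul_of_nonneg_left (h1.trans (by linarith :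
      (s * sphCoord i x) ^ 2 + 5 * (s * sphCoord i x) ^ 4 ≤
        (s * sphCoord i x) ^ 2 + 5 * s ^ 4)) (hf.nonneg x)
    rw [neg_mul, ← sub_eq_add_neg]
    linarith
  have hpot : bilin (perturb f s i) (fun x y => log ‖x - y‖) +
      bilin (perturb f (-s) i) (fun x y => log ‖x - y‖) =
      2 * bilin f (fun x y => log ‖x - y‖) + 2 * s ^ 2 * ∫ p : E2 × E2,
        f p.1 * f p.2 * log ‖p.1 - p.2‖ * (sphCoord i p.1 * sphCoord i p.2) := by
    unfold bilin
    rw [← integral_add hd.pot hd'.pot, ← integral_const_mul, ← integral_const_mul,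
      ← integral_add (hf.pot.const_mul _) ((hf.integrable_log_mul_sphCoord i).const_mul _)]
    refine integral_congr_ae (Eventually.of_forall fun p => ?_)
    simp only [perturb]
    ring
  unfold logEnergy
  linarith

lemma two_mul_integral_log_mul (hf : IsDens f) (hc : IsCentered f) :
    2 * ∑ i, ∫ p : E2 × E2,
      f p.1 * f p.2 * log ‖p.1 - p.2‖ * (sphCoord i p.1 * sphCoord i p.2) =
    bilin f (fun x y => log (chordSq x y)) -
      2 * bilin f (fun x y => chordSq x y * log (chordSq x y)) := by
  have i1 := hf.integrable_log_chordSq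
  have i2 := hf.integrable_chordSq_mul_log
  have hb : ∀ {h k : E2 → ℝ}, Integrable h → Integrable k →
      Integrable fun p : E2 × E2 => h p.1 * k p.2 * (1 - 2 * chordSq p.1 p.2) := fun hh hk =>
    integrable_mul_bdd (integrable_mul_mul hh hk) measurable_one_sub_two_mul_chordSq fun p =>
      abs_one_sub_two_mul_chordSq_le p.1 p.2
  have i3 := hb hf.mom hf.int
  have i4 := hb hf.int hf.mom
  have e3 := integral_mul_mul_one_sub_two_mul_chordSq hf.mom hf.int
  have e4 := integral_mul_mul_one_sub_two_mul_chordSq hf.int hf.mom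
  simp only [hc _, zero_mul, mul_zero, Finset.sum_const_zero] at e3 e4
  rw [← integral_finsetSum _ fun i _ => hf.integrable_log_mul_sphCoord i, ← integral_const_mul]
  have e : ∫ p : E2 × E2, (f p.1 * f p.2 * log (chordSq p.1 p.2) -
      2 * (f p.1 * f p.2 * (chordSq p.1 p.2 * log (chordSq p.1 p.2))) +
      f p.1 * log (1 + ‖p.1‖ ^ 2) * f p.2 * (1 - 2 * chordSq p.1 p.2) +
      f p.1 * (f p.2 * log (1 + ‖p.2‖ ^ 2)) * (1 - 2 * chordSq p.1 p.2)) =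
      bilin f (fun x y => log (chordSq x y)) -
      2 * bilin f (fun x y => chordSq x y * log (chordSq x y)) := by
    rw [integral_add (by exact (i1.sub (i2.const_mul _)).add i3) i4,
      integral_add (by exact i1.sub (i2.const_mul _)) i3,
      integral_sub i1 (i2.const_mul _), integral_const_mul, e3, e4]
    unfold bilin
    ring
  rw [← e]
  refine integral_congr_ae ?_
  filter_upwards [ae_prod_chordSq_mem] with p hp
  rw [← Finset.mul_sum, sum_sphCoord_mul, log_chordSq hp.1]
  ring

lemma six_mul_le (hf : IsDens f) (hc : IsCentered f) {c : ℝ}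
    (hlow : ∀ g, IsDens g → c ≤ logEnergy g) {s : ℝ} (hs : |s| ≤ 1 / 2) :
    6 * c ≤ 6 * logEnergy f + 2 * s ^ 2 * (logEnergy f + log π + 1) + 15 * s ^ 4 := by
  have hs' : |-s| ≤ 1 / 2 := by rwa [abs_neg]
  have h : ∀ i, 2 * c ≤ 2 * logEnergy f + (s ^ 2 * (∫ x, f x * sphCoord i x ^ 2) + 5 * s ^ 4) +
      4 * s ^ 2 * ∫ p : E2 × E2,
        f p.1 * f p.2 * log ‖p.1 - p.2‖ * (sphCoord i p.1 * sphCoord i p.2) := fun i => by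
    linarith [hlow _ (hf.isDens_perturb hc hs i), hlow _ (hf.isDens_perturb hc hs' i),
      hf.logEnergy_perturb_add hc hs i]
  have hsq : ∑ i, ∫ x, f x * sphCoord i x ^ 2 = 1 := by
    rw [← integral_finsetSum]
    · simp only [← Finset.mul_sum, sum_sphCoord_sq, mul_one, hf.mass]
    · intro i _
      refine integrable_mul_bdd hf.int ((measurable_sphCoord i).pow_const 2) (C := 1) fun x => ?_
      rw [abs_pow]
      exact pow_le_one₀ (abs_nonneg _) (abs_sphCoord_le i x)
  have hpot := hf.two_mul_integral_log_mul hc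
  have hq := neg_quarter_le_bilin hf.int hf.mass hc
  have hA := hf.bilin_log_chordSq_le
  have h0 := h 0
  have h1 := h 1
  have h2 := h 2
  rw [Fin.sum_univ_three] at hsq hpot
  have hle : 2 * s ^ 2 * (2 * (bilin f (fun x y => log (chordSq x y)) -
      2 * bilin f (fun x y => chordSq x y * log (chordSq x y))) + 1) ≤
      2 * s ^ 2 * (2 * (logEnergy f + log π) + 2) :=
    mul_le_mul_of_nonneg_left (by linarith) (by positivity)
  rw [← hpot] at hle
  linear_combination h0 + h1 + h2 + hle / 2 + s ^ 2 * hsq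

end IsDens

section Dilation

variable {V : Type*} [NormedAddCommGroup V] [NormedSpace ℝ V] [MeasurableSpace V] [BorelSpace V]
  [FiniteDimensional ℝ V] {m : Measure V} [m.IsAddHaarMeasure]

lemma integrable_comp_affine {g : V → ℝ} (hg : Integrable g m) (b : V) (τ : ℝ) :
    Integrable (fun x => g (b + exp τ • x)) m :=
  (hg.comp_add_left b).comp_smul (exp_pos τ).ne'

lemma integral_comp_affine (g : V → ℝ) (b : V) (τ : ℝ) :
    ∫ x, exp (Module.finrank ℝ V * τ) * g (b + exp τ • x) ∂m = ∫ x, g x ∂m := by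
  rw [integral_const_mul,
    Measure.integral_comp_smul_of_nonneg m (fun x => g (b + x)) (exp τ) (hR := (exp_pos τ).le),
    integral_add_left_eq_self g b, smul_eq_mul, ← mul_assoc, exp_nat_mul,
    mul_inv_cancel₀ (by positivity), one_mul]

end Dilation

/-- The action of the affine similarity `x ↦ b + exp τ • x` on densities of the plane. -/
def dilate (f : E2 → ℝ) (b : E2) (τ : ℝ) (x : E2) : ℝ := exp (2 * τ) * f (b + exp τ • x)

lemma integral_comp_affine_E2 (g : E2 → ℝ) (b : E2) (τ : ℝ) :
    ∫ x, exp (2 * τ) * g (b + exp τ • x) = ∫ x, g x := by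
  simpa using integral_comp_affine (m := volume) g b τ

instance : (volume : Measure (E2 × E2)).IsAddHaarMeasure :=
  inferInstanceAs ((volume : Measure E2).prod (volume : Measure E2)).IsAddHaarMeasure

lemma integral_comp_affine_prod (g : E2 × E2 → ℝ) (b : E2) (τ : ℝ) :
    ∫ p : E2 × E2, exp (2 * τ) * exp (2 * τ) * g (b + exp τ • p.1, b + exp τ • p.2) =
      ∫ p, g p := by
  have h := integral_comp_affine (m := (volume : Measure (E2 × E2))) g (b, b) τ
  rw [← h]
  congr 1
  ext p
  rw [← exp_add]
  simp only [Module.finrank_prod, finrank_euclideanSpace, Fintype.card_fin]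
  congr 2
  push_cast
  ring

lemma one_add_norm_sub_sq_le (x y : E2) :
    1 + ‖x - y‖ ^ 2 ≤ 2 * (1 + ‖x‖ ^ 2) * (1 + ‖y‖ ^ 2) := by
  have h2 : ‖x - y‖ ^ 2 ≤ (‖x‖ + ‖y‖) ^ 2 := by gcongr; exact norm_sub_le x y
  nlinarith [sq_nonneg (‖x‖ - ‖y‖), mul_nonneg (sq_nonneg ‖x‖) (sq_nonneg ‖y‖)]

lemma log_one_add_norm_sub_sq_le (x y : E2) :
    log (1 + ‖x - y‖ ^ 2) ≤ log 2 + log (1 + ‖x‖ ^ 2) + log (1 + ‖y‖ ^ 2) := by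
  rw [← log_mul (by norm_num) (by positivity), ← log_mul (by positivity) (by positivity)]
  exact log_le_log (by positivity) (one_add_norm_sub_sq_le x y)

lemma log_one_add_norm_sq_nonneg (x : E2) : 0 ≤ log (1 + ‖x‖ ^ 2) :=
  log_nonneg (by nlinarith [sq_nonneg ‖x‖])

/-- The Busemann-type kernel whose average is minimal at the conformal center. -/
def confKer (x : E2) (q : E2 × ℝ) : ℝ := log (exp (2 * q.2) + ‖x - q.1‖ ^ 2)

lemma two_mul_le_confKer (x : E2) (q : E2 × ℝ) : 2 * q.2 ≤ confKer x q := by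
  rw [confKer, le_log_iff_exp_le (by positivity)]
  nlinarith [sq_nonneg ‖x - q.1‖]

lemma confKer_le (x : E2) (q : E2 × ℝ) :
    confKer x q ≤ 2 * |q.2| + log (1 + ‖x - q.1‖ ^ 2) := by
  rw [confKer, ← log_exp (2 * |q.2|), ← log_mul (by positivity) (by positivity)]
  refine log_le_log (by positivity) ?_
  have h1 : exp (2 * q.2) ≤ exp (2 * |q.2|) := exp_le_exp.mpr (by linarith [le_abs_self q.2])
  have h2 : 1 ≤ exp (2 * |q.2|) := one_le_exp (by positivity)
  nlinarith [sq_nonneg ‖x - q.1‖]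

lemma le_confKer (x : E2) (q : E2 × ℝ) :
    log (1 + ‖x - q.1‖ ^ 2) - 2 * |q.2| ≤ confKer x q := by
  rw [confKer, ← log_exp (2 * |q.2|), ← log_div (by positivity) (by positivity)]
  refine log_le_log (by positivity) ?_
  rw [div_le_iff₀ (by positivity)]
  have h1 : exp (2 * q.2) * exp (2 * |q.2|) ≥ 1 := by
    rw [← exp_add]
    exact one_le_exp (by linarith [neg_abs_le q.2])
  have h2 : 1 ≤ exp (2 * |q.2|) := one_le_exp (by positivity)
  nlinarith [sq_nonneg ‖x - q.1‖]

lemma abs_confKer_le (x : E2) (q : E2 × ℝ) :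
    |confKer x q| ≤ 2 * |q.2| + log 2 + log (1 + ‖q.1‖ ^ 2) + log (1 + ‖x‖ ^ 2) := by
  have h1 := two_mul_le_confKer x q
  have h2 := confKer_le x q
  have h3 := log_one_add_norm_sub_sq_le x q.1
  have h4 := log_one_add_norm_sq_nonneg x
  have h5 := log_one_add_norm_sq_nonneg q.1
  have h6 : 0 < log 2 := log_pos (by norm_num)
  rw [abs_le]
  constructor <;> linarith [neg_abs_le q.2]

lemma continuous_confKer (x : E2) : Continuous (confKer x) := by
  unfold confKer
  refine Continuous.log (by fun_prop) fun q => by positivity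

lemma measurable_confKer (q : E2 × ℝ) : Measurable fun x => confKer x q := by
  unfold confKer
  fun_prop

lemma confKer_affine (x b : E2) (τ : ℝ) :
    log (1 + ‖x‖ ^ 2) = confKer (b + exp τ • x) (b, τ) - 2 * τ := by
  have h : exp (2 * τ) + ‖b + exp τ • x - b‖ ^ 2 = exp (2 * τ) * (1 + ‖x‖ ^ 2) := by
    rw [add_sub_cancel_left, norm_smul, norm_of_nonneg (exp_pos τ).le, mul_pow, two_mul, exp_add]
    ring
  rw [confKer]
  simp only
  rw [h, log_mul (by positivity) (by positivity), log_exp]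
  ring

lemma ae_norm_sub_ne_zero : ∀ᵐ p : E2 × E2, ‖p.1 - p.2‖ ≠ 0 := by
  filter_upwards [ae_prod_chordSq_mem] with p hp h
  simp [chordSq, h] at hp

namespace IsDens

variable {f : E2 → ℝ}

lemma integrable_mul_confKer (hf : IsDens f) (q : E2 × ℝ) :
    Integrable fun x => f x * confKer x q := by
  refine Integrable.mono' ((hf.int.mul_const (2 * |q.2| + log 2 + log (1 + ‖q.1‖ ^ 2))).add hf.mom)
    (hf.meas.mul (measurable_confKer q)).aestronglyMeasurable (Eventually.of_forall fun x => ?_)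
  rw [norm_mul, norm_of_nonneg (hf.nonneg x), norm_eq_abs]
  simp only [Pi.add_apply, ← mul_add]
  exact mul_le_mul_of_nonneg_left (abs_confKer_le x q) (hf.nonneg x)

lemma dilate_mul_log (f : E2 → ℝ) (b : E2) (τ : ℝ) (x : E2) :
    dilate f b τ x * log (dilate f b τ x) = exp (2 * τ) *
      (f (b + exp τ • x) * log (f (b + exp τ • x)) + 2 * τ * f (b + exp τ • x)) := by
  unfold dilate
  by_cases h : f (b + exp τ • x) = 0
  · simp [h]
  · rw [log_mul (exp_pos _).ne' h, log_exp]
    ring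

lemma ae_dilate_mul_mul (f : E2 → ℝ) (b : E2) (τ : ℝ) : ∀ᵐ p : E2 × E2,
    dilate f b τ p.1 * dilate f b τ p.2 * log ‖p.1 - p.2‖ = exp (2 * τ) * exp (2 * τ) *
      (f (b + exp τ • p.1) * f (b + exp τ • p.2) *
          log ‖b + exp τ • p.1 - (b + exp τ • p.2)‖ -
        τ * (f (b + exp τ • p.1) * f (b + exp τ • p.2))) := by
  filter_upwards [ae_norm_sub_ne_zero] with p hp
  rw [add_sub_add_left_eq_sub, ← smul_sub, norm_smul, norm_of_nonneg (exp_pos τ).le,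
    log_mul (exp_pos _).ne' hp, log_exp, dilate, dilate]
  ring

lemma integrable_pot_sub (hf : IsDens f) (τ : ℝ) : Integrable fun p : E2 × E2 =>
    f p.1 * f p.2 * log ‖p.1 - p.2‖ - τ * (f p.1 * f p.2) :=
  hf.pot.sub ((integrable_mul_mul hf.int hf.int).const_mul τ)

lemma dilate (hf : IsDens f) (b : E2) (τ : ℝ) : IsDens (dilate f b τ) where
  meas := by
    unfold _root_.dilate
    exact (hf.meas.comp (by fun_prop)).const_mul _
  nonneg x := mul_nonneg (exp_pos _).le (hf.nonneg _)
  int := (integrable_comp_affine hf.int b τ).const_mul _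
  mass := by
    unfold _root_.dilate
    rw [integral_comp_affine_E2, hf.mass]
  ent := by
    simp only [dilate_mul_log]
    exact (integrable_comp_affine (hf.ent.add (hf.int.const_mul (2 * τ))) b τ).const_mul _
  mom := by
    simp only [confKer_affine _ b τ, _root_.dilate, mul_assoc]
    refine (integrable_comp_affine (g := fun y => f y * (confKer y (b, τ) - 2 * τ))
      ?_ b τ).const_mul _
    simp only [mul_sub]
    exact (hf.integrable_mul_confKer _).sub (hf.int.mul_const _)
  pot := by
    refine Integrable.congr ?_ (EventuallyEq.symm (ae_dilate_mul_mul f b τ))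
    exact (integrable_comp_affine (hf.integrable_pot_sub τ) (b, b) τ).const_mul _

lemma logEnergy_dilate (hf : IsDens f) (b : E2) (τ : ℝ) :
    logEnergy (_root_.dilate f b τ) = logEnergy f := by
  have h1 : ∫ x, _root_.dilate f b τ x * log (_root_.dilate f b τ x) =
      (∫ x, f x * log (f x)) + 2 * τ := by
    simp only [dilate_mul_log]
    rw [integral_comp_affine_E2 (fun y => f y * log (f y) + 2 * τ * f y),
      integral_add hf.ent (hf.int.const_mul _), integral_const_mul, hf.mass, mul_one]
  have h2 : bilin (_root_.dilate f b τ) (fun x y => log ‖x - y‖) =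
      bilin f (fun x y => log ‖x - y‖) - τ := by
    unfold bilin
    rw [integral_congr_ae (ae_dilate_mul_mul f b τ),
      integral_comp_affine_prod
        (fun p => f p.1 * f p.2 * log ‖p.1 - p.2‖ - τ * (f p.1 * f p.2)),
      integral_sub hf.pot ((integrable_mul_mul hf.int hf.int).const_mul τ), integral_const_mul,
      Measure.volume_eq_prod, integral_prod_mul, hf.mass]
    ring
  rw [logEnergy, logEnergy, h1, h2]
  ring

end IsDens

namespace IsDens

variable {f : E2 → ℝ}

lemma neg_le_integral_mul_confKer (hf : IsDens f) (q : E2 × ℝ) :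
    -(2 * (relEntropy f + 2)) ≤ ∫ x, f x * confKer x q := by
  have hK : Measurable fun u : ℝ => u ^ (-(1 / 2) : ℝ) := by fun_prop
  have i1 := hf.integrable_relEntropy
  have i2 := integrable_mu2_mul_chordSq q.1 hK integrableOn_rpow_Ioo
  have e2 := integral_mu2_mul_chordSq q.1 hK
  rw [integral_rpow_Ioo] at e2
  have h : ∫ x, (-2) * (f x * (log (f x) - log (mu2 x)) +
      mu2 x * chordSq q.1 x ^ (-(1 / 2) : ℝ)) ≤ ∫ x, f x * confKer x q := by
    refine integral_mono_ae ((i1.add i2).const_mul _) (hf.integrable_mul_confKer q) ?_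
    filter_upwards [ae_chordSq_mem q.1] with x hx
    have hy := mul_le_mul_log_sub_add_exp (hf.nonneg x)
      (log (mu2 x) + log (chordSq q.1 x) * (-(1 / 2)))
    rw [exp_add, exp_log (mu2_pos x), ← rpow_def_of_pos hx.1] at hy
    have hle : log (chordSq q.1 x) ≤ confKer x q := by
      refine log_le_log hx.1 ?_
      rw [chordSq, norm_sub_rev]
      have h1 : ‖x - q.1‖ ^ 2 / ((1 + ‖q.1‖ ^ 2) * (1 + ‖x‖ ^ 2)) ≤ ‖x - q.1‖ ^ 2 := by
        refine div_le_self (by positivity) ?_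
        nlinarith [mul_nonneg (sq_nonneg ‖q.1‖) (sq_nonneg ‖x‖), sq_nonneg ‖q.1‖, sq_nonneg ‖x‖]
      linarith [exp_pos (2 * q.2)]
    have := mul_le_mul_of_nonneg_left hle (hf.nonneg x)
    have := hf.nonneg x
    linarith
  rw [integral_const_mul, integral_add i1 i2, hf.integral_relEntropy, e2] at h
  linarith

lemma two_mul_le_integral_mul_confKer (hf : IsDens f) (q : E2 × ℝ) :
    2 * q.2 ≤ ∫ x, f x * confKer x q := by
  have h : ∫ x, f x * (2 * q.2) ≤ ∫ x, f x * confKer x q :=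
    integral_mono (hf.int.mul_const _) (hf.integrable_mul_confKer q) fun x =>
      mul_le_mul_of_nonneg_left (two_mul_le_confKer x q) (hf.nonneg x)
  rwa [integral_mul_const, hf.mass, one_mul] at h

lemma log_le_integral_mul_confKer (hf : IsDens f) (q : E2 × ℝ) :
    log (1 + ‖q.1‖ ^ 2) - log 2 - 2 * |q.2| - ∫ x, f x * log (1 + ‖x‖ ^ 2) ≤
      ∫ x, f x * confKer x q := by
  have h : ∫ x, (f x * (log (1 + ‖q.1‖ ^ 2) - log 2 - 2 * |q.2|) - f x * log (1 + ‖x‖ ^ 2)) ≤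
      ∫ x, f x * confKer x q := by
    refine integral_mono ((hf.int.mul_const _).sub hf.mom) (hf.integrable_mul_confKer q) fun x => ?_
    have h1 := le_confKer x q
    have h2 := log_one_add_norm_sub_sq_le x (x - q.1)
    rw [sub_sub_cancel] at h2
    have h3 : log (1 + ‖q.1‖ ^ 2) - log 2 - 2 * |q.2| - log (1 + ‖x‖ ^ 2) ≤ confKer x q := by
      linarith
    have := mul_le_mul_of_nonneg_left h3 (hf.nonneg x)
    simp only
    linarith
  rwa [integral_sub (hf.int.mul_const _) hf.mom, integral_mul_const, hf.mass, one_mul] at h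

lemma continuous_integral_mul_confKer (hf : IsDens f) :
    Continuous fun q => ∫ x, f x * confKer x q := by
  rw [continuous_iff_continuousAt]
  intro q
  set B : E2 × ℝ → ℝ := fun q => 2 * |q.2| + log 2 + log (1 + ‖q.1‖ ^ 2) with hB
  have hBc : Continuous B := by
    refine Continuous.add (by fun_prop) (Continuous.log (by fun_prop) fun q => by positivity)
  refine continuousAt_of_dominated (bound := fun x => f x * (B q + 1) + f x * log (1 + ‖x‖ ^ 2))
    (Eventually.of_forall fun q => (hf.integrable_mul_confKer q).aestronglyMeasurable) ?_
    ((hf.int.mul_const _).add hf.mom)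
    (Eventually.of_forall fun x => ((continuous_confKer x).const_mul _).continuousAt)
  filter_upwards [hBc.continuousAt.eventually (gt_mem_nhds (lt_add_one (B q)))] with r hr
  refine Eventually.of_forall fun x => ?_
  rw [norm_mul, norm_of_nonneg (hf.nonneg x), norm_eq_abs, ← mul_add]
  refine mul_le_mul_of_nonneg_left ((abs_confKer_le x r).trans ?_) (hf.nonneg x)
  simp only [hB] at hr ⊢
  linarith

/-- The conformal center exists. -/
lemma exists_forall_le (hf : IsDens f) : ∃ q : E2 × ℝ, ∀ r : E2 × ℝ,
    (∫ x, f x * confKer x q) - q.2 ≤ (∫ x, f x * confKer x r) - r.2 := by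
  set Φ : E2 × ℝ → ℝ := fun q => (∫ x, f x * confKer x q) - q.2 with hΦ
  have hc : Continuous Φ := hf.continuous_integral_mul_confKer.sub continuous_snd
  set T : ℝ := |Φ 0| + 2 * (relEntropy f + 2) with hT
  have hT0 : 0 ≤ T := by linarith [abs_nonneg (Φ 0), hf.relEntropy_nonneg]
  set m : ℝ := ∫ x, f x * log (1 + ‖x‖ ^ 2) with hm
  set R : ℝ := exp (|Φ 0| + 3 * T + log 2 + |m|) with hR
  have hR1 : 1 ≤ R := one_le_exp (by positivity)
  have hK : IsCompact (Metric.closedBall (0 : E2) R ×ˢ Set.Icc (-T) T) :=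
    (isCompact_closedBall 0 R).prod isCompact_Icc
  obtain ⟨q, hq, hmin⟩ := hK.exists_isMinOn ⟨0, by simp [hT0]; linarith⟩ hc.continuousOn
  have h0 : Φ q ≤ Φ 0 := hmin (by simp [hT0]; linarith)
  refine ⟨q, fun r => ?_⟩
  change Φ q ≤ Φ r
  by_cases hr : r ∈ Metric.closedBall (0 : E2) R ×ˢ Set.Icc (-T) T
  · exact hmin hr
  refine h0.trans ?_
  have h1 := hf.neg_le_integral_mul_confKer r
  have h2 := hf.two_mul_le_integral_mul_confKer r
  have h3 := hf.log_le_integral_mul_confKer r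
  have hrel := hf.relEntropy_nonneg
  have habs := le_abs_self (Φ 0)
  have hΦr : Φ r = (∫ x, f x * confKer x r) - r.2 := rfl
  by_cases hu : T < r.2
  · linarith
  by_cases hl : r.2 < -T
  · linarith
  have hrT : |r.2| ≤ T := abs_le.mpr ⟨by linarith, by linarith⟩
  have hrR : R < ‖r.1‖ := by
    by_contra! hcon
    exact hr ⟨by simpa using hcon, by linarith, by linarith⟩
  have h4 : |Φ 0| + 3 * T + log 2 + |m| ≤ log (1 + ‖r.1‖ ^ 2) := by
    rw [le_log_iff_exp_le (by positivity)]
    change R ≤ _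
    nlinarith
  linarith [le_abs_self m, le_abs_self r.2]

lemma hasDerivAt_integral_mul_confKer_snd (hf : IsDens f) (b : E2) (τ : ℝ) :
    HasDerivAt (fun t => ∫ x, f x * confKer x (b, t))
      (∫ x, f x * (2 * exp (2 * τ) / (exp (2 * τ) + ‖x - b‖ ^ 2))) τ := by
  refine (hasDerivAt_integral_of_dominated_loc_of_deriv_le (s := Set.univ)
    (F := fun t x => f x * confKer x (b, t))
    (F' := fun t x => f x * (2 * exp (2 * t) / (exp (2 * t) + ‖x - b‖ ^ 2)))
    (bound := fun x => f x * 2) univ_mem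
    (Eventually.of_forall fun t => (hf.integrable_mul_confKer _).aestronglyMeasurable)
    (hf.integrable_mul_confKer _) ?_ ?_ (hf.int.mul_const _) ?_).2
  · exact (hf.meas.mul (by fun_prop)).aestronglyMeasurable
  · refine Eventually.of_forall fun x t _ => ?_
    rw [norm_mul, norm_of_nonneg (hf.nonneg x), norm_of_nonneg (by positivity)]
    refine mul_le_mul_of_nonneg_left ?_ (hf.nonneg x)
    rw [div_le_iff₀ (by positivity)]
    nlinarith [sq_nonneg ‖x - b‖]
  · refine Eventually.of_forall fun x t _ => ?_
    have h1 : HasDerivAt (fun t => exp (2 * t) + ‖x - b‖ ^ 2) (2 * exp (2 * t)) t :=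
      ((((hasDerivAt_id t).const_mul 2).exp).add_const _).congr_deriv (by simp; ring)
    exact (h1.log (by positivity)).const_mul (f x)

lemma hasDerivAt_integral_mul_confKer_fst (hf : IsDens f) (b : E2) (τ : ℝ) (i : Fin 2) :
    HasDerivAt (fun t : ℝ => ∫ x, f x * confKer x (b + t • EuclideanSpace.single i (1 : ℝ), τ))
      (∫ x, f x * (-2 * (x - b) i / (exp (2 * τ) + ‖x - b‖ ^ 2))) 0 := by
  set v : E2 := EuclideanSpace.single i (1 : ℝ) with hv
  have hin : ∀ w : E2, inner ℝ w v = w i := fun w => by simp [hv, EuclideanSpace.inner_single_right]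
  have key := (hasDerivAt_integral_of_dominated_loc_of_deriv_le (μ := volume) (s := Set.univ)
    (x₀ := (0 : ℝ))
    (F := fun t x => f x * confKer x (b + t • v, τ))
    (F' := fun t x => f x * (-2 * (x - (b + t • v)) i / (exp (2 * τ) + ‖x - (b + t • v)‖ ^ 2)))
    (bound := fun x => f x * exp (-τ)) univ_mem
    (Eventually.of_forall fun t => (hf.integrable_mul_confKer _).aestronglyMeasurable)
    (hf.integrable_mul_confKer _) ?_ ?_ (hf.int.mul_const _) ?_).2
  · simpa using key
  · exact (hf.meas.mul (by fun_prop)).aestronglyMeasurable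
  · refine Eventually.of_forall fun x t _ => ?_
    rw [norm_mul, norm_of_nonneg (hf.nonneg x)]
    refine mul_le_mul_of_nonneg_left ?_ (hf.nonneg x)
    set w := x - (b + t • v)
    have hw : |w i| ≤ ‖w‖ := by simpa using PiLp.norm_apply_le w i
    rw [norm_div, norm_of_nonneg (by positivity : 0 ≤ exp (2 * τ) + ‖w‖ ^ 2),
      div_le_iff₀ (by positivity), norm_mul, norm_eq_abs (w i)]
    have e1 : exp (2 * τ) = exp τ ^ 2 := by rw [two_mul, exp_add, sq]
    have e2 : exp (-τ) * exp τ = 1 := by rw [← exp_add]; simp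
    have h5 : exp (-τ) * (exp (2 * τ) + ‖w‖ ^ 2) - 2 * ‖w‖ =
        exp (-τ) * (exp τ - ‖w‖) ^ 2 := by
      rw [e1]
      linear_combination (2 * ‖w‖) * e2
    have h6 : 0 ≤ exp (-τ) * (exp τ - ‖w‖) ^ 2 := by positivity
    norm_num
    linarith
  · refine Eventually.of_forall fun x t _ => ?_
    have h0 : HasDerivAt (fun t : ℝ => x - (b + t • v)) (-v) t := by
      have := (((hasDerivAt_id t).smul_const v).const_add b).const_sub x
      simpa using this
    have h1 : HasDerivAt (fun t : ℝ => exp (2 * τ) + ‖x - (b + t • v)‖ ^ 2)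
        (-2 * (x - (b + t • v)) i) t := by
      refine ((h0.norm_sq).const_add (exp (2 * τ))).congr_deriv ?_
      rw [inner_neg_right, hin]
      ring
    exact (h1.log (by positivity)).const_mul (f x)

lemma exists_isCentered (hf : IsDens f) :
    ∃ g, IsDens g ∧ IsCentered g ∧ logEnergy g = logEnergy f := by
  obtain ⟨⟨b, τ⟩, hq⟩ := hf.exists_forall_le
  refine ⟨_root_.dilate f b τ, hf.dilate b τ, ?_, hf.logEnergy_dilate b τ⟩
  have hS : ∀ y : E2, exp (2 * τ) + ‖y - b‖ ^ 2 ≠ 0 := fun y => by positivity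
  have h2 : ∫ x, f x * (2 * exp (2 * τ) / (exp (2 * τ) + ‖x - b‖ ^ 2)) = 1 := by
    have hd := (hf.hasDerivAt_integral_mul_confKer_snd b τ).sub (hasDerivAt_id τ)
    have hmin : IsLocalMin ((fun t => ∫ x, f x * confKer x (b, t)) - id) τ :=
      Eventually.of_forall fun t => hq (b, t)
    have := hmin.hasDerivAt_eq_zero hd
    linarith
  have h1 : ∀ i, ∫ x, f x * (-2 * (x - b) i / (exp (2 * τ) + ‖x - b‖ ^ 2)) = 0 := by
    intro i
    have hmin : IsLocalMin
        (fun t : ℝ => ∫ x, f x * confKer x (b + t • EuclideanSpace.single i (1 : ℝ), τ)) 0 :=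
      Eventually.of_forall fun t => by
        have := hq (b + t • EuclideanSpace.single i (1 : ℝ), τ)
        simpa using this
    exact hmin.hasDerivAt_eq_zero (hf.hasDerivAt_integral_mul_confKer_fst b τ i)
  have hbar : ∀ j, ∫ x, _root_.dilate f b τ x * sphCoord j x =
      ∫ y, f y * sphCoord j (exp (-τ) • (y - b)) := by
    intro j
    rw [← integral_comp_affine_E2 (fun y => f y * sphCoord j (exp (-τ) • (y - b))) b τ]
    congr 1
    ext x
    rw [add_sub_cancel_left, smul_smul, ← exp_add, neg_add_cancel, exp_zero, one_smul,
      _root_.dilate, mul_assoc]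
  have hn : ∀ y : E2, ‖exp (-τ) • (y - b)‖ ^ 2 = ‖y - b‖ ^ 2 / exp (2 * τ) := by
    intro y
    rw [norm_smul, norm_of_nonneg (exp_pos _).le, mul_pow, two_mul, exp_add, exp_neg]
    field_simp
  have hi : ∀ (y : E2) (i : Fin 2),
      2 * (exp (-τ) • (y - b)) i / (1 + ‖exp (-τ) • (y - b)‖ ^ 2) =
        (-exp τ) * (-2 * (y - b) i / (exp (2 * τ) + ‖y - b‖ ^ 2)) := by
    intro y i
    have := hS y
    have e1 : exp (2 * τ) = exp τ ^ 2 := by rw [two_mul, exp_add, sq]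
    rw [hn, PiLp.smul_apply, smul_eq_mul, exp_neg]
    rw [e1] at this ⊢
    field_simp
  have hvec : ∀ i : Fin 2, ∫ y, f y *
      (2 * (exp (-τ) • (y - b)) i / (1 + ‖exp (-τ) • (y - b)‖ ^ 2)) = 0 := by
    intro i
    simp only [hi, mul_left_comm (f _)]
    rw [integral_const_mul, h1, mul_zero]
  intro j
  rw [hbar]
  fin_cases j
  · exact hvec 0
  · exact hvec 1
  · have e : ∀ y, f y * sphCoord 2 (exp (-τ) • (y - b)) =
        f y * (2 * exp (2 * τ) / (exp (2 * τ) + ‖y - b‖ ^ 2)) - f y := by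
      intro y
      have := hS y
      simp only [sphCoord, Matrix.cons_val]
      rw [hn]
      field_simp
      ring
    change ∫ y, f y * sphCoord 2 (exp (-τ) • (y - b)) = 0
    simp only [e]
    rw [integral_sub (integrable_mul_bdd hf.int (by fun_prop) (C := 2) fun y => ?_) hf.int, h2,
      hf.mass, sub_self]
    rw [abs_of_nonneg (by positivity), div_le_iff₀ (by positivity)]
    nlinarith [sq_nonneg ‖y - b‖]

/-- The sharp logarithmic Hardy–Littlewood–Sobolev inequality in the plane. -/
theorem neg_one_sub_log_pi_le_logEnergy (hf : IsDens f) : -1 - log π ≤ logEnergy f := by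
  by_contra! hlt
  set a : ℝ := -1 - log π - logEnergy f with ha
  have ha0 : 0 < a := by linarith
  set S : Set ℝ := {e | ∃ g, IsDens g ∧ logEnergy g = e} with hS
  have hbdd : BddBelow S := by
    refine ⟨-5 - log π, ?_⟩
    rintro _ ⟨g, hg, rfl⟩
    obtain ⟨g', hg', hc, he⟩ := hg.exists_isCentered
    rw [← he]
    exact hg'.logEnergy_ge_of_centered hc
  have hlow : ∀ g, IsDens g → sInf S ≤ logEnergy g := fun g hg => csInf_le hbdd ⟨g, hg, rfl⟩
  set s : ℝ := min (1 / 2) (a / 30) with hs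
  have hs0 : 0 < s := lt_min (by norm_num) (by positivity)
  have hs1 : s ≤ 1 / 2 := min_le_left _ _
  have hs2 : s ^ 2 ≤ a / 60 := by
    have := min_le_right (1 / 2) (a / 30)
    rw [← hs] at this
    nlinarith
  have hδ : 0 < min (a / 2) (a * s ^ 2 / 20) := by positivity
  obtain ⟨_, ⟨g, hg, rfl⟩, hgl⟩ := exists_lt_of_csInf_lt (s := S) ⟨_, f, hf, rfl⟩
    (lt_add_of_pos_right (sInf S) hδ)
  obtain ⟨g', hg', hc, he⟩ := hg.exists_isCentered
  have h6 := hg'.six_mul_le hc hlow (s := s) (by rw [abs_of_pos hs0]; exact hs1)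
  rw [he] at h6
  have hf' := hlow f hf
  have hm1 := min_le_left (a / 2) (a * s ^ 2 / 20)
  have hm2 := min_le_right (a / 2) (a * s ^ 2 / 20)
  have h7 : logEnergy g + log π + 1 ≤ -(a / 2) := by linarith
  have h8 := mul_le_mul_of_nonneg_left h7 (by positivity : 0 ≤ 2 * s ^ 2)
  have h9 := mul_le_mul_of_nonneg_left hs2 (by positivity : 0 ≤ 15 * s ^ 2)
  have h10 : 0 < a * s ^ 2 := by positivity
  nlinarith

end IsDens

lemma integrable_mu2_mul_log : Integrable fun x => mu2 x * log (1 + ‖x‖ ^ 2) := by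
  have h0 : IntegrableOn (fun u : ℝ => log (1 - u)) (Set.Ioo 0 1) := by
    have := (intervalIntegral.intervalIntegrable_log' (a := 0) (b := 1)).comp_sub_left 1
    rw [sub_zero, sub_self] at this
    exact (intervalIntegrable_iff_integrableOn_Ioo_of_le zero_le_one).mp this.symm
  refine (integrable_mu2_mul_chordSq 0 (by fun_prop) h0).neg.congr
    (Eventually.of_forall fun x => ?_)
  have hx : 1 + ‖x‖ ^ 2 ≠ 0 := by positivity
  have e : 1 - chordSq 0 x = (1 + ‖x‖ ^ 2)⁻¹ := by
    simp only [chordSq, zero_sub, norm_neg, norm_zero]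
    field_simp
    ring
  simp only [Pi.neg_apply, e, log_inv]
  ring

namespace IsDens

variable {f : E2 → ℝ}

lemma bilin_sub_mu2_log_norm (hf : IsDens f) :
    2 * bilin (fun x => f x - mu2 x) (fun x y => log ‖x - y‖) =
      bilin f (fun x y => log (chordSq x y)) + 1 := by
  have key := bilin_sub_mu2 hf.int hf.mass measurable_log integrableOn_log_Ioo
    hf.integrable_log_chordSq
  rw [integral_log_Ioo, sub_neg_eq_add] at key
  rw [← key]
  set h : E2 → ℝ := fun x => f x - mu2 x with hh
  have hi : Integrable h := hf.int.sub integrable_mu2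
  have h0 : ∫ x, h x = 0 := by
    rw [hh, integral_sub hf.int integrable_mu2, hf.mass, integral_mu2, sub_self]
  have hL : Integrable fun x => h x * log (1 + ‖x‖ ^ 2) :=
    (hf.mom.sub integrable_mu2_mul_log).congr (Eventually.of_forall fun x => by
      simp only [hh, Pi.sub_apply]; ring)
  have ic : Integrable fun p : E2 × E2 => h p.1 * h p.2 * log (chordSq p.1 p.2) := by
    refine (((hf.integrable_log_chordSq.sub (integrable_mul_mu2_mul_chordSq hf.int measurable_log
      integrableOn_log_Ioo)).sub (integrable_mu2_mul_mul_chordSq hf.int measurable_log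
      integrableOn_log_Ioo)).add (integrable_mul_mu2_mul_chordSq integrable_mu2 measurable_log
      integrableOn_log_Ioo)).congr (Eventually.of_forall fun p => ?_)
    simp only [hh, Pi.add_apply, Pi.sub_apply]
    ring
  have i1 := integrable_mul_mul hL hi
  have i2 := integrable_mul_mul hi hL
  have e1 := integral_prod_mul (μ := volume) (ν := volume) (fun x => h x * log (1 + ‖x‖ ^ 2)) h
  have e2 := integral_prod_mul (μ := volume) (ν := volume) h (fun x => h x * log (1 + ‖x‖ ^ 2))
  rw [h0, ← Measure.volume_eq_prod] at e1 e2
  have e : ∀ᵐ p : E2 × E2, 2 * (h p.1 * h p.2 * log ‖p.1 - p.2‖) =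
      h p.1 * h p.2 * log (chordSq p.1 p.2) + h p.1 * log (1 + ‖p.1‖ ^ 2) * h p.2 +
        h p.1 * (h p.2 * log (1 + ‖p.2‖ ^ 2)) := by
    filter_upwards [ae_log_chordSq h] with p hp
    rw [hp]
    ring
  unfold bilin
  rw [← integral_const_mul, integral_congr_ae e, integral_add (by exact ic.add i1) i2,
    integral_add ic i1, e1, e2]
  ring

/-- The sharp inequality in relative entropy form. -/
theorem neg_two_mul_bilin_le_relEntropy (hf : IsDens f) :
    -2 * bilin (fun x => f x - mu2 x) (fun x y => log ‖x - y‖) ≤ relEntropy f := by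
  linarith [hf.neg_one_sub_log_pi_le_logEnergy, hf.logEnergy_eq, hf.bilin_sub_mu2_log_norm]

end IsDens

/-- The normalized everywhere nonnegative representative of an admissible function. -/
def unitMass (f : E2 → ℝ) (M : ℝ) (x : E2) : ℝ := max (f x) 0 / M

lemma Admissible.ae_eq_unitMass {f : E2 → ℝ} (hf : Admissible f) {M : ℝ} (hM : 0 < M) :
    ∀ᵐ x, f x = M * unitMass f M x := by
  filter_upwards [hf.2.1] with x hx
  rw [unitMass, max_eq_left hx, mul_div_cancel₀ _ hM.ne']

lemma Admissible.isDens_unitMass {f : E2 → ℝ} (hf : Admissible f) {M : ℝ} (hM : 0 < M)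
    (hmass : ∫ x, f x = M) : IsDens (unitMass f M) := by
  obtain ⟨hmeas, hnn, hinteg, hent, hV, hpot⟩ := id hf
  have hae : ∀ᵐ x, unitMass f M x = M⁻¹ * f x := by
    filter_upwards [hf.ae_eq_unitMass hM] with x hx
    rw [hx, inv_mul_cancel_left₀ hM.ne']
  have hgm : Measurable (unitMass f M) := by
    unfold unitMass
    fun_prop
  have hgn : ∀ x, 0 ≤ unitMass f M x := fun x => div_nonneg (le_max_right _ _) hM.le
  have hgi : Integrable (unitMass f M) := (hinteg.const_mul _).congr (EventuallyEq.symm hae)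
  have hlog : Integrable fun x => f x * log (f x) := by
    refine hent.mono (hmeas.mul hmeas.log).aestronglyMeasurable (Eventually.of_forall fun x => ?_)
    simp
  refine ⟨hgm, hgn, hgi, ?_, ?_, ?_, ?_⟩
  · rw [integral_congr_ae hae, integral_const_mul, hmass, inv_mul_cancel₀ hM.ne']
  · refine ((hlog.sub (hinteg.mul_const (log M))).const_mul M⁻¹).congr ?_
    filter_upwards [hae] with x hx
    rw [hx, Pi.sub_apply]
    by_cases h0 : f x = 0
    · simp [h0]
    · rw [log_mul (inv_ne_zero hM.ne') h0, log_inv]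
      ring
  · refine ((hV.sub (hinteg.const_mul (log π))).const_mul (M⁻¹ / 2)).congr ?_
    filter_upwards [hae] with x hx
    rw [hx, Pi.sub_apply, Vpot]
    ring
  · refine (hpot.const_mul (M⁻¹ * M⁻¹)).mono (by fun_prop) ?_
    filter_upwards [Measure.quasiMeasurePreserving_fst.ae hae,
      Measure.quasiMeasurePreserving_snd.ae hae] with p h1 h2
    rw [h1, h2]
    simp only [norm_mul, norm_eq_abs, abs_abs]
    exact le_of_eq (by ring)

/-- Relative-entropy form of the generalized logarithmic HLS inequality for α ∈ [0,1). -/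
theorem log_HLS_relative_entropy_form (α M : ℝ) (hα0 : 0 ≤ α) (hα1 : α < 1)
    (hM : 0 < M) (f : E2 → ℝ) (hf : Admissible f) (hmass : ∫ x, f x = M) :
    (∫ x, f x * Real.log (f x / (M * mu2 x)))
      ≥ -(2 / M) * (1 - α) *
          ∫ p : E2 × E2,
            (f p.1 - M * mu2 p.1) * (f p.2 - M * mu2 p.2) * Real.log ‖p.1 - p.2‖ := by
  have hg := hf.isDens_unitMass hM hmass
  have hae := hf.ae_eq_unitMass hM
  have hL : ∫ x, f x * log (f x / (M * mu2 x)) = M * relEntropy (unitMass f M) := by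
    rw [← hg.integral_relEntropy, ← integral_const_mul]
    refine integral_congr_ae ?_
    filter_upwards [hae] with x hx
    rw [hx, mul_div_mul_left _ _ hM.ne', mul_assoc]
    by_cases h0 : unitMass f M x = 0
    · simp [h0]
    · rw [log_div h0 (mu2_pos x).ne']
  have hR : ∫ p : E2 × E2,
      (f p.1 - M * mu2 p.1) * (f p.2 - M * mu2 p.2) * log ‖p.1 - p.2‖ =
      M ^ 2 * bilin (fun x => unitMass f M x - mu2 x) fun x y => log ‖x - y‖ := by
    rw [bilin, ← integral_const_mul]
    refine integral_congr_ae ?_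
    filter_upwards [Measure.quasiMeasurePreserving_fst.ae hae,
      Measure.quasiMeasurePreserving_snd.ae hae] with p h1 h2
    rw [h1, h2]
    ring
  rw [hL, hR, ge_iff_le]
  set B := bilin (fun x => unitMass f M x - mu2 x) fun x y => log ‖x - y‖
  have h1 : -2 * B ≤ relEntropy (unitMass f M) := hg.neg_two_mul_bilin_le_relEntropy
  have h2 : (1 - α) * (-2 * B) ≤ relEntropy (unitMass f M) := by
    have := mul_le_mul_of_nonneg_left h1 (by linarith : 0 ≤ 1 - α)
    nlinarith [mul_nonneg hα0 hg.relEntropy_nonneg]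
  calc -(2 / M) * (1 - α) * (M ^ 2 * B) = M * ((1 - α) * (-2 * B)) := by field_simp
    _ ≤ M * relEntropy (unitMass f M) := by gcongr
end
end

section
/- (Onofri-type dual inequality.) Let α ∈ [0,1). For every function g ∈ C_c^∞(ℝ²), one has log( ∫_{ℝ²} e^{g(x)−V(x)} dx ) ≤ 1/(16π(1−α)) ∫_{ℝ²} |∇g|² dx + ∫_{ℝ²} g e^{−V} dx. -/
open MeasureTheory Real Filter

noncomputable section

/-- Monotone rearrangement of one positive continuous density onto another. -/
lemma exists_monotone_transport {a b c d : ℝ} (hcd : c ≤ d) {f k : ℝ → ℝ}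
    (hf : Continuous f) (hk : Continuous k) (hf0 : ∀ x, 0 < f x) (hk0 : ∀ x, 0 < k x)
    (h : ∫ x in a..b, f x = ∫ y in c..d, k y) :
    ∃ T T' : ℝ → ℝ, Continuous T' ∧ (∀ x, HasDerivAt T (T' x) x) ∧ T a = c ∧ T b = d ∧
      (∀ x, 0 < T' x) ∧ ∀ x ∈ Set.Icc a b, k (T x) * T' x = f x := by
  set q : ℝ → ℝ := fun y => k (max c (min d y)) with hq
  have hqc : Continuous q := by fun_prop
  have hq0 : ∀ y, 0 < q y := fun y => hk0 _
  have hqk : ∀ y ∈ Set.Icc c d, q y = k y := fun y hy => by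
    simp [hq, min_eq_right hy.2, max_eq_right hy.1]
  obtain ⟨y₀, hy₀, hmin⟩ := isCompact_Icc.exists_isMinOn (Set.nonempty_Icc.2 hcd)
    hk.continuousOn
  have hlow : ∀ y, k y₀ ≤ q y := fun y =>
    hmin ⟨le_max_left _ _, max_le hcd (min_le_left _ _)⟩
  set Ψ : ℝ → ℝ := fun y => ∫ t in c..y, q t with hΨ
  have hΨd : ∀ y, HasDerivAt Ψ (q y) y := fun y =>
    (hqc.integral_hasStrictDerivAt c y).hasDerivAt
  have hΨm : StrictMono Ψ := strictMono_of_hasDerivAt_pos hΨd hq0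
  have hΨc : Continuous Ψ := continuous_iff_continuousAt.2 fun y => (hΨd y).continuousAt
  have hmono : Monotone fun y => Ψ y - k y₀ * y := by
    refine monotone_of_hasDerivAt_nonneg (f' := fun y => q y - k y₀ * 1)
      (fun y => (hΨd y).sub ((hasDerivAt_id y).const_mul _)) fun y => ?_
    have := hlow y
    simp only [Pi.zero_apply]
    linarith
  have htop : Tendsto Ψ atTop atTop := by
    refine tendsto_atTop_mono' atTop (f₁ := fun y => k y₀ * y + (Ψ 0 - k y₀ * 0)) ?_
      (tendsto_atTop_add_const_right _ _ (tendsto_id.const_mul_atTop (hk0 y₀)))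
    filter_upwards [eventually_ge_atTop 0] with y hy
    have := hmono hy
    simp only at this
    linarith
  have hbot : Tendsto Ψ atBot atBot := by
    refine tendsto_atBot_mono' atBot (f₂ := Ψ) (f₁ := fun y => k y₀ * y + (Ψ 0 - k y₀ * 0)) ?_
      (tendsto_atBot_add_const_right _ _ (tendsto_id.const_mul_atBot (hk0 y₀)))
    filter_upwards [eventually_le_atBot 0] with y hy
    have := hmono hy
    simp only at this
    linarith
  set e := hΨm.orderIsoOfSurjective Ψ (hΨc.surjective htop hbot) with he
  have heΨ : ∀ y, e.symm (Ψ y) = y := fun y => e.symm_apply_apply y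
  have hΨe : ∀ z, Ψ (e.symm z) = z := fun z => e.apply_symm_apply z
  have hed : ∀ z, HasDerivAt e.symm (q (e.symm z))⁻¹ z := fun z =>
    HasDerivAt.of_local_left_inverse e.symm.continuous.continuousAt (hΨd _) (hq0 _).ne'
      (Eventually.of_forall hΨe)
  set Φ : ℝ → ℝ := fun x => ∫ t in a..x, f t with hΦ
  have hΦd : ∀ x, HasDerivAt Φ (f x) x := fun x =>
    (hf.integral_hasStrictDerivAt a x).hasDerivAt
  have hΦc : Continuous Φ := continuous_iff_continuousAt.2 fun x => (hΦd x).continuousAt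
  have hTa : e.symm (Φ a) = c := by
    have : Φ a = Ψ c := by simp [hΦ, hΨ]
    rw [this, heΨ]
  have hTb : e.symm (Φ b) = d := by
    have : Φ b = Ψ d := by
      simp only [hΦ, hΨ, h]
      refine intervalIntegral.integral_congr fun y hy => ?_
      rw [Set.uIcc_of_le hcd] at hy
      exact (hqk y hy).symm
    rw [this, heΨ]
  have hΦm : StrictMono Φ := strictMono_of_hasDerivAt_pos hΦd hf0
  refine ⟨fun x => e.symm (Φ x), fun x => (q (e.symm (Φ x)))⁻¹ * f x, ?_, fun x => ?_, hTa, hTb,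
    fun x => mul_pos (inv_pos.2 (hq0 _)) (hf0 x), fun x hx => ?_⟩
  · exact ((hqc.comp (e.symm.continuous.comp hΦc)).inv₀ fun x => (hq0 _).ne').mul hf
  · exact (hed (Φ x)).comp x (hΦd x)
  · have h1 : e.symm (Φ x) ∈ Set.Icc c d := by
      rw [← hTa, ← hTb]
      exact ⟨e.symm.monotone (hΦm.monotone hx.1), e.symm.monotone (hΦm.monotone hx.2)⟩
    rw [← hqk _ h1, ← mul_assoc, mul_inv_cancel₀ (hq0 _).ne', one_mul]

/-- Integration by parts on a symmetric interval followed by Young's inequality. -/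
lemma integral_deriv_mul_le {R S l : ℝ} (hR : 0 ≤ R) (hl : 0 < l) {T T' u u' : ℝ → ℝ}
    (hT' : Continuous T') (hT : ∀ x, HasDerivAt T (T' x) x) (hTa : T (-R) = -S) (hTb : T R = S)
    (hu' : Continuous u') (hu : ∀ x, HasDerivAt u (u' x) x) (hu0 : ∀ x, 0 < u x) :
    ∫ x in -R..R, T' x * u x ≤ S * (u R + u (-R)) +
      ((∫ x in -R..R, (u' x / u x) ^ 2) / l + l / 4 * ∫ x in -R..R, u x ^ 2 * T x ^ 2) := by
  have hTc : Continuous T := continuous_iff_continuousAt.2 fun x => (hT x).continuousAt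
  have huc : Continuous u := continuous_iff_continuousAt.2 fun x => (hu x).continuousAt
  have hquot : Continuous fun x => (u' x / u x) ^ 2 :=
    (hu'.div huc fun x => (hu0 x).ne').pow 2
  have hprod : Continuous fun x => u x ^ 2 * T x ^ 2 := by fun_prop
  have hibp := intervalIntegral.integral_mul_deriv_eq_deriv_mul (a := -R) (b := R)
    (fun x _ => hu x) (fun x _ => hT x) (hu'.intervalIntegrable _ _) (hT'.intervalIntegrable _ _)
  have hcomm : ∫ x in -R..R, T' x * u x = ∫ x in -R..R, u x * T' x := by
    simp only [mul_comm]
  have hyoung : -(∫ x in -R..R, u' x * T x) ≤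
      (∫ x in -R..R, (u' x / u x) ^ 2) / l + l / 4 * ∫ x in -R..R, u x ^ 2 * T x ^ 2 := by
    rw [← intervalIntegral.integral_neg, ← intervalIntegral.integral_div,
      ← intervalIntegral.integral_const_mul, ← intervalIntegral.integral_add
        ((hquot.div_const l).intervalIntegrable _ _)
        ((hprod.const_mul (l / 4)).intervalIntegrable _ _)]
    refine intervalIntegral.integral_mono_on (by linarith)
      ((hu'.mul hTc).neg.intervalIntegrable _ _)
      (((hquot.div_const l).add (hprod.const_mul (l / 4))).intervalIntegrable _ _) fun x _ => ?_
    have h1 : u' x = u' x / u x * u x := (div_mul_cancel₀ _ (hu0 x).ne').symm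
    set v := u' x / u x
    have h2 : v ^ 2 / l + l / 4 * (u x ^ 2 * T x ^ 2) - -(u' x * T x) =
        (v + l / 2 * (u x * T x)) ^ 2 / l := by
      rw [h1]; field_simp; ring
    have h3 : 0 ≤ (v + l / 2 * (u x * T x)) ^ 2 / l := by positivity
    linarith
  rw [hcomm, hibp, hTa, hTb]
  linarith

/-- The one-dimensional transport inequality along a fibre of a triangular map. -/
lemma fibre_transport_le {R S l a : ℝ} (hR : 0 ≤ R) (hS : 0 ≤ S) (hl : 0 < l) (ha : 0 < a)
    {u u' w : ℝ → ℝ} (hu' : Continuous u') (hu : ∀ x, HasDerivAt u (u' x) x)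
    (hu0 : ∀ x, 0 < u x) (hw : Continuous w) (hw0 : ∀ x, 0 < w x)
    (h : ∫ x in -R..R, u x ^ 2 = a * ∫ y in -S..S, w y ^ 2) :
    a * ∫ y in -S..S, w y ≤ (∫ x in -R..R, a * u x) / 2 + (S * (u R + u (-R)) +
      ((∫ x in -R..R, (u' x / u x) ^ 2) / l +
        l / 4 * (a * ∫ y in -S..S, w y ^ 2 * y ^ 2))) / 2 := by
  have huc : Continuous u := continuous_iff_continuousAt.2 fun x => (hu x).continuousAt
  rw [← intervalIntegral.integral_const_mul] at h
  obtain ⟨T, T', hT'c, hT, hTa, hTb, hT'0, hTeq⟩ := exists_monotone_transport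
    (f := fun x => u x ^ 2) (k := fun y => a * w y ^ 2) (neg_le_self hS)
    (by fun_prop) (by fun_prop)
    (fun x => pow_pos (hu0 x) 2) (fun y => mul_pos ha (pow_pos (hw0 y) 2)) h
  have hTc : Continuous T := continuous_iff_continuousAt.2 fun x => (hT x).continuousAt
  have hmain := integral_deriv_mul_le hR hl hT'c hT hTa hTb hu' hu hu0
  have hsecond : ∫ x in -R..R, u x ^ 2 * T x ^ 2 = a * ∫ y in -S..S, w y ^ 2 * y ^ 2 := by
    have := intervalIntegral.integral_comp_mul_deriv (a := -R) (b := R) (f := T) (f' := T')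
      (g := fun y => a * (w y ^ 2 * y ^ 2)) (fun x _ => hT x) hT'c.continuousOn (by fun_prop)
    rw [hTa, hTb, intervalIntegral.integral_const_mul] at this
    rw [← this]
    refine intervalIntegral.integral_congr fun x hx => ?_
    rw [Set.uIcc_of_le (neg_le_self hR)] at hx
    simp only [Function.comp, ← hTeq x hx]
    ring
  have hfirst : a * ∫ y in -S..S, w y ≤
      (∫ x in -R..R, a * u x) / 2 + (∫ x in -R..R, T' x * u x) / 2 := by
    have := intervalIntegral.integral_comp_mul_deriv (a := -R) (b := R) (f := T) (f' := T')
      (g := fun y => a * w y) (fun x _ => hT x) hT'c.continuousOn (by fun_prop)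
    rw [hTa, hTb, intervalIntegral.integral_const_mul] at this
    rw [← this, ← intervalIntegral.integral_div, ← intervalIntegral.integral_div,
      ← intervalIntegral.integral_add
        (((huc.const_mul a).div_const 2).intervalIntegrable _ _)
        (Continuous.intervalIntegrable (by fun_prop) _ _)]
    refine intervalIntegral.integral_mono_on (by linarith)
      (Continuous.intervalIntegrable (by fun_prop) _ _)
      (Continuous.intervalIntegrable (by fun_prop) _ _) fun x hx => ?_
    have h1 := hTeq x hx
    have hx0 := hu0 x
    have hwx := hw0 (T x)
    have hTx := hT'0 x
    simp only [Function.comp]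
    refine abs_le_of_sq_le_sq' ?_ (by positivity) |>.2
    have h2 : (a * w (T x) * T' x) ^ 2 = a * T' x * u x ^ 2 := by rw [← h1]; ring
    rw [h2]
    nlinarith [sq_nonneg ((a - T' x) * u x)]
  rw [hsecond] at hmain
  linarith

lemma integral_integral_swap_of_continuous {f : ℝ → ℝ → ℝ}
    (hf : Continuous (Function.uncurry f)) {a b c d : ℝ} (hab : a ≤ b) (hcd : c ≤ d) :
    ∫ x in a..b, ∫ y in c..d, f x y = ∫ y in c..d, ∫ x in a..b, f x y := by
  refine intervalIntegral_intervalIntegral_swap ?_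
  rw [Set.uIoc_of_le hab, Set.uIoc_of_le hcd]
  exact (hf.continuousOn.integrableOn_compact (isCompact_Icc.prod isCompact_Icc)).mono_set
    (Set.prod_mono Set.Ioc_subset_Icc_self Set.Ioc_subset_Icc_self)

lemma continuous_integral_right {f : ℝ → ℝ → ℝ} (hf : Continuous (Function.uncurry f)) (a : ℝ) :
    Continuous fun x => ∫ y in -a..a, f x y :=
  intervalIntegral.continuous_parametric_intervalIntegral_of_continuous' hf _ _

lemma Continuous.slice {f : ℝ → ℝ → ℝ} (hf : Continuous (Function.uncurry f)) (x : ℝ) :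
    Continuous (f x) := hf.comp (Continuous.prodMk_right x)

lemma Continuous.flip_slice {f : ℝ → ℝ → ℝ} (hf : Continuous (Function.uncurry f)) (y : ℝ) :
    Continuous fun x => f x y := hf.comp (Continuous.prodMk_left y)

/-- A Sobolev-type inequality on squares, obtained from the triangular transport of the density
`U ^ 2` onto the density `w ^ 2`. -/
lemma square_transport_le {R S l : ℝ} (hR : 0 < R) (hS : 0 < S) (hl : 0 < l)
    {U Ux Uy w : ℝ → ℝ → ℝ} (hU : Continuous (Function.uncurry U))
    (hUx : Continuous (Function.uncurry Ux)) (hUy : Continuous (Function.uncurry Uy))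
    (hw : Continuous (Function.uncurry w))
    (hUxd : ∀ x y, HasDerivAt (fun t => U t y) (Ux x y) x)
    (hUyd : ∀ x y, HasDerivAt (U x) (Uy x y) y)
    (hU0 : ∀ x y, 0 < U x y) (hw0 : ∀ x y, 0 < w x y)
    (h : ∫ x in -R..R, ∫ y in -R..R, U x y ^ 2 = ∫ x in -S..S, ∫ y in -S..S, w x y ^ 2) :
    ∫ x in -S..S, ∫ y in -S..S, w x y ≤
      (S * (∫ y in -R..R, (U R y + U (-R) y)) + S * ∫ x in -R..R, (U x R + U x (-R))) / 2 +
      ((∫ x in -R..R, ∫ y in -R..R, (Ux x y / U x y) ^ 2) +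
        ∫ x in -R..R, ∫ y in -R..R, (Uy x y / U x y) ^ 2) / (2 * l) +
      l / 8 * ((∫ x in -S..S, ∫ y in -S..S, w x y ^ 2 * x ^ 2) +
        ∫ x in -S..S, ∫ y in -S..S, w x y ^ 2 * y ^ 2) := by
  have hRR : -R ≤ R := by linarith
  have hSS : -S ≤ S := by linarith
  have hUv : ∀ {X : Type} [TopologicalSpace X] {p q : X → ℝ}, Continuous p → Continuous q →
      Continuous fun z => U (p z) (q z) := fun hp hq => hU.comp (hp.prodMk hq)
  have hUxv : ∀ {X : Type} [TopologicalSpace X] {p q : X → ℝ}, Continuous p → Continuous q →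
      Continuous fun z => Ux (p z) (q z) := fun hp hq => hUx.comp (hp.prodMk hq)
  have hU2 : Continuous (Function.uncurry fun x y => U x y ^ 2) := hU.pow 2
  have hw2 : Continuous (Function.uncurry fun x y => w x y ^ 2) := hw.pow 2
  have hw2x : Continuous (Function.uncurry fun x y => w x y ^ 2 * x ^ 2) :=
    hw2.mul (continuous_fst.pow 2)
  have hw2y : Continuous (Function.uncurry fun x y => w x y ^ 2 * y ^ 2) :=
    hw2.mul (continuous_snd.pow 2)
  have hLx : Continuous (Function.uncurry fun x y => (Ux x y / U x y) ^ 2) :=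
    (hUx.div hU fun z => (hU0 z.1 z.2).ne').pow 2
  have hLy : Continuous (Function.uncurry fun x y => (Uy x y / U x y) ^ 2) :=
    (hUy.div hU fun z => (hU0 z.1 z.2).ne').pow 2
  obtain ⟨T, T', hT'c, hT, hTa, hTb, hT'0, hTeq⟩ := exists_monotone_transport
    (f := fun x => ∫ y in -R..R, U x y ^ 2) (k := fun x => ∫ y in -S..S, w x y ^ 2) hSS
    (continuous_integral_right hU2 R) (continuous_integral_right hw2 S)
    (fun x => intervalIntegral.intervalIntegral_pos_of_pos
      ((hU2.slice x).intervalIntegrable _ _) (fun y => pow_pos (hU0 x y) 2) (by linarith))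
    (fun x => intervalIntegral.intervalIntegral_pos_of_pos
      ((hw2.slice x).intervalIntegrable _ _) (fun y => pow_pos (hw0 x y) 2) (by linarith)) h
  have hTc : Continuous T := continuous_iff_continuousAt.2 fun x => (hT x).continuousAt
  have push : ∀ {k : ℝ → ℝ}, Continuous k →
      ∫ x in -R..R, T' x * k (T x) = ∫ y in -S..S, k y := fun {k} hk => by
    rw [← hTa, ← hTb, ← intervalIntegral.integral_comp_mul_deriv (fun x _ => hT x)
      hT'c.continuousOn hk]
    simp [mul_comm]
  have hTU : Continuous (Function.uncurry fun x y => T' x * U x y) :=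
    (hT'c.comp continuous_fst).mul hU
  have hUT : Continuous (Function.uncurry fun x y => U x y ^ 2 * T x ^ 2) :=
    hU2.mul ((hTc.comp continuous_fst).pow 2)
  have hfib : ∀ x ∈ Set.Icc (-R) R, T' x * (∫ y in -S..S, w (T x) y) ≤
      (∫ y in -R..R, T' x * U x y) / 2 + (S * (U x R + U x (-R)) +
        ((∫ y in -R..R, (Uy x y / U x y) ^ 2) / l +
          l / 4 * (T' x * ∫ y in -S..S, w (T x) y ^ 2 * y ^ 2))) / 2 := fun x hx =>
    fibre_transport_le hR.le hS.le hl (hT'0 x) (hUy.slice x) (hUyd x) (hU0 x) (hw.slice _)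
      (hw0 _) (by rw [← hTeq x hx, mul_comm])
  have cW := continuous_integral_right hw S
  have cK := continuous_integral_right hw2y S
  have c1 : Continuous fun x => ∫ y in -R..R, T' x * U x y := continuous_integral_right hTU R
  have c2 : Continuous fun x => S * (U x R + U x (-R)) :=
    ((hUv continuous_id continuous_const).add (hUv continuous_id continuous_const)).const_mul S
  have c3 : Continuous fun x => ∫ y in -R..R, (Uy x y / U x y) ^ 2 := continuous_integral_right hLy R
  have c4 : Continuous fun x => T' x * ∫ y in -S..S, w (T x) y ^ 2 * y ^ 2 :=
    hT'c.mul (cK.comp hTc)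
  have ii : ∀ {f : ℝ → ℝ}, Continuous f → IntervalIntegrable f volume (-R) R :=
    fun hf => hf.intervalIntegrable _ _
  have hstep := intervalIntegral.integral_mono_on hRR (ii (hT'c.mul (cW.comp hTc)))
    (ii (by fun_prop)) hfib
  rw [intervalIntegral.integral_add (ii (by fun_prop)) (ii (by fun_prop)),
    intervalIntegral.integral_div, intervalIntegral.integral_div,
    intervalIntegral.integral_add (ii (by fun_prop)) (ii (by fun_prop)),
    intervalIntegral.integral_add (ii (by fun_prop)) (ii (by fun_prop)),
    intervalIntegral.integral_div, intervalIntegral.integral_const_mul,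
    intervalIntegral.integral_const_mul, push cK] at hstep
  have hpush := push cW
  rw [Pi.mul_def] at hstep
  simp only [Function.comp_apply] at hstep
  rw [hpush] at hstep
  have hhor : ∀ y ∈ Set.Icc (-R) R, (∫ x in -R..R, T' x * U x y) ≤ S * (U R y + U (-R) y) +
      ((∫ x in -R..R, (Ux x y / U x y) ^ 2) / l +
        l / 4 * ∫ x in -R..R, U x y ^ 2 * T x ^ 2) := fun y _ =>
    integral_deriv_mul_le hR.le hl hT'c hT hTa hTb (hUxv continuous_id continuous_const)
      (fun x => hUxd x y) (fun x => hU0 x y)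
  have hflip : ∀ {f : ℝ → ℝ → ℝ}, Continuous (Function.uncurry f) →
      Continuous (Function.uncurry fun y x => f x y) := fun hf => hf.comp continuous_swap
  have d1 : Continuous fun y => ∫ x in -R..R, T' x * U x y := continuous_integral_right (hflip hTU) R
  have d2 : Continuous fun y => S * (U R y + U (-R) y) :=
    ((hUv continuous_const continuous_id).add (hUv continuous_const continuous_id)).const_mul S
  have d3 : Continuous fun y => ∫ x in -R..R, (Ux x y / U x y) ^ 2 := continuous_integral_right (hflip hLx) R
  have d4 : Continuous fun y => ∫ x in -R..R, U x y ^ 2 * T x ^ 2 := continuous_integral_right (hflip hUT) R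
  have hstep' := intervalIntegral.integral_mono_on hRR (ii d1) (ii (by fun_prop)) hhor
  rw [intervalIntegral.integral_add (ii (by fun_prop)) (ii (by fun_prop)),
    intervalIntegral.integral_add (ii (by fun_prop)) (ii (by fun_prop)),
    intervalIntegral.integral_div, intervalIntegral.integral_const_mul,
    intervalIntegral.integral_const_mul,
    ← integral_integral_swap_of_continuous hTU hRR hRR,
    ← integral_integral_swap_of_continuous hLx hRR hRR,
    ← integral_integral_swap_of_continuous hUT hRR hRR] at hstep'
  have hsecond : ∫ x in -R..R, ∫ y in -R..R, U x y ^ 2 * T x ^ 2 =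
      ∫ x in -S..S, ∫ y in -S..S, w x y ^ 2 * x ^ 2 := by
    rw [← push (continuous_integral_right hw2x S)]
    refine intervalIntegral.integral_congr fun x hx => ?_
    rw [Set.uIcc_of_le hRR] at hx
    simp only [intervalIntegral.integral_mul_const, ← hTeq x hx]
    ring
  rw [hsecond] at hstep'
  have e1 : ∀ A B : ℝ, (A + B) / (2 * l) = (A / l + B / l) / 2 := fun A B => by
    field_simp
  rw [e1]
  linarith

/-- The integral of a function of two variables over the square `[-R, R] × [-R, R]`. -/
def squareIntegral (R : ℝ) (f : ℝ → ℝ → ℝ) : ℝ := ∫ x in -R..R, ∫ y in -R..R, f x y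

lemma squareIntegral_add (R : ℝ) {f g : ℝ → ℝ → ℝ} (hf : Continuous (Function.uncurry f))
    (hg : Continuous (Function.uncurry g)) :
    squareIntegral R (fun x y => f x y + g x y) = squareIntegral R f + squareIntegral R g := by
  unfold squareIntegral
  rw [← intervalIntegral.integral_add
    ((continuous_integral_right hf R).intervalIntegrable _ _)
    ((continuous_integral_right hg R).intervalIntegrable _ _)]
  congr 1
  funext x
  exact intervalIntegral.integral_add ((hf.slice x).intervalIntegrable _ _)
    ((hg.slice x).intervalIntegrable _ _)

lemma squareIntegral_const_mul (R c : ℝ) (f : ℝ → ℝ → ℝ) :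
    squareIntegral R (fun x y => c * f x y) = c * squareIntegral R f := by
  simp [squareIntegral, intervalIntegral.integral_const_mul]

lemma squareIntegral_pos {R : ℝ} (hR : 0 < R) {f : ℝ → ℝ → ℝ}
    (hf : Continuous (Function.uncurry f)) (h0 : ∀ x y, 0 < f x y) : 0 < squareIntegral R f :=
  intervalIntegral.intervalIntegral_pos_of_pos
    ((continuous_integral_right hf R).intervalIntegrable _ _)
    (fun x => intervalIntegral.intervalIntegral_pos_of_pos
      ((hf.slice x).intervalIntegrable _ _) (h0 x) (by linarith)) (by linarith)

/-- The divergence theorem on a square. -/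
lemma squareIntegral_divergence {R : ℝ} (hR : 0 ≤ R) {P Q Px Qy : ℝ → ℝ → ℝ}
    (hPx : Continuous (Function.uncurry Px)) (hQy : Continuous (Function.uncurry Qy))
    (hP : ∀ x y, HasDerivAt (fun t => P t y) (Px x y) x)
    (hQ : ∀ x y, HasDerivAt (Q x) (Qy x y) y) :
    squareIntegral R (fun x y => Px x y + Qy x y) =
      (∫ y in -R..R, (P R y - P (-R) y)) + ∫ x in -R..R, (Q x R - Q x (-R)) := by
  have hRR : -R ≤ R := by linarith
  rw [squareIntegral_add R hPx hQy]
  unfold squareIntegral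
  rw [integral_integral_swap_of_continuous hPx hRR hRR]
  congr 2
  · funext y
    exact intervalIntegral.integral_eq_sub_of_hasDerivAt (fun x _ => hP x y)
      ((hPx.flip_slice y).intervalIntegrable _ _)
  · funext x
    exact intervalIntegral.integral_eq_sub_of_hasDerivAt (fun y _ => hQ x y)
      ((hQy.slice x).intervalIntegrable _ _)

/-- The conformal factor `1 / (1 + x² + y²)` of the stereographic projection. -/
def stereoWeight (x y : ℝ) : ℝ := (1 + x ^ 2 + y ^ 2)⁻¹

lemma stereoWeight_pos (x y : ℝ) : 0 < stereoWeight x y := by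
  unfold stereoWeight; positivity

lemma continuous_stereoWeight : Continuous (Function.uncurry stereoWeight) := by
  unfold stereoWeight Function.uncurry
  refine Continuous.inv₀ (by fun_prop) fun z => ?_
  positivity

@[fun_prop]
lemma Continuous.stereoWeight {X : Type*} [TopologicalSpace X] {p q : X → ℝ} (hp : Continuous p)
    (hq : Continuous q) : Continuous fun z => stereoWeight (p z) (q z) :=
  continuous_stereoWeight.comp (hp.prodMk hq)

lemma stereoWeight_comm (x y : ℝ) : stereoWeight x y = stereoWeight y x := by
  unfold stereoWeight; ring

lemma hasDerivAt_stereoWeight_left (x y : ℝ) :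
    HasDerivAt (fun t => stereoWeight t y) (-2 * x * stereoWeight x y ^ 2) x := by
  have h : HasDerivAt (fun t : ℝ => 1 + t ^ 2 + y ^ 2) (2 * x) x := by
    simpa using (((hasDerivAt_id x).pow 2).const_add 1).add_const (y ^ 2)
  convert! h.inv (by positivity) using 1
  unfold stereoWeight
  field_simp

lemma hasDerivAt_stereoWeight_right (x y : ℝ) :
    HasDerivAt (stereoWeight x) (-2 * y * stereoWeight x y ^ 2) y := by
  have := hasDerivAt_stereoWeight_left y x
  simpa only [stereoWeight_comm _ x] using this

lemma stereoWeight_identity (x y : ℝ) :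
    (x ^ 2 + y ^ 2) * stereoWeight x y ^ 2 = stereoWeight x y - stereoWeight x y ^ 2 := by
  unfold stereoWeight
  field_simp
  ring

lemma stereoWeight_boundary {R : ℝ} (hR : 0 ≤ R) :
    R * (∫ y in -R..R, (stereoWeight R y + stereoWeight (-R) y)) +
      R * (∫ x in -R..R, (stereoWeight x R + stereoWeight x (-R))) =
      2 * squareIntegral R fun x y => stereoWeight x y ^ 2 := by
  have h := squareIntegral_divergence hR (P := fun x y => x * stereoWeight x y)
    (Q := fun x y => y * stereoWeight x y)
    (Px := fun x y => 1 * stereoWeight x y + x * (-2 * x * stereoWeight x y ^ 2))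
    (Qy := fun x y => 1 * stereoWeight x y + y * (-2 * y * stereoWeight x y ^ 2))
    (by unfold Function.uncurry; fun_prop) (by unfold Function.uncurry; fun_prop)
    (fun x y => (hasDerivAt_id x).mul (hasDerivAt_stereoWeight_left x y))
    (fun x y => (hasDerivAt_id y).mul (hasDerivAt_stereoWeight_right x y))
  rw [← squareIntegral_const_mul, ← intervalIntegral.integral_const_mul,
    ← intervalIntegral.integral_const_mul]
  have hdiv : (fun x y => 1 * stereoWeight x y + x * (-2 * x * stereoWeight x y ^ 2) +
      (1 * stereoWeight x y + y * (-2 * y * stereoWeight x y ^ 2))) =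
      fun x y => 2 * stereoWeight x y ^ 2 := by
    funext x y
    linear_combination (-2) * stereoWeight_identity x y
  rw [← hdiv, h]
  simp only [mul_add, neg_mul, sub_neg_eq_add]

/-- The finite-volume form of the Onofri inequality, for functions vanishing on the boundary of
the square. -/
lemma square_onofri {R S : ℝ} (hR : 0 < R) (hS : 0 < S) {G Gx Gy : ℝ → ℝ → ℝ}
    (hG : Continuous (Function.uncurry G)) (hGx : Continuous (Function.uncurry Gx))
    (hGy : Continuous (Function.uncurry Gy))
    (hGxd : ∀ x y, HasDerivAt (fun t => G t y) (Gx x y) x)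
    (hGyd : ∀ x y, HasDerivAt (G x) (Gy x y) y)
    (hG1 : ∀ y, G R y = 0) (hG2 : ∀ y, G (-R) y = 0)
    (hG3 : ∀ x, G x R = 0) (hG4 : ∀ x, G x (-R) = 0) :
    (squareIntegral S stereoWeight - squareIntegral R stereoWeight) / 2 ≤
      S / R * (squareIntegral R fun x y => stereoWeight x y ^ 2) *
        √((squareIntegral S fun x y => stereoWeight x y ^ 2) /
          squareIntegral R fun x y => exp (G x y) * stereoWeight x y ^ 2) +
      (squareIntegral R fun x y => Gx x y ^ 2 + Gy x y ^ 2) / 32 +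
      (squareIntegral R fun x y => G x y * stereoWeight x y ^ 2) / 2 -
      (squareIntegral R fun x y => stereoWeight x y ^ 2) / 2 -
      (squareIntegral S fun x y => stereoWeight x y ^ 2) / 2 := by
  have cG : Continuous fun z : ℝ × ℝ => G z.1 z.2 := hG
  have cGx : Continuous fun z : ℝ × ℝ => Gx z.1 z.2 := hGx
  have cGy : Continuous fun z : ℝ × ℝ => Gy z.1 z.2 := hGy
  set m := squareIntegral S fun x y => stereoWeight x y ^ 2 with hm
  set Z := squareIntegral R fun x y => exp (G x y) * stereoWeight x y ^ 2 with hZ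
  have hm0 : 0 < m := squareIntegral_pos hS (by unfold Function.uncurry; fun_prop)
    fun x y => pow_pos (stereoWeight_pos x y) 2
  have hZ0 : 0 < Z := squareIntegral_pos hR (by unfold Function.uncurry; fun_prop)
    fun x y => mul_pos (exp_pos _) (pow_pos (stereoWeight_pos x y) 2)
  have hsm : 0 < √m := sqrt_pos.2 hm0
  have hsZ : 0 < √Z := sqrt_pos.2 hZ0
  set U : ℝ → ℝ → ℝ := fun x y => (√Z)⁻¹ * (exp (G x y / 2) * stereoWeight x y) with hU
  have hU0 : ∀ x y, 0 < U x y := fun x y =>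
    mul_pos (inv_pos.2 hsZ) (mul_pos (exp_pos _) (stereoWeight_pos x y))
  set Lx : ℝ → ℝ → ℝ := fun x y => Gx x y / 2 - 2 * x * stereoWeight x y with hLx
  set Ly : ℝ → ℝ → ℝ := fun x y => Gy x y / 2 - 2 * y * stereoWeight x y with hLy
  have cU : Continuous fun z : ℝ × ℝ => U z.1 z.2 := by fun_prop
  have cLx : Continuous fun z : ℝ × ℝ => Lx z.1 z.2 := by fun_prop
  have cLy : Continuous fun z : ℝ × ℝ => Ly z.1 z.2 := by fun_prop
  have hUxd : ∀ x y, HasDerivAt (fun t => U t y) (U x y * Lx x y) x := fun x y => by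
    convert! ((((hGxd x y).div_const 2).exp).mul
      (hasDerivAt_stereoWeight_left x y)).const_mul (√Z)⁻¹ using 1
    simp only [hU, hLx]
    ring
  have hUyd : ∀ x y, HasDerivAt (U x) (U x y * Ly x y) y := fun x y => by
    convert! ((((hGyd x y).div_const 2).exp).mul
      (hasDerivAt_stereoWeight_right x y)).const_mul (√Z)⁻¹ using 1
    simp only [hU, hLy]
    ring
  have hmassU : squareIntegral R (fun x y => U x y ^ 2) = 1 := by
    have : (fun x y => U x y ^ 2) =
        fun x y => Z⁻¹ * (exp (G x y) * stereoWeight x y ^ 2) := by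
      funext x y
      simp only [hU]
      rw [mul_pow, mul_pow, inv_pow, sq_sqrt hZ0.le, ← exp_nat_mul]
      congr 4
      push_cast
      ring
    rw [this, squareIntegral_const_mul, ← hZ, inv_mul_cancel₀ hZ0.ne']
  have hmassw : squareIntegral S (fun x y => ((√m)⁻¹ * stereoWeight x y) ^ 2) = 1 := by
    have : (fun x y => ((√m)⁻¹ * stereoWeight x y) ^ 2) =
        fun x y => m⁻¹ * stereoWeight x y ^ 2 := by
      funext x y
      rw [mul_pow, inv_pow, sq_sqrt hm0.le]
    rw [this, squareIntegral_const_mul, ← hm, inv_mul_cancel₀ hm0.ne']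
  have key := square_transport_le hR hS (l := 4 * √m) (by positivity) (U := U)
    (Ux := fun x y => U x y * Lx x y) (Uy := fun x y => U x y * Ly x y)
    (w := fun x y => (√m)⁻¹ * stereoWeight x y) cU (cU.mul cLx) (cU.mul cLy)
    (by unfold Function.uncurry; fun_prop) hUxd hUyd hU0
    (fun x y => mul_pos (inv_pos.2 hsm) (stereoWeight_pos x y)) (hmassU.trans hmassw.symm)
  simp only [mul_div_cancel_left₀ _ (hU0 _ _).ne'] at key
  have hbdry : S * (∫ y in -R..R, (U R y + U (-R) y)) + S * ∫ x in -R..R, (U x R + U x (-R)) =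
      S / R * (√Z)⁻¹ * (2 * squareIntegral R fun x y => stereoWeight x y ^ 2) := by
    rw [← stereoWeight_boundary hR.le]
    simp only [hU, hG1, hG2, hG3, hG4, zero_div, exp_zero, one_mul, ← mul_add,
      intervalIntegral.integral_const_mul]
    field_simp
  have hgrad : squareIntegral R (fun x y => Lx x y ^ 2) + squareIntegral R (fun x y => Ly x y ^ 2) =
      (squareIntegral R fun x y => Gx x y ^ 2 + Gy x y ^ 2) / 4 +
      4 * (squareIntegral R fun x y => G x y * stereoWeight x y ^ 2) +
      4 * squareIntegral R stereoWeight -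
      4 * squareIntegral R fun x y => stereoWeight x y ^ 2 := by
    have hdiv := squareIntegral_divergence hR.le (P := fun x y => G x y * (x * stereoWeight x y))
      (Q := fun x y => G x y * (y * stereoWeight x y))
      (Px := fun x y => Gx x y * (x * stereoWeight x y) +
        G x y * (1 * stereoWeight x y + x * (-2 * x * stereoWeight x y ^ 2)))
      (Qy := fun x y => Gy x y * (y * stereoWeight x y) +
        G x y * (1 * stereoWeight x y + y * (-2 * y * stereoWeight x y ^ 2)))
      (by unfold Function.uncurry; fun_prop) (by unfold Function.uncurry; fun_prop)
      (fun x y => (hGxd x y).mul ((hasDerivAt_id x).mul (hasDerivAt_stereoWeight_left x y)))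
      (fun x y => (hGyd x y).mul ((hasDerivAt_id y).mul (hasDerivAt_stereoWeight_right x y)))
    simp only [hG1, hG2, hG3, hG4, zero_mul, sub_zero, intervalIntegral.integral_zero,
      add_zero] at hdiv
    rw [← squareIntegral_add R (f := fun x y => Lx x y ^ 2) (g := fun x y => Ly x y ^ 2)
      (by unfold Function.uncurry; fun_prop) (by unfold Function.uncurry; fun_prop)]
    have : (fun x y => Lx x y ^ 2 + Ly x y ^ 2) = fun x y =>
        (1 / 4) * (Gx x y ^ 2 + Gy x y ^ 2) + (4 * (G x y * stereoWeight x y ^ 2) +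
        (4 * stereoWeight x y + ((-4) * stereoWeight x y ^ 2 +
        (-2) * (Gx x y * (x * stereoWeight x y) +
        G x y * (1 * stereoWeight x y + x * (-2 * x * stereoWeight x y ^ 2)) +
        (Gy x y * (y * stereoWeight x y) +
        G x y * (1 * stereoWeight x y + y * (-2 * y * stereoWeight x y ^ 2))))))) := by
      funext x y
      simp only [hLx, hLy]
      linear_combination (4 - 4 * G x y) * stereoWeight_identity x y
    rw [this, squareIntegral_add R, squareIntegral_add R, squareIntegral_add R,
      squareIntegral_add R, squareIntegral_const_mul, squareIntegral_const_mul,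
      squareIntegral_const_mul, squareIntegral_const_mul, squareIntegral_const_mul, hdiv]
    · ring
    all_goals unfold Function.uncurry; fun_prop
  have hw2 : (∫ x in -S..S, ∫ y in -S..S, ((√m)⁻¹ * stereoWeight x y) ^ 2 * x ^ 2) +
      (∫ x in -S..S, ∫ y in -S..S, ((√m)⁻¹ * stereoWeight x y) ^ 2 * y ^ 2) =
      m⁻¹ * (squareIntegral S stereoWeight - m) := by
    have h1 := squareIntegral_add S
      (f := fun x y => ((√m)⁻¹ * stereoWeight x y) ^ 2 * x ^ 2)
      (g := fun x y => ((√m)⁻¹ * stereoWeight x y) ^ 2 * y ^ 2)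
      (by unfold Function.uncurry; fun_prop) (by unfold Function.uncurry; fun_prop)
    refine h1.symm.trans ?_
    have h2 : (fun x y => ((√m)⁻¹ * stereoWeight x y) ^ 2 * x ^ 2 +
        ((√m)⁻¹ * stereoWeight x y) ^ 2 * y ^ 2) =
        fun x y => m⁻¹ * (stereoWeight x y + (-1) * stereoWeight x y ^ 2) := by
      funext x y
      rw [mul_pow, inv_pow, sq_sqrt hm0.le]
      linear_combination m⁻¹ * stereoWeight_identity x y
    rw [h2, squareIntegral_const_mul, squareIntegral_add S continuous_stereoWeight
      (by unfold Function.uncurry; fun_prop), squareIntegral_const_mul, ← hm]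
    ring
  have hlhs : (∫ x in -S..S, ∫ y in -S..S, (√m)⁻¹ * stereoWeight x y) =
      (√m)⁻¹ * squareIntegral S stereoWeight := squareIntegral_const_mul S _ _
  rw [hbdry, hw2, hlhs] at key
  have key' := mul_le_mul_of_nonneg_left key hsm.le
  change _ ≤ √m * (_ + (squareIntegral R (fun x y => Lx x y ^ 2) +
    squareIntegral R (fun x y => Ly x y ^ 2)) / _ + _) at key'
  rw [hgrad] at key'
  rw [sqrt_div hm0.le]
  have hmm : m⁻¹ = (√m)⁻¹ * (√m)⁻¹ := by rw [← mul_inv, mul_self_sqrt hm0.le]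
  generalize squareIntegral S stereoWeight = IS at *
  generalize squareIntegral R stereoWeight = IR at *
  generalize (squareIntegral R fun x y => stereoWeight x y ^ 2) = mR at *
  generalize (squareIntegral R fun x y => Gx x y ^ 2 + Gy x y ^ 2) = D at *
  generalize (squareIntegral R fun x y => G x y * stereoWeight x y ^ 2) = Γ at *
  have hl : √m * ((√m)⁻¹ * IS) = IS := mul_inv_cancel_left₀ hsm.ne' _
  have hr : √m * (S / R * (√Z)⁻¹ * (2 * mR) / 2 + (D / 4 + 4 * Γ + 4 * IR - 4 * mR) /
      (2 * (4 * √m)) + 4 * √m / 8 * (m⁻¹ * (IS - m))) =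
      S / R * mR * (√m / √Z) + D / 32 + Γ / 2 + IR / 2 - mR / 2 + (IS - m) / 2 := by
    rw [hmm]
    field_simp
    ring
  rw [hl, hr] at key'
  linarith

lemma tendsto_squareIntegral {f : ℝ → ℝ → ℝ} (hf : Integrable (Function.uncurry f)) :
    Tendsto (fun R => squareIntegral R f) atTop (nhds (∫ z, Function.uncurry f z)) := by
  have hcover : AECover (volume : Measure (ℝ × ℝ)) atTop
      fun R : ℝ => Set.Ioc (-R) R ×ˢ Set.Ioc (-R) R := by
    refine ⟨Eventually.of_forall fun z => ?_, fun R => measurableSet_Ioc.prod measurableSet_Ioc⟩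
    filter_upwards [eventually_gt_atTop |z.1|, eventually_gt_atTop |z.2|] with R h1 h2
    exact ⟨⟨(abs_lt.1 h1).1, (abs_lt.1 h1).2.le⟩, ⟨(abs_lt.1 h2).1, (abs_lt.1 h2).2.le⟩⟩
  refine (hcover.integral_tendsto_of_countably_generated hf).congr' ?_
  filter_upwards [eventually_ge_atTop 0] with R hR
  have hRR : -R ≤ R := by linarith
  unfold squareIntegral
  rw [Measure.volume_eq_prod, setIntegral_prod _ hf.integrableOn]
  simp only [intervalIntegral.integral_of_le hRR, Function.uncurry_apply_pair]

lemma squareIntegral_dilate (s R : ℝ) (f : ℝ → ℝ → ℝ) :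
    squareIntegral (s * R) f = squareIntegral R fun x y => s ^ 2 * f (s * x) (s * y) := by
  have hscale : ∀ k : ℝ → ℝ, ∫ x in -(s * R)..s * R, k x = s * ∫ x in -R..R, k (s * x) :=
    fun k => by rw [intervalIntegral.mul_integral_comp_mul_left, mul_neg]
  rw [squareIntegral_const_mul]
  unfold squareIntegral
  simp only [hscale, intervalIntegral.integral_const_mul]
  ring

/-- The identification of `ℝ × ℝ` with the Euclidean plane. -/
def planeEquiv : ℝ × ℝ ≃ᵐ E2 :=
  MeasurableEquiv.finTwoArrow.symm.trans (MeasurableEquiv.toLp 2 (Fin 2 → ℝ))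

lemma measurePreserving_planeEquiv : MeasurePreserving planeEquiv volume volume :=
  ((volume_preserving_finTwoArrow ℝ).symm).trans
    ((EuclideanSpace.volume_preserving_symm_measurableEquiv_toLp (Fin 2)).symm)

lemma integral_plane (f : E2 → ℝ) :
    ∫ z, Function.uncurry (fun x y => f !₂[x, y]) z = ∫ x, f x :=
  measurePreserving_planeEquiv.integral_comp planeEquiv.measurableEmbedding f

lemma integrable_plane {f : E2 → ℝ} (hf : Integrable f) :
    Integrable (Function.uncurry fun x y => f !₂[x, y]) :=
  (measurePreserving_planeEquiv.integrable_comp_emb planeEquiv.measurableEmbedding).2 hf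

lemma tendsto_squareIntegral_plane {f : E2 → ℝ} (hf : Integrable f) :
    Tendsto (fun R => squareIntegral R fun x y => f !₂[x, y]) atTop (nhds (∫ x, f x)) := by
  rw [← integral_plane]
  exact tendsto_squareIntegral (integrable_plane hf)

lemma norm_sq_plane (x y : ℝ) : ‖(!₂[x, y] : E2)‖ ^ 2 = x ^ 2 + y ^ 2 := by
  simp [EuclideanSpace.norm_sq_eq, Fin.sum_univ_two]

lemma plane_eq (x y : ℝ) : (!₂[x, y] : E2) =
    x • EuclideanSpace.single 0 (1 : ℝ) + y • EuclideanSpace.single 1 (1 : ℝ) := by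
  ext i
  fin_cases i <;> simp

lemma continuous_plane : Continuous fun z : ℝ × ℝ => (!₂[z.1, z.2] : E2) := by
  simp only [plane_eq]
  fun_prop

lemma norm_sq_dual (L : E2 →L[ℝ] ℝ) :
    ‖L‖ ^ 2 = L (EuclideanSpace.single 0 1) ^ 2 + L (EuclideanSpace.single 1 1) ^ 2 := by
  obtain ⟨v, rfl⟩ := (InnerProductSpace.toDual ℝ E2).surjective L
  simp [EuclideanSpace.norm_sq_eq, Fin.sum_univ_two, EuclideanSpace.inner_single_right]

/-- Integration of radial functions on the plane. -/
lemma integral_radial (f : ℝ → ℝ) :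
    ∫ x : E2, f ‖x‖ = 2 * π * ∫ r in Set.Ioi (0 : ℝ), r * f r := by
  rw [integral_fun_norm_addHaar]
  simp [Measure.real, EuclideanSpace.volume_ball_fin_two, pi_pos.le]
  ring

lemma integral_stereo : ∫ x : E2, (1 + ‖x‖ ^ 2)⁻¹ ^ 2 = π := by
  rw [integral_radial fun r => (1 + r ^ 2)⁻¹ ^ 2]
  have h := integral_Ioi_of_hasDerivAt_of_nonneg' (a := 0) (l := 0)
    (g := fun r : ℝ => -(2⁻¹) * (1 + r ^ 2)⁻¹) (g' := fun r => r * (1 + r ^ 2)⁻¹ ^ 2)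
    (fun r _ => by
      have h1 : HasDerivAt (fun t : ℝ => 1 + t ^ 2) (2 * r) r := by
        simpa using ((hasDerivAt_id r).pow 2).const_add 1
      convert! (h1.inv (by positivity)).const_mul (-(2⁻¹)) using 1
      field_simp)
    (fun r hr => by have := Set.mem_Ioi.1 hr; positivity)
    (by
      have h1 : Tendsto (fun r : ℝ => 1 + r ^ 2) atTop atTop :=
        tendsto_atTop_add_const_left _ _ (tendsto_pow_atTop two_ne_zero)
      simpa using h1.inv_tendsto_atTop.const_mul (-(2⁻¹)))
  rw [h]
  norm_num
  ring

lemma integrable_stereo : Integrable fun x : E2 => (1 + ‖x‖ ^ 2)⁻¹ ^ 2 := by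
  have := integrable_rpow_neg_one_add_norm_sq (E := E2) (μ := volume) (r := 4) (by simp; norm_num)
  refine this.congr (Eventually.of_forall fun x => ?_)
  have h : (0 : ℝ) ≤ 1 + ‖x‖ ^ 2 := by positivity
  simp only
  rw [show (-4 / 2 : ℝ) = -((2 : ℕ) : ℝ) by norm_num, rpow_neg h, rpow_natCast, inv_pow]

lemma dilate_sub_eq {s : ℝ} (hs : 0 < s) (r : ℝ) :
    s ^ 2 * (1 + s ^ 2 * r ^ 2)⁻¹ - (1 + r ^ 2)⁻¹ =
      (s ^ 2 - 1) * ((1 + s ^ 2 * r ^ 2)⁻¹ * (1 + r ^ 2)⁻¹) := by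
  field_simp
  ring

lemma integral_dilate_sub {s : ℝ} (hs : 0 < s) :
    ∫ x : E2, (s ^ 2 * (1 + s ^ 2 * ‖x‖ ^ 2)⁻¹ - (1 + ‖x‖ ^ 2)⁻¹) = π * log (s ^ 2) := by
  rw [integral_radial fun r => s ^ 2 * (1 + s ^ 2 * r ^ 2)⁻¹ - (1 + r ^ 2)⁻¹]
  have hderiv : ∀ r ∈ Set.Ici (0 : ℝ), HasDerivAt
      (fun r : ℝ => 1 / 2 * log ((1 + s ^ 2 * r ^ 2) / (1 + r ^ 2)))
      (r * (s ^ 2 * (1 + s ^ 2 * r ^ 2)⁻¹ - (1 + r ^ 2)⁻¹)) r := fun r _ => by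
    have h1 : HasDerivAt (fun t : ℝ => 1 + t ^ 2) (2 * r) r := by
      simpa using ((hasDerivAt_id r).pow 2).const_add 1
    have h2 : HasDerivAt (fun t : ℝ => 1 + s ^ 2 * t ^ 2) (s ^ 2 * (2 * r)) r := by
      simpa using (((hasDerivAt_id r).pow 2).const_mul (s ^ 2)).const_add 1
    have h3 : HasDerivAt (fun t : ℝ => (1 + s ^ 2 * t ^ 2) / (1 + t ^ 2))
        ((s ^ 2 * (2 * r) * (1 + r ^ 2) - (1 + s ^ 2 * r ^ 2) * (2 * r)) / (1 + r ^ 2) ^ 2) r :=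
      h2.div h1 (by positivity)
    convert! (h3.log (by positivity)).const_mul (1 / 2) using 1
    field_simp
  have hlim : Tendsto (fun r : ℝ => 1 / 2 * log ((1 + s ^ 2 * r ^ 2) / (1 + r ^ 2))) atTop
      (nhds (1 / 2 * log (s ^ 2))) := by
    have h1 : Tendsto (fun r : ℝ => 1 + r ^ 2) atTop atTop :=
      tendsto_atTop_add_const_left _ _ (tendsto_pow_atTop two_ne_zero)
    have h2 : Tendsto (fun r : ℝ => s ^ 2 + (1 - s ^ 2) * (1 + r ^ 2)⁻¹) atTop
        (nhds (s ^ 2)) := by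
      simpa using (h1.inv_tendsto_atTop.const_mul (1 - s ^ 2)).const_add (s ^ 2)
    refine ((h2.congr fun r => ?_).log (by positivity)).const_mul _
    field_simp
    ring
  have hval : ∫ r in Set.Ioi (0 : ℝ), r * (s ^ 2 * (1 + s ^ 2 * r ^ 2)⁻¹ - (1 + r ^ 2)⁻¹) =
      1 / 2 * log (s ^ 2) - 1 / 2 * log ((1 + s ^ 2 * 0 ^ 2) / (1 + 0 ^ 2)) := by
    rcases le_total 1 s with h | h
    · refine integral_Ioi_of_hasDerivAt_of_nonneg' hderiv (fun r hr => ?_) hlim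
      have hr' := Set.mem_Ioi.1 hr
      have : 0 ≤ s ^ 2 - 1 := by nlinarith
      rw [dilate_sub_eq hs]
      positivity
    · refine integral_Ioi_of_hasDerivAt_of_nonpos' hderiv (fun r hr => ?_) hlim
      have hr' := Set.mem_Ioi.1 hr
      have : s ^ 2 - 1 ≤ 0 := by nlinarith
      rw [dilate_sub_eq hs]
      exact mul_nonpos_of_nonneg_of_nonpos hr'.le
        (mul_nonpos_of_nonpos_of_nonneg this (by positivity))
  rw [hval]
  norm_num
  ring

lemma integrable_dilate_sub {s : ℝ} (hs : 0 < s) :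
    Integrable fun x : E2 => s ^ 2 * (1 + s ^ 2 * ‖x‖ ^ 2)⁻¹ - (1 + ‖x‖ ^ 2)⁻¹ := by
  have hcont : Continuous fun x : E2 => s ^ 2 * (1 + s ^ 2 * ‖x‖ ^ 2)⁻¹ - (1 + ‖x‖ ^ 2)⁻¹ := by
    refine Continuous.sub (continuous_const.mul (Continuous.inv₀ (by fun_prop) fun x => ?_))
      (Continuous.inv₀ (by fun_prop) fun x => ?_) <;> positivity
  refine (integrable_stereo.const_mul (|s ^ 2 - 1| * (1 + (s ^ 2)⁻¹))).mono'
    hcont.aestronglyMeasurable (Eventually.of_forall fun x => ?_)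
  rw [dilate_sub_eq hs, norm_mul, norm_eq_abs, norm_of_nonneg (by positivity), mul_assoc, sq (1 + ‖x‖ ^ 2)⁻¹,
    ← mul_assoc (1 + (s ^ 2)⁻¹)]
  gcongr
  rw [← div_eq_mul_inv, inv_le_comm₀ (by positivity) (by positivity), inv_div,
    div_le_iff₀ (by positivity)]
  have : (1 + s ^ 2 * ‖x‖ ^ 2) * (1 + (s ^ 2)⁻¹) =
      1 + ‖x‖ ^ 2 + ((s ^ 2)⁻¹ + s ^ 2 * ‖x‖ ^ 2) := by
    field_simp
    ring
  rw [this]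
  have : 0 ≤ (s ^ 2)⁻¹ + s ^ 2 * ‖x‖ ^ 2 := by positivity
  linarith

lemma exp_neg_Vpot (x : E2) : exp (-Vpot x) = π⁻¹ * (1 + ‖x‖ ^ 2)⁻¹ ^ 2 := by
  have h : (0 : ℝ) < 1 + ‖x‖ ^ 2 := by positivity
  rw [Vpot, neg_add, exp_add, exp_neg (log π), exp_log pi_pos, mul_comm, inv_pow, exp_neg,
    ← log_rpow h, exp_log (by positivity)]
  norm_cast

lemma hasDerivAt_plane_left {g : E2 → ℝ} (hg : Differentiable ℝ g) (x y : ℝ) :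
    HasDerivAt (fun t => g !₂[t, y])
      (fderiv ℝ g !₂[x, y] (EuclideanSpace.single 0 1)) x := by
  have h : HasDerivAt (fun t : ℝ => (!₂[t, y] : E2)) (EuclideanSpace.single 0 1) x := by
    simp only [plane_eq]
    simpa using ((hasDerivAt_id x).smul_const (EuclideanSpace.single 0 (1 : ℝ))).add_const
      (y • EuclideanSpace.single (1 : Fin 2) (1 : ℝ))
  exact (hg _).hasFDerivAt.comp_hasDerivAt x h

lemma hasDerivAt_plane_right {g : E2 → ℝ} (hg : Differentiable ℝ g) (x y : ℝ) :
    HasDerivAt (fun t => g !₂[x, t])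
      (fderiv ℝ g !₂[x, y] (EuclideanSpace.single 1 1)) y := by
  have h : HasDerivAt (fun t : ℝ => (!₂[x, t] : E2)) (EuclideanSpace.single 1 1) y := by
    simp only [plane_eq]
    simpa using ((hasDerivAt_id y).smul_const (EuclideanSpace.single 1 (1 : ℝ))).const_add
      (x • EuclideanSpace.single (0 : Fin 2) (1 : ℝ))
  exact (hg _).hasFDerivAt.comp_hasDerivAt y h

lemma stereoWeight_plane (x y : ℝ) : (1 + ‖(!₂[x, y] : E2)‖ ^ 2)⁻¹ = stereoWeight x y := by
  rw [norm_sq_plane, stereoWeight, add_assoc]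

lemma tendsto_squareIntegral_stereoWeight_sq :
    Tendsto (fun R => squareIntegral R fun x y => stereoWeight x y ^ 2) atTop (nhds π) := by
  have h := tendsto_squareIntegral_plane integrable_stereo
  simpa only [integral_stereo, stereoWeight_plane] using h

lemma tendsto_squareIntegral_dilate_sub {s : ℝ} (hs : 0 < s) :
    Tendsto (fun R => squareIntegral (s * R) stereoWeight - squareIntegral R stereoWeight) atTop
      (nhds (π * log (s ^ 2))) := by
  have h := tendsto_squareIntegral_plane (integrable_dilate_sub hs)
  have hω : ∀ x y, (1 + s ^ 2 * ‖(!₂[x, y] : E2)‖ ^ 2)⁻¹ = stereoWeight (s * x) (s * y) :=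
    fun x y => by
      rw [norm_sq_plane, stereoWeight]
      ring
  simp only [integral_dilate_sub hs, stereoWeight_plane, hω] at h
  refine h.congr fun R => ?_
  rw [squareIntegral_dilate, sub_eq_add_neg (squareIntegral R _), ← neg_one_mul,
    ← squareIntegral_const_mul R (-1), ← squareIntegral_add R]
  · simp only [neg_one_mul, sub_eq_add_neg]
  all_goals unfold Function.uncurry; fun_prop

lemma eventually_square_onofri {g : E2 → ℝ} (hg : ContDiff ℝ (⊤ : ℕ∞) g)
    (hsupp : HasCompactSupport g) {s : ℝ} (hs : 0 < s) :
    ∀ᶠ R in atTop,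
      (squareIntegral (s * R) stereoWeight - squareIntegral R stereoWeight) / 2 ≤
        s * (squareIntegral R fun x y => stereoWeight x y ^ 2) *
          √((squareIntegral (s * R) fun x y => stereoWeight x y ^ 2) /
            squareIntegral R fun x y => exp (g !₂[x, y]) * stereoWeight x y ^ 2) +
        (squareIntegral R fun x y => ‖fderiv ℝ g !₂[x, y]‖ ^ 2) / 32 +
        (squareIntegral R fun x y => g !₂[x, y] * stereoWeight x y ^ 2) / 2 -
        (squareIntegral R fun x y => stereoWeight x y ^ 2) / 2 -
        (squareIntegral (s * R) fun x y => stereoWeight x y ^ 2) / 2 := by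
  have hgc : Continuous g := hg.continuous
  have hgd : Differentiable ℝ g := hg.differentiable (by simp)
  have hgf : Continuous (fderiv ℝ g) := hg.continuous_fderiv (by simp)
  obtain ⟨r, hr⟩ := hsupp.isCompact.isBounded.subset_closedBall (0 : E2)
  have hvanish : ∀ x : E2, r < ‖x‖ → g x = 0 := fun x hx => by
    by_contra hne
    have := hr (subset_tsupport g hne)
    rw [mem_closedBall_zero_iff] at this
    linarith
  have hbound1 : ∀ x y : ℝ, |x| ≤ ‖(!₂[x, y] : E2)‖ := fun x y =>
    abs_le_of_sq_le_sq (by rw [norm_sq_plane]; linarith [sq_nonneg y]) (norm_nonneg _)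
  have hbound2 : ∀ x y : ℝ, |y| ≤ ‖(!₂[x, y] : E2)‖ := fun x y =>
    abs_le_of_sq_le_sq (by rw [norm_sq_plane]; linarith [sq_nonneg x]) (norm_nonneg _)
  filter_upwards [eventually_gt_atTop 0, eventually_gt_atTop r] with R hR hRr
  have habs : r < |R| := hRr.trans_le (le_abs_self R)
  have habs' : r < |(-R)| := by rwa [abs_neg]
  have h := square_onofri hR (mul_pos hs hR) (G := fun x y => g !₂[x, y])
    (Gx := fun x y => fderiv ℝ g !₂[x, y] (EuclideanSpace.single 0 1))
    (Gy := fun x y => fderiv ℝ g !₂[x, y] (EuclideanSpace.single 1 1))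
    (hgc.comp continuous_plane)
    ((hgf.comp continuous_plane).clm_apply continuous_const)
    ((hgf.comp continuous_plane).clm_apply continuous_const)
    (hasDerivAt_plane_left hgd) (hasDerivAt_plane_right hgd)
    (fun y => hvanish _ (habs.trans_le (hbound1 _ _)))
    (fun y => hvanish _ (habs'.trans_le (hbound1 _ _)))
    (fun x => hvanish _ (habs.trans_le (hbound2 _ _)))
    (fun x => hvanish _ (habs'.trans_le (hbound2 _ _)))
  rw [mul_div_cancel_right₀ s hR.ne'] at h
  simp only [norm_sq_dual]
  exact h

/-- The Euclidean Onofri inequality. -/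
lemma euclidean_onofri {g : E2 → ℝ} (hg : ContDiff ℝ (⊤ : ℕ∞) g) (hsupp : HasCompactSupport g) :
    log (∫ x, exp (g x - Vpot x)) ≤
      1 / (16 * π) * (∫ x, ‖fderiv ℝ g x‖ ^ 2) + ∫ x, g x * exp (-Vpot x) := by
  have hpi := pi_pos
  have hgc : Continuous g := hg.continuous
  have hgf : Continuous (fderiv ℝ g) := hg.continuous_fderiv (by simp)
  have hωc : Continuous fun x : E2 => (1 + ‖x‖ ^ 2)⁻¹ ^ 2 :=
    (Continuous.inv₀ (by fun_prop) fun x => by positivity).pow 2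
  obtain ⟨C, hC⟩ := hsupp.exists_bound_of_continuous hgc
  have iZ : Integrable fun x : E2 => exp (g x) * (1 + ‖x‖ ^ 2)⁻¹ ^ 2 := by
    refine integrable_stereo.bdd_mul (c := exp C) (by fun_prop)
      (Eventually.of_forall fun x => ?_)
    rw [norm_of_nonneg (exp_pos _).le]
    exact exp_le_exp.2 ((le_abs_self _).trans (hC x))
  have iΓ : Integrable fun x : E2 => g x * (1 + ‖x‖ ^ 2)⁻¹ ^ 2 :=
    (hgc.mul hωc).integrable_of_hasCompactSupport hsupp.mul_right
  have iD : Integrable fun x : E2 => ‖fderiv ℝ g x‖ ^ 2 :=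
    Continuous.integrable_of_hasCompactSupport (by fun_prop)
      ((hsupp.fderiv ℝ).comp_left (g := fun L => ‖L‖ ^ 2) (by simp))
  have eZ : ∫ x, exp (g x - Vpot x) = π⁻¹ * ∫ x : E2, exp (g x) * (1 + ‖x‖ ^ 2)⁻¹ ^ 2 := by
    rw [← integral_const_mul]
    congr 1
    funext x
    rw [sub_eq_add_neg, exp_add, exp_neg_Vpot]
    ring
  have eΓ : ∫ x, g x * exp (-Vpot x) = π⁻¹ * ∫ x : E2, g x * (1 + ‖x‖ ^ 2)⁻¹ ^ 2 := by
    rw [← integral_const_mul]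
    congr 1
    funext x
    rw [exp_neg_Vpot]
    ring
  have hZ0 : 0 < ∫ x : E2, exp (g x) * (1 + ‖x‖ ^ 2)⁻¹ ^ 2 := by
    refine integral_pos_of_integrable_nonneg_nonzero (x := 0) (by fun_prop) iZ
      (fun x => by positivity) (by positivity)
  have tZ := tendsto_squareIntegral_plane iZ
  have tΓ := tendsto_squareIntegral_plane iΓ
  have tD := tendsto_squareIntegral_plane iD
  simp only [stereoWeight_plane] at tZ tΓ
  rw [eZ, eΓ]
  generalize (∫ x : E2, exp (g x) * (1 + ‖x‖ ^ 2)⁻¹ ^ 2) = Z at *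
  generalize (∫ x : E2, g x * (1 + ‖x‖ ^ 2)⁻¹ ^ 2) = Γ at *
  generalize (∫ x, ‖fderiv ℝ g x‖ ^ 2) = D at *
  have hq : 0 < π⁻¹ * Z := by positivity
  obtain ⟨s, hs⟩ : ∃ s, s = √(π⁻¹ * Z) := ⟨_, rfl⟩
  have hs0 : 0 < s := hs ▸ sqrt_pos.2 hq
  have hs2 : s ^ 2 = π⁻¹ * Z := hs ▸ sq_sqrt hq.le
  have tm := tendsto_squareIntegral_stereoWeight_sq
  have tmS : Tendsto (fun R => squareIntegral (s * R) fun x y => stereoWeight x y ^ 2) atTop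
      (nhds π) := tm.comp (tendsto_id.const_mul_atTop hs0)
  have hlim := le_of_tendsto_of_tendsto ((tendsto_squareIntegral_dilate_sub hs0).div_const 2)
    (((((tm.const_mul s).mul ((tmS.div tZ hZ0.ne').sqrt)).add (tD.div_const 32)).add
      (tΓ.div_const 2)).sub (tm.div_const 2) |>.sub (tmS.div_const 2))
    (eventually_square_onofri hg hsupp hs0)
  have hsqrt : √(π / Z) = s⁻¹ := by
    rw [hs, ← sqrt_inv, mul_inv, inv_inv, div_eq_mul_inv]
  rw [hsqrt, hs2] at hlim
  have h1 : s * π * s⁻¹ = π := by field_simp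
  rw [h1] at hlim
  have h2 : π * log (π⁻¹ * Z) ≤ π * (1 / (16 * π) * D + π⁻¹ * Γ) := by
    have : π * (1 / (16 * π) * D + π⁻¹ * Γ) = D / 16 + Γ := by field_simp
    rw [this]
    linarith
  exact le_of_mul_le_mul_left h2 hpi

/-- Onofri-type dual inequality for α ∈ [0,1). -/
theorem onofri_type_inequality (α : ℝ) (hα0 : 0 ≤ α) (hα1 : α < 1)
    (g : E2 → ℝ) (hg : ContDiff ℝ (⊤ : ℕ∞) g) (hsupp : HasCompactSupport g) :
    Real.log (∫ x, Real.exp (g x - Vpot x))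
      ≤ (1 / (16 * π * (1 - α))) * (∫ x, ‖fderiv ℝ g x‖ ^ 2)
          + ∫ x, g x * Real.exp (-Vpot x) := by
  have hpi := pi_pos
  have hα : 0 < 1 - α := by linarith
  have hD0 : 0 ≤ ∫ x, ‖fderiv ℝ g x‖ ^ 2 := integral_nonneg fun x => sq_nonneg _
  have hcoef : 1 / (16 * π) * (∫ x, ‖fderiv ℝ g x‖ ^ 2) ≤
      1 / (16 * π * (1 - α)) * ∫ x, ‖fderiv ℝ g x‖ ^ 2 := by
    refine mul_le_mul_of_nonneg_right (one_div_le_one_div_of_le (by positivity) ?_) hD0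
    nlinarith
  exact (euclidean_onofri hg hsupp).trans (by linarith)
end
end
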